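/- arXiv:1001.2026 — 4 statements merged into one kernel-verified Lean document; each statement's English description precedes it below -/
import Mathlib

section
/- Let X be a complex separable infinite-dimensional Banach space and let T be a bounded linear operator on X. If the eigenvectors of T associated to eigenvalues of modulus 1 are perfectly spanning, then T is frequently hypercyclic. -/
open MeasureTheory Filter Topology

open scoped Classical in
/-- Lower density of a set of natural numbers. -/
noncomputable def lowerDensity (A : Set ℕ) : ℝ :=
  Filter.atTop.liminf fun N : ℕ =>
    (((Finset.range N).filter (fun n => n ∈ A)).card : ℝ) / (N : ℝ)

/-- `x` is a frequently hypercyclic vector for `T`. -/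
def FreqHCVector {X : Type*} [NormedAddCommGroup X] [NormedSpace ℂ X]
    (T : X →L[ℂ] X) (x : X) : Prop :=
  ∀ U : Set X, IsOpen U → U.Nonempty → 0 < lowerDensity {n : ℕ | (T ^ n) x ∈ U}

/-- `T` is frequently hypercyclic. -/
def FrequentlyHypercyclic {X : Type*} [NormedAddCommGroup X] [NormedSpace ℂ X]
    (T : X →L[ℂ] X) : Prop :=
  ∃ x : X, FreqHCVector T x

/-- `T` is hypercyclic. -/
def Hypercyclic {X : Type*} [NormedAddCommGroup X] [NormedSpace ℂ X]
    (T : X →L[ℂ] X) : Prop :=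
  ∃ x : X, Dense (Set.range fun n : ℕ => (T ^ n) x)

/-- `T` has a perfectly spanning set of eigenvectors associated to unimodular
eigenvalues: there is a continuous (atomless) probability measure `σ` on the unit
circle such that whenever `A` is a measurable subset of the circle with `σ A = 1`,
the span of the eigenspaces `ker (T - c)`, `c ∈ A`, is dense in `X`. -/
def PerfectlySpanning {X : Type*} [NormedAddCommGroup X] [NormedSpace ℂ X]
    (T : X →L[ℂ] X) : Prop :=
  ∃ σ : Measure ℂ, IsProbabilityMeasure σ ∧ (∀ c : ℂ, σ {c} = 0) ∧
    σ {c : ℂ | ‖c‖ = 1} = 1 ∧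
    ∀ A : Set ℂ, A ⊆ {c : ℂ | ‖c‖ = 1} → MeasurableSet A → σ A = 1 →
      Dense (Submodule.span ℂ (⋃ c ∈ A, {x : X | T x = c • x}) : Set X)


section FHC

variable {X : Type*} [NormedAddCommGroup X] [NormedSpace ℂ X]

/-- span of unimodular eigenvectors -/
def FHC.Esp (T : X →L[ℂ] X) : Submodule ℂ X :=
  Submodule.span ℂ {x : X | ∃ c : ℂ, ‖c‖ = 1 ∧ T x = c • x}

/-- eigenvectors which are limits of eigenvectors with infinitely many eigenvalues -/
def FHC.Good (T : X →L[ℂ] X) : Set X :=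
  {w | (∃ c : ℂ, ‖c‖ = 1 ∧ T w = c • w) ∧
    ∀ δ : ℝ, 0 < δ → {c : ℂ | ‖c‖ = 1 ∧ ∃ x, T x = c • x ∧ ‖x - w‖ < δ}.Infinite}

/-- all orbit averages are at most `e` -/
def FHC.Small (T : X →L[ℂ] X) (y : X) (e : ℝ) : Prop :=
  ∀ N : ℕ, ∑ n ∈ Finset.range N, ‖(T ^ n) y‖ ≤ N * e

namespace FHC

lemma pow_eig {T : X →L[ℂ] X} {x : X} {c : ℂ} (h : T x = c • x) (n : ℕ) :
    (T ^ n) x = c ^ n • x := by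
  induction n with
  | zero => simp
  | succ k ih =>
    rw [pow_succ, mul_apply_eq_comp, h, map_smul, ih, smul_smul, pow_succ, mul_comm]

lemma Small.add {T : X →L[ℂ] X} {y z : X} {a b : ℝ} (hy : Small T y a) (hz : Small T z b) :
    Small T (y + z) (a + b) := by
  intro N
  calc ∑ n ∈ Finset.range N, ‖(T ^ n) (y + z)‖
      ≤ ∑ n ∈ Finset.range N, (‖(T ^ n) y‖ + ‖(T ^ n) z‖) := by
        apply Finset.sum_le_sum; intro n _; rw [map_add]; exact norm_add_le _ _
    _ = _ := Finset.sum_add_distrib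
    _ ≤ N * a + N * b := add_le_add (hy N) (hz N)
    _ = _ := by ring

lemma dense_good [TopologicalSpace.SeparableSpace X] (T : X →L[ℂ] X) (hT : PerfectlySpanning T) :
    Dense (Submodule.span ℂ (Good T) : Set X) := by
  obtain ⟨σ, hσ, hat, h1, hA⟩ := hT
  have : SecondCountableTopology X := UniformSpace.secondCountable_of_separable X
  let B : Set X := {w | ∃ δ : ℝ, 0 < δ ∧
    {c : ℂ | ‖c‖ = 1 ∧ ∃ x, T x = c • x ∧ ‖x - w‖ < δ}.Countable}
  have hB : ∀ w : X, ∃ δ : ℝ, w ∈ B → 0 < δ ∧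
    {c : ℂ | ‖c‖ = 1 ∧ ∃ x, T x = c • x ∧ ‖x - w‖ < δ}.Countable := by
    intro w
    by_cases hw : w ∈ B
    · obtain ⟨δ, h⟩ := hw; exact ⟨δ, fun _ => h⟩
    · exact ⟨0, fun h => absurd h hw⟩
  choose δ hδ using hB
  obtain ⟨t, htB, htc, ht⟩ := TopologicalSpace.countable_cover_nhdsWithin (s := B)
    (f := fun w => Metric.ball w (δ w)) (fun w hw =>
      mem_nhdsWithin_of_mem_nhds (Metric.ball_mem_nhds w (hδ w hw).1))
  let C : Set ℂ := ⋃ w ∈ t, {c : ℂ | ‖c‖ = 1 ∧ ∃ x, T x = c • x ∧ ‖x - w‖ < δ w}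
  have hC : C.Countable := htc.biUnion (fun w hw => (hδ w (htB hw)).2)
  have hC0 : σ C = 0 := by
    rw [← Set.biUnion_of_singleton C]
    exact (measure_biUnion_null_iff hC).2 fun c _ => hat c
  have hm : MeasurableSet {c : ℂ | ‖c‖ = 1} :=
    (isClosed_eq continuous_norm continuous_const).measurableSet
  have := hA ({c : ℂ | ‖c‖ = 1} \ C) Set.sdiff_subset (hm.diff hC.measurableSet)
    (by rw [measure_sdiff_null hC0, h1])
  refine this.mono ?_
  apply Submodule.span_mono
  intro x hx
  simp only [Set.mem_iUnion] at hx
  obtain ⟨c, ⟨hc1, hcC⟩, hx⟩ := hx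
  refine ⟨⟨c, hc1, hx⟩, ?_⟩
  intro d hd hfin
  have hxB : x ∈ B := ⟨d, hd, hfin.countable⟩
  have := ht hxB
  simp only [Set.mem_iUnion] at this
  obtain ⟨w, hw, hxw⟩ := this
  apply hcC
  simp only [C, Set.mem_iUnion]
  refine ⟨w, hw, hc1, x, hx, ?_⟩
  rwa [Metric.mem_ball, dist_eq_norm] at hxw

lemma almost_periodic (T : X →L[ℂ] X) {z : X} (hz : z ∈ Esp T) {ε : ℝ} (hε : 0 < ε) :
    ∃ q : ℕ, 0 < q ∧ ∀ R : ℕ, R ≤ q * ((Finset.range R).filter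
      (fun n => ‖(T ^ n) z - z‖ < ε)).card := by
  obtain ⟨k, f, g, hz⟩ := Submodule.mem_span_set'.1 hz
  choose c hc1 hc using fun i => (g i).2
  set M : ℝ := ∑ i, ‖f i‖ * ‖(g i : X)‖ with hM
  have hM0 : 0 ≤ M := Finset.sum_nonneg fun i _ => by positivity
  have key : ∀ n m : ℕ, m ≤ n → dist (fun i => c i ^ n) (fun i => c i ^ m) < ε / (M + 1) →
      ‖(T ^ (n - m)) z - z‖ < ε := by
    intro n m hmn h
    have h2 : ∀ i, ‖c i ^ (n - m) - 1‖ ≤ ε / (M + 1) := by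
      intro i
      have h3 := (dist_le_pi_dist (fun i => c i ^ n) (fun i => c i ^ m) i).trans h.le
      rw [dist_eq_norm] at h3
      have : c i ^ n - c i ^ m = (c i ^ (n - m) - 1) * c i ^ m := by
        rw [sub_mul, ← pow_add, Nat.sub_add_cancel hmn, one_mul]
      rwa [this, norm_mul, norm_pow, hc1, one_pow, mul_one] at h3
    have h4 : (T ^ (n - m)) z - z = ∑ i, (c i ^ (n - m) - 1) • (f i • (g i : X)) := by
      rw [← hz, map_sum, ← Finset.sum_sub_distrib]
      refine Finset.sum_congr rfl fun i _ => ?_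
      rw [map_smul, pow_eig (hc i), sub_smul, one_smul, smul_comm]
    rw [h4]
    calc _ ≤ ∑ i, ‖(c i ^ (n - m) - 1) • (f i • (g i : X))‖ := norm_sum_le _ _
      _ ≤ ∑ i, ε / (M + 1) * (‖f i‖ * ‖(g i : X)‖) := by
        refine Finset.sum_le_sum fun i _ => ?_
        rw [norm_smul, norm_smul]
        exact mul_le_mul_of_nonneg_right (h2 i) (by positivity)
      _ = ε / (M + 1) * M := by rw [← Finset.mul_sum]
      _ < ε := by
        rw [div_mul_eq_mul_div, div_lt_iff₀ (by positivity)]; nlinarith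
  have hr : 0 < ε / (M + 1) / 2 := by positivity
  obtain ⟨t, -, htf, ht⟩ := (isCompact_closedBall (0 : Fin k → ℂ) 1).finite_cover_balls hr
  have hmem : ∀ n : ℕ, ∃ u ∈ htf.toFinset, dist (fun i => c i ^ n) u < ε / (M + 1) / 2 := by
    intro n
    have : (fun i => c i ^ n) ∈ Metric.closedBall (0 : Fin k → ℂ) 1 := by
      rw [mem_closedBall_zero_iff, pi_norm_le_iff_of_nonneg zero_le_one]
      intro i; simp [hc1]
    have := ht this
    simp only [Set.mem_iUnion] at this
    obtain ⟨u, hu, h⟩ := this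
    exact ⟨u, by simpa using hu, h⟩
  choose φ hφ hφd using hmem
  have hq : 0 < htf.toFinset.card := Finset.card_pos.2 ⟨φ 0, hφ 0⟩
  refine ⟨htf.toFinset.card, hq, fun R => ?_⟩
  by_contra hcon
  push Not at hcon
  obtain ⟨u, hu, huc⟩ := Finset.exists_lt_card_fiber_of_mul_lt_card_of_maps_to
    (s := Finset.range R) (t := htf.toFinset) (f := φ) (fun n _ => hφ n)
    (by rw [Finset.card_range]; exact hcon)
  set F := (Finset.range R).filter (fun n => φ n = u) with hF
  have hne : F.Nonempty := Finset.card_pos.1 (by omega)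
  set m := F.min' hne
  have hmF : m ∈ F := F.min'_mem hne
  refine absurd huc (not_lt.2 ?_)
  refine Finset.card_le_card_of_injOn (fun n => n - m) ?_ ?_
  · intro n hn
    have hmn : m ≤ n := F.min'_le n hn
    rw [Finset.mem_coe, hF, Finset.mem_filter, Finset.mem_range] at hn
    have hmF' := hmF
    rw [hF, Finset.mem_filter] at hmF'
    rw [Finset.mem_coe, Finset.mem_filter, Finset.mem_range]
    refine ⟨by simp only; omega, key n m hmn ?_⟩
    have e1 := hφd n
    have e2 := hφd m
    rw [hn.2] at e1
    rw [hmF'.2, dist_comm] at e2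
    calc _ ≤ _ := dist_triangle _ u _
      _ < ε / (M + 1) / 2 + ε / (M + 1) / 2 := add_lt_add e1 e2
      _ = _ := by ring
  · intro a ha b hb hab
    have h1 : m ≤ a := F.min'_le a ha
    have h2 : m ≤ b := F.min'_le b hb
    simp only at hab
    omega

open scoped Classical in
lemma covering (f : ℕ → ℝ) (hf : ∀ n, 0 ≤ f n) (B : Set ℕ) (M : ℕ) {δ : ℝ} (hδ : 0 ≤ δ)
    (hB : ∀ p ∈ B, ∃ N, 1 ≤ N ∧ N ≤ M ∧ N * δ ≤ ∑ n ∈ Finset.range N, f (p + n)) (L : ℕ) :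
    ∀ p, δ * ((Finset.range L).filter (fun n => p + n ∈ B)).card
      ≤ ∑ n ∈ Finset.range (L + M), f (p + n) := by
  induction L using Nat.strong_induction_on with
  | _ L ih =>
  intro p
  have step : ∀ a b : ℕ, ∑ n ∈ Finset.range (a + b), f (p + n)
      = ∑ n ∈ Finset.range a, f (p + n) + ∑ n ∈ Finset.range b, f (p + a + n) := by
    intro a b
    rw [Finset.sum_range_add]
    simp only [add_assoc]
  have cstep : ∀ a b : ℕ, (((Finset.range (a + b)).filter (fun n => p + n ∈ B)).card : ℝ)
      = ((Finset.range a).filter (fun n => p + n ∈ B)).card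
        + ((Finset.range b).filter (fun n => p + a + n ∈ B)).card := by
    intro a b
    simp only [Finset.card_filter]
    push_cast
    rw [Finset.sum_range_add]
    simp only [add_assoc]
  rcases Nat.eq_zero_or_pos L with rfl | hL
  · simp only [Finset.range_zero, Finset.filter_empty, Finset.card_empty, Nat.cast_zero, mul_zero]
    exact Finset.sum_nonneg fun i _ => hf _
  by_cases hp : p ∈ B
  · obtain ⟨N, h1, h2, h3⟩ := hB p hp
    by_cases hNL : N < L
    · obtain ⟨K, rfl⟩ := Nat.exists_eq_add_of_lt hNL
      rw [add_assoc N K 1, cstep N (K + 1), add_assoc N (K + 1) M, step N (K + 1 + M), mul_add]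
      refine add_le_add (le_trans ?_ h3) (ih (K + 1) (by omega) (p + N))
      rw [mul_comm]
      refine mul_le_mul_of_nonneg_right ?_ hδ
      exact_mod_cast (Finset.card_filter_le _ _).trans (by simp)
    · have : L + M = N + (L + M - N) := by omega
      rw [this, step]
      have h5 : 0 ≤ ∑ n ∈ Finset.range (L + M - N), f (p + N + n) :=
        Finset.sum_nonneg fun i _ => hf _
      have h4 : (((Finset.range L).filter (fun n => p + n ∈ B)).card : ℝ) ≤ N := by
        exact_mod_cast (Finset.card_filter_le _ _).trans (by simp; omega)
      nlinarith
  · obtain ⟨K, rfl⟩ := Nat.exists_eq_add_of_lt hL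
    rw [show 0 + K + 1 = 1 + K by ring, cstep 1 K, add_assoc, step 1 (K + M), mul_add]
    refine add_le_add ?_ (ih K (by omega) (p + 1))
    simp only [Finset.range_one, Finset.filter_singleton, add_zero, hp, if_false,
      Finset.card_empty, Nat.cast_zero, mul_zero, Finset.sum_singleton]
    exact hf _

lemma mean_square {K : ℕ} (hK : 0 < K) (c : Fin K → ℂ) (hc : ∀ k, ‖c k‖ = 1)
    (hinj : Function.Injective c) :
    ∃ C : ℝ, 0 ≤ C ∧ ∀ d : Fin K → ℂ, (∀ k, ‖d k‖ = 1) → ∀ N : ℕ,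
      ∑ n ∈ Finset.range N, ‖(K : ℂ)⁻¹ * ∑ k, d k * c k ^ n‖ ^ 2 ≤ N / K + C := by
  let b : Fin K → Fin K → ℝ := fun k l => 2 / ‖c k * star (c l) - 1‖
  have hb : ∀ k l, 0 ≤ b k l := fun k l => by positivity
  have hS : 0 ≤ ∑ k, ∑ l, b k l :=
    Finset.sum_nonneg fun k _ => Finset.sum_nonneg fun l _ => hb k l
  have hKr : (0 : ℝ) < K := by exact_mod_cast hK
  refine ⟨(∑ k, ∑ l, b k l) / K ^ 2, by positivity, fun d hd N => ?_⟩
  have h1 : ∀ k l, ‖∑ n ∈ Finset.range N, (c k * star (c l)) ^ n‖ ≤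
      (if k = l then (N : ℝ) else 0) + b k l := by
    intro k l
    have hn : ‖c k * star (c l)‖ = 1 := by rw [norm_mul, norm_star, hc, hc, one_mul]
    by_cases hkl : k = l
    · rw [if_pos hkl]
      refine (norm_sum_le _ _).trans ?_
      simp only [norm_pow, hn, one_pow, Finset.sum_const, Finset.card_range, nsmul_eq_mul, mul_one]
      linarith [hb k l]
    · rw [if_neg hkl, zero_add]
      have hne : c k * star (c l) ≠ 1 := by
        intro h
        apply hkl
        apply hinj
        have h2 : star (c l) * c l = 1 := by
          have := Complex.conj_mul' (c l)
          rw [hc l] at this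
          simpa using this
        calc c k = c k * (star (c l) * c l) := by rw [h2, mul_one]
          _ = c l := by rw [← mul_assoc, h, one_mul]
      rw [geom_sum_eq hne, norm_div]
      refine div_le_div_of_nonneg_right ?_ (norm_nonneg _)
      refine (norm_sub_le _ _).trans ?_
      rw [norm_pow, hn]; norm_num
  have h2 : ((∑ n ∈ Finset.range N, ‖∑ k, d k * c k ^ n‖ ^ 2 : ℝ) : ℂ)
      = ∑ k, ∑ l, d k * star (d l) * ∑ n ∈ Finset.range N, (c k * star (c l)) ^ n := by
    push_cast
    simp only [Finset.mul_sum]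
    simp_rw [← Complex.mul_conj']
    rw [show (∑ k, ∑ l, ∑ n ∈ Finset.range N, d k * star (d l) * (c k * star (c l)) ^ n)
      = ∑ n ∈ Finset.range N, ∑ k, ∑ l, d k * star (d l) * (c k * star (c l)) ^ n by
        rw [Finset.sum_comm]
        rw [Finset.sum_comm]
        simp_rw [Finset.sum_comm (s := Finset.range N)]]
    refine Finset.sum_congr rfl fun n _ => ?_
    rw [map_sum, Finset.sum_mul_sum]
    refine Finset.sum_congr rfl fun k _ => Finset.sum_congr rfl fun l _ => ?_
    simp only [map_mul, map_pow, mul_pow, starRingEnd_apply]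
    ring
  have h3 : ∑ n ∈ Finset.range N, ‖∑ k, d k * c k ^ n‖ ^ 2 ≤ N * K + ∑ k, ∑ l, b k l := by
    have h0 : 0 ≤ ∑ n ∈ Finset.range N, ‖∑ k, d k * c k ^ n‖ ^ 2 :=
      Finset.sum_nonneg fun _ _ => by positivity
    calc _ = ‖((∑ n ∈ Finset.range N, ‖∑ k, d k * c k ^ n‖ ^ 2 : ℝ) : ℂ)‖ := by
          rw [Complex.norm_real, Real.norm_of_nonneg h0]
      _ ≤ ∑ k, ∑ l, ((if k = l then (N : ℝ) else 0) + b k l) := by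
          rw [h2]
          refine norm_sum_le_of_le _ fun k _ => norm_sum_le_of_le _ fun l _ => ?_
          rw [norm_mul, norm_mul, norm_star, hd, hd, one_mul, one_mul]
          exact h1 k l
      _ = _ := by
          simp [Finset.sum_add_distrib]; ring
  simp only [norm_mul, norm_inv, mul_pow, Complex.norm_natCast]
  rw [← Finset.mul_sum]
  calc _ ≤ ((K : ℝ)⁻¹) ^ 2 * (N * K + ∑ k, ∑ l, b k l) :=
        mul_le_mul_of_nonneg_left h3 (by positivity)
    _ = _ := by field_simp


open scoped Classical in
lemma exists_time (S : Set ℕ) {q : ℕ} (hq : 0 < q)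
    (hS : ∀ R : ℕ, R ≤ q * ((Finset.range R).filter (fun n => n ∈ S)).card)
    {ε : ℝ} (hε : 0 < ε) {K : ℕ} (hK0 : 0 < K) (hK : 2 * q / ε ^ 2 ≤ K)
    (c : Fin K → ℂ) (hc : ∀ k, ‖c k‖ = 1) (hinj : Function.Injective c) :
    ∃ m ∈ S, ∀ N : ℕ,
      ∑ n ∈ Finset.range N, ‖(K : ℂ)⁻¹ * ∑ k, (c k ^ m)⁻¹ * c k ^ n‖ ≤ N * ε := by
  by_contra hcon
  push Not at hcon
  obtain ⟨C, hC0, hC⟩ := mean_square hK0 c hc hinj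
  have hKr : (0 : ℝ) < K := by exact_mod_cast hK0
  have hqr : (1 : ℝ) ≤ q := by exact_mod_cast hq
  set δ := ε ^ 2 with hδ
  have hδ0 : 0 < δ := by positivity
  have hK1 : (K : ℝ)⁻¹ ≤ δ / (2 * q) := by
    rw [inv_le_comm₀ hKr (by positivity), inv_div]; exact hK
  have hK2 : (K : ℝ)⁻¹ ≤ δ / 2 := by
    refine hK1.trans ?_
    gcongr
    linarith
  set M : ℕ := ⌈2 * C / δ⌉₊ with hM
  have hMb : 2 * C / δ ≤ M := Nat.le_ceil _
  have main : ∀ R : ℕ, δ / (2 * q) * R ≤ M / K + C := by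
    intro R
    let f : ℕ → ℝ := fun m => ‖(K : ℂ)⁻¹ * ∑ k, (c k ^ (R - 1))⁻¹ * c k ^ m‖ ^ 2
    have hf : ∀ n, 0 ≤ f n := fun n => by positivity
    have hd : ∀ k, ‖(c k ^ (R - 1))⁻¹‖ = 1 := fun k => by simp [hc]
    have hcov := covering f hf {p | p < R ∧ R - 1 - p ∈ S} M hδ0.le (by
      rintro p ⟨hpR, hp⟩
      obtain ⟨N, hN⟩ := hcon _ hp
      have hNf : ∀ n, f (p + n) =
          ‖(K : ℂ)⁻¹ * ∑ k, (c k ^ (R - 1 - p))⁻¹ * c k ^ n‖ ^ 2 := by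
        intro n
        simp only [f]
        congr 4
        ext k
        have hck : c k ≠ 0 := by
          intro h; have := hc k; rw [h, norm_zero] at this; exact zero_ne_one this
        have : R - 1 = (R - 1 - p) + p := by omega
        rw [this, pow_add, pow_add]
        simp only [Nat.add_sub_cancel]
        field_simp
      have hlow : N * δ < ∑ n ∈ Finset.range N, f (p + n) := by
        simp_rw [hNf]
        have : ∀ a : ℝ, 2 * ε * a - δ ≤ a ^ 2 := fun a => by
          rw [hδ]; nlinarith [sq_nonneg (a - ε)]
        have h6 := Finset.sum_le_sum (s := Finset.range N) fun n _ =>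
          this ‖(K : ℂ)⁻¹ * ∑ k, (c k ^ (R - 1 - p))⁻¹ * c k ^ n‖
        refine lt_of_lt_of_le ?_ h6
        rw [Finset.sum_sub_distrib, ← Finset.mul_sum]
        simp only [Finset.sum_const, Finset.card_range, nsmul_eq_mul]
        rw [hδ]
        nlinarith
      have hup : ∑ n ∈ Finset.range N, f (p + n) ≤ N / K + C := by
        simp_rw [hNf]
        exact hC (fun k => (c k ^ (R - 1 - p))⁻¹) (fun k => by simp [hc]) N
      refine ⟨N, ?_, ?_, hlow.le⟩
      · rcases Nat.eq_zero_or_pos N with rfl | h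
        · simp at hN
        · exact h
      · have h7 : (N : ℝ) * δ < N / K + C := hlow.trans_le hup
        have h8 : (N : ℝ) / K ≤ N * (δ / 2) := by
          rw [div_eq_mul_inv]; gcongr
        have h9 : (N : ℝ) ≤ 2 * C / δ := by
          rw [le_div_iff₀ hδ0]; linarith
        exact_mod_cast h9.trans hMb) R 0
    have hcard : ((Finset.range R).filter (fun n => n ∈ S)).card ≤
        ((Finset.range R).filter (fun n => 0 + n ∈ {p | p < R ∧ R - 1 - p ∈ S})).card := by
      refine Finset.card_le_card_of_injOn (fun n => R - 1 - n) ?_ ?_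
      · intro n hn
        simp only [Finset.coe_filter, Finset.mem_range, Set.mem_ofPred_eq] at hn ⊢
        refine ⟨by omega, by omega, ?_⟩
        have : R - 1 - (0 + (R - 1 - n)) = n := by omega
        rw [this]; exact hn.2
      · intro a ha b hb hab
        simp only [Finset.coe_filter, Finset.mem_range, Set.mem_ofPred_eq] at ha hb hab
        omega
    have hup : ∑ n ∈ Finset.range (R + M), f (0 + n) ≤ (R + M : ℕ) / K + C := by
      simp only [zero_add]
      exact hC _ hd _
    have hRS : (R : ℝ) ≤ q * ((Finset.range R).filter
        (fun n => 0 + n ∈ {p | p < R ∧ R - 1 - p ∈ S})).card := by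
      exact_mod_cast (hS R).trans (Nat.mul_le_mul_left q hcard)
    have h10 : δ / q * R ≤ (R + M : ℕ) / K + C := by
      refine le_trans ?_ (hcov.trans hup)
      calc δ / q * R ≤ δ / q * (q * ((Finset.range R).filter
        (fun n => 0 + n ∈ {p | p < R ∧ R - 1 - p ∈ S})).card) := by gcongr
        _ = _ := by
          field_simp
          congr!
    push_cast at h10
    have h11 : (R : ℝ) * (K : ℝ)⁻¹ ≤ R * (δ / (2 * q)) := by gcongr
    have h12 : δ / q = 2 * (δ / (2 * q)) := by field_simp
    rw [add_div, div_eq_mul_inv (R : ℝ), h12] at h10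
    linarith
  obtain ⟨R, hR⟩ := exists_nat_gt ((M / K + C) / (δ / (2 * q)))
  rw [div_lt_iff₀ (by positivity)] at hR
  linarith [main R]

lemma single (T : X →L[ℂ] X) {z w : X} (hz : z ∈ Esp T) (hw : w ∈ Good T) {ε : ℝ} (hε : 0 < ε) :
    ∃ y ∈ Esp T, Small T y ε ∧ ∃ n : ℕ, ‖(T ^ n) (z + y) - (z + w)‖ < ε := by
  classical
  obtain ⟨q, hq, hS⟩ := almost_periodic T hz (half_pos hε)
  set ε₁ := ε / 2 / (‖w‖ + 1) with hε₁
  have hε₁0 : 0 < ε₁ := by positivity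
  have hε₁w : ε₁ * ‖w‖ ≤ ε / 2 := by
    rw [hε₁, div_mul_eq_mul_div, div_le_iff₀ (by positivity)]
    nlinarith [norm_nonneg w]
  obtain ⟨K₀, hK₀⟩ := exists_nat_ge (2 * q / ε₁ ^ 2)
  set K := K₀ + 1 with hKdef
  have hKr : (0 : ℝ) < K := by positivity
  obtain ⟨F, hFsub, hFc⟩ := (hw.2 (ε / 2) (half_pos hε)).exists_subset_card_eq K
  let e := F.equivFinOfCardEq hFc
  let c : Fin K → ℂ := fun k => (e.symm k : ℂ)
  have hinj : Function.Injective c := Subtype.val_injective.comp e.symm.injective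
  have hcF : ∀ k, ‖c k‖ = 1 ∧ ∃ x, T x = c k • x ∧ ‖x - w‖ < ε / 2 := fun k =>
    hFsub (e.symm k).2
  choose hc x hx hxw using hcF
  obtain ⟨m, hm, hmN⟩ := exists_time {n | ‖(T ^ n) z - z‖ < ε / 2} hq hS hε₁0
    (K := K) (by omega) (hK₀.trans (by rw [hKdef]; push_cast; linarith)) c hc hinj
  have hc0 : ∀ k, c k ≠ 0 := by
    intro k h; have := hc k; rw [h, norm_zero] at this; exact zero_ne_one this
  set y : X := (K : ℂ)⁻¹ • ∑ k, (c k ^ m)⁻¹ • x k with hy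
  have hTy : ∀ n, (T ^ n) y = ((K : ℂ)⁻¹ * ∑ k, (c k ^ m)⁻¹ * c k ^ n) • w
      + (K : ℂ)⁻¹ • ∑ k, ((c k ^ m)⁻¹ * c k ^ n) • (x k - w) := by
    intro n
    rw [hy, map_smul, map_sum, mul_smul, ← smul_add, Finset.sum_smul, ← Finset.sum_add_distrib]
    congr 1
    refine Finset.sum_congr rfl fun k _ => ?_
    rw [map_smul, pow_eig (hx k), smul_smul, ← smul_add, add_sub_cancel]
  have herr : ∀ n, ‖(K : ℂ)⁻¹ • ∑ k, ((c k ^ m)⁻¹ * c k ^ n) • (x k - w)‖ < ε / 2 := by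
    intro n
    rw [norm_smul, norm_inv, Complex.norm_natCast, inv_mul_lt_iff₀ hKr]
    refine (norm_sum_le _ _).trans_lt ?_
    calc _ < ∑ k : Fin K, ε / 2 := by
          refine Finset.sum_lt_sum_of_nonempty ⟨⟨0, by omega⟩, Finset.mem_univ _⟩ fun k _ => ?_
          rw [norm_smul]; simpa [hc] using hxw k
      _ = _ := by simp
  refine ⟨y, ?_, ?_, m, ?_⟩
  · refine Submodule.smul_mem _ _ (Submodule.sum_mem _ fun k _ => Submodule.smul_mem _ _ ?_)
    exact Submodule.subset_span ⟨c k, hc k, hx k⟩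
  · intro N
    calc ∑ n ∈ Finset.range N, ‖(T ^ n) y‖
        ≤ ∑ n ∈ Finset.range N,
          (‖(K : ℂ)⁻¹ * ∑ k, (c k ^ m)⁻¹ * c k ^ n‖ * ‖w‖ + ε / 2) := by
          refine Finset.sum_le_sum fun n _ => ?_
          rw [hTy]
          refine (norm_add_le _ _).trans ?_
          rw [norm_smul]
          exact add_le_add le_rfl (herr n).le
      _ = (∑ n ∈ Finset.range N, ‖(K : ℂ)⁻¹ * ∑ k, (c k ^ m)⁻¹ * c k ^ n‖) * ‖w‖
          + N * (ε / 2) := by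
          rw [Finset.sum_add_distrib, ← Finset.sum_mul]; simp
      _ ≤ (N * ε₁) * ‖w‖ + N * (ε / 2) := by gcongr; exact hmN N
      _ ≤ N * ε := by
          have : (0 : ℝ) ≤ N := Nat.cast_nonneg N
          nlinarith
  · have h1 : (K : ℂ)⁻¹ * ∑ k, (c k ^ m)⁻¹ * c k ^ m = 1 := by
      have : ∀ k, (c k ^ m)⁻¹ * c k ^ m = 1 := fun k => inv_mul_cancel₀ (pow_ne_zero _ (hc0 k))
      simp only [this]
      have : (K : ℂ) ≠ 0 := by exact_mod_cast hKr.ne'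
      simp [this]
    have h2 := hTy m
    rw [h1, one_smul] at h2
    rw [map_add, h2]
    have hm' : ‖(T ^ m) z - z‖ < ε / 2 := hm
    have h3 := herr m
    set u := (K : ℂ)⁻¹ • ∑ k, ((c k ^ m)⁻¹ * c k ^ m) • (x k - w)
    calc _ = ‖((T ^ m) z - z) + u‖ := by congr 1; abel
      _ ≤ _ := norm_add_le _ _
      _ < ε / 2 + ε / 2 := add_lt_add hm' h3
      _ = ε := by ring

lemma good_smul {T : X →L[ℂ] X} {w : X} (hw : w ∈ Good T) (a : ℂ) : a • w ∈ Good T := by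
  obtain ⟨⟨c, hc, hcw⟩, h⟩ := hw
  refine ⟨⟨c, hc, by rw [map_smul, hcw, smul_comm]⟩, fun δ hδ => ?_⟩
  refine (h (δ / (‖a‖ + 1)) (by positivity)).mono ?_
  rintro b ⟨hb, x, hx, hxw⟩
  refine ⟨hb, a • x, by rw [map_smul, hx, smul_comm], ?_⟩
  rw [← smul_sub, norm_smul]
  rw [lt_div_iff₀ (by positivity)] at hxw
  nlinarith [norm_nonneg a, norm_nonneg (x - w)]

lemma multi (T : X →L[ℂ] X) (k : ℕ) : ∀ (g : Fin k → X), (∀ i, g i ∈ Good T) →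
    ∀ {z : X}, z ∈ Esp T → ∀ {ε : ℝ}, 0 < ε →
    ∃ y ∈ Esp T, Small T y ε ∧ ∃ n : ℕ, ‖(T ^ n) (z + y) - (z + ∑ i, g i)‖ < ε := by
  induction k with
  | zero =>
    intro g hg z hz ε hε
    refine ⟨0, Submodule.zero_mem _, fun N => ?_, 0, by simpa⟩
    simp; positivity
  | succ k ih =>
    intro g hg z hz ε hε
    obtain ⟨y₁, hy₁, hs₁, n₁, h₁⟩ := ih (fun i => g i.castSucc) (fun i => hg _) hz (half_pos hε)
    obtain ⟨⟨c, hc, hcw⟩, -⟩ := hg (Fin.last k)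
    have hc0 : c ≠ 0 := by intro h; rw [h, norm_zero] at hc; exact zero_ne_one hc
    set w := g (Fin.last k)
    have hw' := good_smul (hg (Fin.last k)) ((c ^ n₁)⁻¹)
    set ε' := ε / 2 / (‖T ^ n₁‖ + 1) with hε'
    have hε'0 : 0 < ε' := by positivity
    have hε'1 : ‖T ^ n₁‖ * ε' < ε / 2 := by
      rw [hε', mul_div_assoc', div_lt_iff₀ (by positivity)]
      nlinarith [norm_nonneg (T ^ n₁)]
    have hε'2 : ε' ≤ ε / 2 := by
      rw [hε']; exact div_le_self (by positivity) (by linarith [norm_nonneg (T ^ n₁)])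
    obtain ⟨y₂, hy₂, hs₂, n₂, h₂⟩ := single T (Submodule.add_mem _ hz hy₁) hw' hε'0
    refine ⟨y₁ + y₂, Submodule.add_mem _ hy₁ hy₂, ?_, n₁ + n₂, ?_⟩
    · intro N
      refine (hs₁.add hs₂ N).trans ?_
      gcongr
      linarith
    · have e1 : (T ^ n₁) ((c ^ n₁)⁻¹ • w) = w := by
        rw [map_smul, pow_eig hcw, smul_smul, inv_mul_cancel₀ (pow_ne_zero _ hc0), one_smul]
      have e2 : (T ^ (n₁ + n₂)) (z + (y₁ + y₂)) - (z + ∑ i, g i)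
          = (T ^ n₁) ((T ^ n₂) (z + y₁ + y₂) - (z + y₁ + (c ^ n₁)⁻¹ • w))
            + ((T ^ n₁) (z + y₁) - (z + ∑ i : Fin k, g i.castSucc)) := by
        rw [Fin.sum_univ_castSucc, pow_add, mul_apply_eq_comp, map_sub, map_add (T ^ n₁) (z + y₁) _,
          e1, ← add_assoc z y₁ y₂]
        abel
      rw [e2]
      calc _ ≤ _ := norm_add_le _ _
        _ < ε / 2 + ε / 2 := by
          refine add_lt_add (lt_of_le_of_lt ?_ hε'1) h₁
          exact ((T ^ n₁).le_opNorm _).trans (by gcongr)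
        _ = ε := by ring

lemma reach (T : X →L[ℂ] X) (hd : Dense (Submodule.span ℂ (Good T) : Set X)) {z : X}
    (hz : z ∈ Esp T) (v : X) {ε : ℝ} (hε : 0 < ε) :
    ∃ y ∈ Esp T, Small T y ε ∧ ∃ n : ℕ, ‖(T ^ n) (z + y) - v‖ < ε := by
  obtain ⟨w, hw, hwd⟩ := Metric.dense_iff.1 hd (v - z) (ε / 2) (half_pos hε)
  obtain ⟨k, f, g, rfl⟩ := Submodule.mem_span_set'.1 hwd
  obtain ⟨y, hy, hs, n, hn⟩ := multi T k (fun i => f i • (g i : X))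
    (fun i => good_smul (g i).2 _) hz (half_pos hε)
  refine ⟨y, hy, fun N => (hs N).trans (by gcongr; linarith), n, ?_⟩
  rw [Metric.mem_ball, dist_eq_norm] at hw
  calc _ = ‖((T ^ n) (z + y) - (z + ∑ i, f i • (g i : X))) + (∑ i, f i • (g i : X) - (v - z))‖ := by
        congr 1; abel
    _ ≤ _ := norm_add_le _ _
    _ < ε / 2 + ε / 2 := add_lt_add hn hw
    _ = ε := by ring

open scoped Classical in
lemma lowerDensity_pos {A : Set ℕ} {a : ℝ} (ha : 0 < a) {N₀ : ℕ}
    (h : ∀ N ≥ N₀, a * N ≤ ((Finset.range N).filter (fun n => n ∈ A)).card) :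
    0 < lowerDensity A := by
  refine lt_of_lt_of_le ha ?_
  unfold lowerDensity
  refine le_liminf_of_le ?_ ?_
  · refine Filter.IsBoundedUnder.isCoboundedUnder_ge ⟨1, ?_⟩
    rw [Filter.eventually_map]
    refine Filter.Eventually.of_forall fun N => ?_
    refine div_le_one_of_le₀ ?_ (Nat.cast_nonneg N)
    exact_mod_cast (Finset.card_filter_le _ _).trans (by simp)
  · filter_upwards [Filter.eventually_ge_atTop N₀, Filter.eventually_gt_atTop 0] with N h1 h2
    rw [le_div_iff₀ (by exact_mod_cast h2)]
    exact h N h1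

open scoped Classical in
lemma lowerDensity_mono {A B : Set ℕ} (hAB : A ⊆ B) (hA : 0 < lowerDensity A) :
    0 < lowerDensity B := by
  refine lt_of_lt_of_le hA ?_
  unfold lowerDensity
  refine Filter.liminf_le_liminf (Filter.Eventually.of_forall fun N => ?_) ?_ ?_
  · gcongr
  · refine ⟨0, ?_⟩
    rw [Filter.eventually_map]
    exact Filter.Eventually.of_forall fun N => by positivity
  · refine Filter.IsBoundedUnder.isCoboundedUnder_ge ⟨1, ?_⟩
    rw [Filter.eventually_map]
    refine Filter.Eventually.of_forall fun N => ?_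
    refine div_le_one_of_le₀ ?_ (Nat.cast_nonneg N)
    exact_mod_cast (Finset.card_filter_le _ _).trans (by simp)

lemma step (T : X →L[ℂ] X) (hd : Dense (Submodule.span ℂ (Good T) : Set X)) (v : X) {τ : ℝ}
    (hτ : 0 < τ) (s : {p : X × ℝ // p.1 ∈ Esp T ∧ 0 < p.2}) :
    ∃ s' : {p : X × ℝ // p.1 ∈ Esp T ∧ 0 < p.2},
      Small T (s'.1.1 - s.1.1) (s.1.2 / 2) ∧ s'.1.2 ≤ s.1.2 / 2 ∧
      ∀ x, Small T (x - s'.1.1) s'.1.2 → 0 < lowerDensity {n : ℕ | ‖(T ^ n) x - v‖ < τ} := by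
  classical
  obtain ⟨⟨z, e⟩, hz, he⟩ := s
  simp only at hz he
  obtain ⟨y, hy, hs, m, hm⟩ := reach T hd hz v (ε := min (e / 2) (τ / 2)) (by positivity)
  have hz' : z + y ∈ Esp T := Submodule.add_mem _ hz hy
  set ρ := τ / 4 / (‖T ^ m‖ + 1) with hρ
  have hρ0 : 0 < ρ := by positivity
  have hρ1 : ‖T ^ m‖ * ρ < τ / 4 := by
    rw [hρ, mul_div_assoc', div_lt_iff₀ (by positivity)]
    nlinarith [norm_nonneg (T ^ m)]
  obtain ⟨q, hq, hap⟩ := almost_periodic T hz' hρ0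
  have hqr : (0 : ℝ) < q := by exact_mod_cast hq
  refine ⟨⟨(z + y, min (e / 2) (τ / (16 * q))), hz', by positivity⟩, ?_, min_le_left _ _, ?_⟩
  · simp only [add_sub_cancel_left]
    exact fun N => (hs N).trans (by gcongr; exact min_le_left _ _)
  intro x hx
  simp only at hx
  have hm' : ‖(T ^ m) (z + y) - v‖ < τ / 2 := hm.trans_le (min_le_right _ _)
  refine lowerDensity_pos (a := 1 / (2 * q)) (N₀ := 4 * m) (by positivity) fun N hN => ?_
  set P := (Finset.range N).filter (fun n => n ∈ {n : ℕ | ‖(T ^ n) x - v‖ < τ})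
  set Q := (Finset.range N).filter (fun n => τ / 4 ≤ ‖(T ^ n) (x - (z + y))‖)
  set W := (Finset.range (N - m)).filter (fun n => ‖(T ^ n) (z + y) - (z + y)‖ < ρ)
  have hQ : (Q.card : ℝ) * (τ / 4) ≤ N * (τ / (16 * q)) := by
    calc (Q.card : ℝ) * (τ / 4) = ∑ n ∈ Q, τ / 4 := by simp
      _ ≤ ∑ n ∈ Q, ‖(T ^ n) (x - (z + y))‖ :=
        Finset.sum_le_sum fun n hn => (Finset.mem_filter.1 hn).2
      _ ≤ ∑ n ∈ Finset.range N, ‖(T ^ n) (x - (z + y))‖ :=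
        Finset.sum_le_sum_of_subset_of_nonneg (Finset.filter_subset _ _) fun _ _ _ => norm_nonneg _
      _ ≤ _ := (hx N).trans (by gcongr; exact min_le_right _ _)
  have hQ' : (Q.card : ℝ) * (4 * q) ≤ N := by
    have h1 : N * (τ / (16 * q)) = N / (4 * q) * (τ / 4) := by field_simp; ring
    rw [h1] at hQ
    have := le_of_mul_le_mul_right hQ (by positivity)
    rwa [le_div_iff₀ (by positivity)] at this
  have hW : ((N : ℝ) - m) ≤ q * W.card := by
    have := hap (N - m)
    have h2 : ((N - m : ℕ) : ℝ) ≤ q * W.card := by exact_mod_cast this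
    rwa [Nat.cast_sub (by omega)] at h2
  have hWPQ : W.card ≤ P.card + Q.card := by
    refine le_trans ?_ (Finset.card_union_le P Q)
    refine Finset.card_le_card_of_injOn (fun n => m + n) ?_ ?_
    · intro n hn
      obtain ⟨hn1, hn2⟩ := Finset.mem_filter.1 (Finset.mem_coe.1 hn)
      rw [Finset.mem_range] at hn1
      have hr : m + n ∈ Finset.range N := by rw [Finset.mem_range]; omega
      rw [Finset.mem_coe, Finset.mem_union]
      by_cases hb : τ / 4 ≤ ‖(T ^ (m + n)) (x - (z + y))‖
      · exact Or.inr (Finset.mem_filter.2 ⟨hr, hb⟩)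
      · left
        refine Finset.mem_filter.2 ⟨hr, ?_⟩
        push Not at hb
        have e1 : (T ^ (m + n)) x - v = (T ^ (m + n)) (x - (z + y))
            + ((T ^ m) ((T ^ n) (z + y) - (z + y)) + ((T ^ m) (z + y) - v)) := by
          rw [map_sub, map_sub, pow_add, mul_apply_eq_comp, mul_apply_eq_comp]
          abel
        show ‖(T ^ (m + n)) x - v‖ < τ
        rw [e1]
        have e2 : ‖(T ^ m) ((T ^ n) (z + y) - (z + y))‖ < τ / 4 :=
          (((T ^ m).le_opNorm _).trans (by gcongr)).trans_lt hρ1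
        calc _ ≤ _ := (norm_add_le _ _).trans (add_le_add le_rfl (norm_add_le _ _))
          _ < τ / 4 + (τ / 4 + τ / 2) := add_lt_add hb (add_lt_add e2 hm')
          _ = τ := by ring
    · intro a _ b _ hab
      simpa using hab
  have hWPQ' : (W.card : ℝ) ≤ P.card + Q.card := by exact_mod_cast hWPQ
  have hN' : 4 * (m : ℝ) ≤ N := by exact_mod_cast hN
  rw [div_mul_eq_mul_div, div_le_iff₀ (by positivity)]
  nlinarith

end FHC

end FHC

/-- If the unimodular eigenvectors of a bounded operator `T` on a complex separable
infinite-dimensional Banach space are perfectly spanning, then `T` is frequently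
hypercyclic. -/
theorem perfectlySpanning_implies_frequentlyHypercyclic
    {X : Type*} [NormedAddCommGroup X] [NormedSpace ℂ X] [CompleteSpace X]
    [TopologicalSpace.SeparableSpace X] (hdim : ¬ FiniteDimensional ℂ X)
    (T : X →L[ℂ] X) (hT : PerfectlySpanning T) :
    FrequentlyHypercyclic T := by
  have hd := FHC.dense_good T hT
  choose next hn1 hn2 hn3 using fun (j : ℕ) => FHC.step T hd
    (TopologicalSpace.denseSeq X (Nat.unpair j).1) (τ := (1 / 2 : ℝ) ^ j) (by positivity)
  let s : ℕ → {p : X × ℝ // p.1 ∈ FHC.Esp T ∧ 0 < p.2} := fun j =>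
    Nat.rec ⟨(0, 1), Submodule.zero_mem _, one_pos⟩ (fun i t => next i t) j
  have hs : ∀ j, s (j + 1) = next j (s j) := fun j => rfl
  have he : ∀ j, (s j).1.2 ≤ (1 / 2 : ℝ) ^ j := by
    intro j
    induction j with
    | zero => simp [s]
    | succ j ih =>
      have := hn2 j (s j)
      rw [← hs] at this
      rw [pow_succ]; linarith
  have hsm : ∀ k j, FHC.Small T ((s (j + k)).1.1 - (s j).1.1) ((s j).1.2) := by
    intro k
    induction k with
    | zero => intro j N; have := (s j).2.2; simp; positivity
    | succ k ih =>
      intro j N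
      have h1 := hn1 j (s j)
      have h2 := hn2 j (s j)
      rw [← hs] at h1 h2
      have h3 := (ih (j + 1)).add h1 N
      rw [sub_add_sub_cancel, show j + 1 + k = j + (k + 1) by ring] at h3
      refine h3.trans ?_
      gcongr
      linarith
  have hcs : CauchySeq (fun j => (s j).1.1) := by
    refine cauchySeq_of_le_geometric (1 / 2) 1 (by norm_num) fun j => ?_
    have := hsm 1 j 1
    simp only [Finset.range_one, Finset.sum_singleton, pow_zero, Nat.cast_one, one_mul,
      one_apply_eq_self] at this
    rw [dist_comm, dist_eq_norm, one_mul]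
    exact this.trans (he j)
  obtain ⟨x, hx⟩ := cauchySeq_tendsto_of_complete hcs
  have hxs : ∀ j, FHC.Small T (x - (s j).1.1) ((s j).1.2) := by
    intro j N
    have ht : Tendsto (fun k => ∑ n ∈ Finset.range N, ‖(T ^ n) ((s (j + k)).1.1 - (s j).1.1)‖)
        atTop (𝓝 (∑ n ∈ Finset.range N, ‖(T ^ n) (x - (s j).1.1)‖)) := by
      refine tendsto_finsetSum _ fun n _ => ?_
      refine (((T ^ n).continuous.tendsto _).comp ?_).norm
      refine Tendsto.sub_const ?_ _
      exact hx.comp (tendsto_atTop_mono (fun k => Nat.le_add_left k j) tendsto_id)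
    exact le_of_tendsto' ht fun k => hsm k j N
  refine ⟨x, fun U hU hne => ?_⟩
  obtain ⟨a, ha⟩ := (TopologicalSpace.denseRange_denseSeq X).exists_mem_open hU hne
  obtain ⟨r, hr, hball⟩ := Metric.isOpen_iff.1 hU _ ha
  obtain ⟨b, hb⟩ := exists_pow_lt_of_lt_one hr (by norm_num : (1 / 2 : ℝ) < 1)
  have h1 := hn3 (Nat.pair a b) (s (Nat.pair a b)) x (hxs (Nat.pair a b + 1))
  rw [Nat.unpair_pair] at h1
  refine FHC.lowerDensity_mono (fun n hn => hball ?_) h1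
  rw [Metric.mem_ball, dist_eq_norm]
  refine lt_trans (lt_of_lt_of_le hn ?_) hb
  exact pow_le_pow_of_le_one (by norm_num) (by norm_num) (Nat.right_le_pair a b)
end

section
/- Let X be a complex separable infinite-dimensional Banach space and let T be a bounded linear operator on X. If T is hypercyclic and satisfies assumption (H), then T is frequently hypercyclic. -/
open MeasureTheory Filter Topology

namespace FHProof

open scoped Classical in
/-- Number of elements of `A` below `N`. -/
noncomputable def cnt (A : Set ℕ) (N : ℕ) : ℕ :=
  ((Finset.range N).filter (fun n => n ∈ A)).card

lemma cnt_le (A : Set ℕ) (N : ℕ) : cnt A N ≤ N := by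
  classical
  unfold cnt
  exact (Finset.card_filter_le _ _).trans (by simp)

lemma cnt_mono {A B : Set ℕ} (h : A ⊆ B) (N : ℕ) : cnt A N ≤ cnt B N := by
  unfold cnt
  apply Finset.card_le_card
  intro n hn
  simp only [Finset.mem_filter] at hn ⊢
  exact ⟨hn.1, h hn.2⟩

lemma cnt_add (A : Set ℕ) (M N : ℕ) : cnt A (M + N) ≤ cnt A M + N := by
  classical
  unfold cnt
  have : (Finset.range (M + N)).filter (fun n => n ∈ A) ⊆
      (Finset.range M).filter (fun n => n ∈ A) ∪ Finset.Ico M (M + N) := by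
    intro n hn
    simp only [Finset.mem_filter, Finset.mem_range, Finset.mem_union, Finset.mem_Ico] at hn ⊢
    by_cases h : n < M
    · exact Or.inl ⟨h, hn.2⟩
    · exact Or.inr ⟨by omega, hn.1⟩
  calc _ ≤ _ := Finset.card_le_card this
    _ ≤ _ := Finset.card_union_le _ _
    _ = _ := by simp

lemma cnt_succ_of_notMem {A : Set ℕ} {M : ℕ} (h : M ∉ A) : cnt A (M + 1) = cnt A M := by
  classical
  unfold cnt
  rw [Finset.range_add_one, Finset.filter_insert, if_neg h]

lemma cnt_union (A B : Set ℕ) (N : ℕ) : cnt (A ∪ B) N ≤ cnt A N + cnt B N := by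
  classical
  unfold cnt
  refine le_trans (Finset.card_le_card ?_) (Finset.card_union_le _ _)
  intro n hn
  simp only [Finset.mem_filter, Finset.mem_union, Set.mem_union] at hn ⊢
  tauto

lemma cnt_shift (A : Set ℕ) (s N : ℕ) : cnt A N ≤ cnt {n | n + s ∈ A} N + s := by
  classical
  unfold cnt
  have : (Finset.range N).filter (fun n => n ∈ A) ⊆
      (((Finset.range N).filter (fun n => n ∈ {n | n + s ∈ A})).image (fun n => n + s))
        ∪ Finset.range s := by
    intro n hn
    simp only [Finset.mem_filter, Finset.mem_range, Finset.mem_union, Finset.mem_image,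
      Set.mem_ofPred_eq] at hn ⊢
    by_cases h : n < s
    · exact Or.inr h
    · refine Or.inl ⟨n - s, ⟨by omega, ?_⟩, by omega⟩
      rw [Nat.sub_add_cancel (by omega)]
      exact hn.2
  refine (Finset.card_le_card this).trans ((Finset.card_union_le _ _).trans ?_)
  refine add_le_add Finset.card_image_le ?_
  simp

/-- Markov inequality for counting. -/
lemma cnt_markov (f : ℕ → ℝ) (hf : ∀ n, 0 ≤ f n) (τ : ℝ) (N : ℕ) :
    τ * cnt {n | τ ≤ f n} N ≤ ∑ n ∈ Finset.range N, f n := by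
  classical
  unfold cnt
  calc τ * (((Finset.range N).filter (fun n => n ∈ {n | τ ≤ f n})).card : ℝ)
      = ∑ n ∈ (Finset.range N).filter (fun n => n ∈ {n | τ ≤ f n}), τ := by
        simp [mul_comm]
    _ ≤ ∑ n ∈ (Finset.range N).filter (fun n => n ∈ {n | τ ≤ f n}), f n := by
        apply Finset.sum_le_sum
        intro n hn
        exact (Finset.mem_filter.1 hn).2
    _ ≤ _ := Finset.sum_le_sum_of_subset_of_nonneg (Finset.filter_subset _ _)
        (fun n _ _ => hf n)

lemma lowerDensity_pos (A : Set ℕ) (d : ℝ) (hd : 0 < d)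
    (h : ∀ᶠ N : ℕ in atTop, d * N ≤ cnt A N) : 0 < lowerDensity A := by
  unfold lowerDensity
  refine lt_of_lt_of_le hd ?_
  have hb : ∀ N : ℕ, (cnt A N : ℝ) / N ≤ 1 := by
    intro N
    apply div_le_one_of_le₀ _ (Nat.cast_nonneg N)
    exact_mod_cast cnt_le A N
  change d ≤ liminf (fun N : ℕ => (cnt A N : ℝ) / N) atTop
  refine le_liminf_of_le ?_ ?_
  · exact (isBoundedUnder_of ⟨1, hb⟩ : IsBoundedUnder (· ≤ ·) atTop _).isCoboundedUnder_ge
  · filter_upwards [h, eventually_gt_atTop 0] with N hN h0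
    rw [le_div_iff₀ (by exact_mod_cast h0)]
    exact hN

/-- A combinatorial maximal inequality. -/
lemma maximal (f : ℕ → ℝ) (hf : ∀ n, 0 ≤ f n) (R : Set ℕ) (d ε ε' : ℝ) (hε : 0 < ε)
    (hR : ∀ N, d * N ≤ cnt R N) (hlt : ε' < ε * d)
    (hav : ∀ᶠ M : ℕ in atTop, ∑ n ∈ Finset.range M, f n ≤ ε' * M) :
    ∃ s ∈ R, ∀ N : ℕ, ∑ n ∈ Finset.range N, f (s + n) ≤ ε * N := by
  by_contra! hcon
  have key : ∀ K : ℕ, ∃ M ≥ K, ε * cnt R M ≤ ∑ n ∈ Finset.range M, f n := by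
    intro K
    induction K with
    | zero => exact ⟨0, le_rfl, by simp [cnt]⟩
    | succ K ih =>
      obtain ⟨M, hMK, hM⟩ := ih
      by_cases hlt : K + 1 ≤ M
      · exact ⟨M, hlt, hM⟩
      by_cases hmem : M ∈ R
      · obtain ⟨N, hN⟩ := hcon M hmem
        have hN0 : N ≠ 0 := by
          rintro rfl
          simp at hN
        refine ⟨M + N, by omega, ?_⟩
        rw [Finset.sum_range_add]
        have : (cnt R (M + N) : ℝ) ≤ cnt R M + N := by exact_mod_cast cnt_add R M N
        nlinarith
      · refine ⟨M + 1, by omega, ?_⟩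
        rw [cnt_succ_of_notMem hmem, Finset.sum_range_succ]
        linarith [hf M]
  obtain ⟨M0, hM0⟩ := eventually_atTop.1 hav
  obtain ⟨M, hM, hM'⟩ := key (M0 + 1)
  have h1 := hM0 M (by omega)
  have h2 := hR M
  have hMpos : (0 : ℝ) < M := by exact_mod_cast (by omega : 0 < M)
  nlinarith

/-- Common return times of finitely many rotations have positive lower density. -/
lemma returns (F : Finset ℂ) (hF : ∀ c ∈ F, ‖c‖ = 1) (η : ℝ) (hη : 0 < η) :
    ∃ d : ℝ, 0 < d ∧ ∀ N : ℕ, d * N ≤ cnt {n : ℕ | ∀ c ∈ F, ‖c ^ n - 1‖ ≤ η} N := by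
  classical
  have hc : IsCompact (Metric.closedBall (0 : F → ℂ) 1) := isCompact_closedBall _ _
  obtain ⟨t, htf, ht⟩ := Metric.totallyBounded_iff.1 hc.totallyBounded (η / 2) (by positivity)
  let g : ℕ → F → ℂ := fun n c => (c : ℂ) ^ n
  have hg : ∀ n, ∃ y ∈ htf.toFinset, g n ∈ Metric.ball y (η / 2) := by
    intro n
    have : g n ∈ Metric.closedBall (0 : F → ℂ) 1 := by
      rw [mem_closedBall_zero_iff, pi_norm_le_iff_of_nonneg zero_le_one]
      intro c
      simp [g, hF c c.2]
    have := ht this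
    simp only [Set.mem_iUnion] at this
    obtain ⟨y, hy, h⟩ := this
    exact ⟨y, by simpa using hy, h⟩
  choose y hy hgy using hg
  have htpos : 0 < htf.toFinset.card := Finset.card_pos.2 ⟨_, hy 0⟩
  refine ⟨1 / (htf.toFinset.card : ℝ), by positivity, ?_⟩
  intro N
  obtain ⟨y0, hy0, hcard⟩ := Finset.exists_le_card_fiber_of_nsmul_le_card_of_maps_to
    (s := Finset.range N) (t := htf.toFinset) (f := y) (fun n _ => hy n)
    (b := (1 / (htf.toFinset.card : ℝ)) * N) ⟨_, hy 0⟩ (by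
      rw [nsmul_eq_mul, Finset.card_range]
      have : (htf.toFinset.card : ℝ) ≠ 0 := by positivity
      field_simp
      exact le_rfl)
  refine hcard.trans ?_
  norm_cast
  unfold cnt
  set S := (Finset.range N).filter (fun n => y n = y0) with hS
  rcases S.eq_empty_or_nonempty with he | hne
  · simp [he]
  set m := S.min' hne with hm
  have hmS : m ∈ S := S.min'_mem hne
  apply Finset.card_le_card_of_injOn (fun n => n - m)
  · intro n hn
    have hn' : n ∈ S := hn
    have hmn : m ≤ n := S.min'_le n hn'
    simp only [hS, Finset.mem_filter, Finset.mem_range] at hn' hmS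
    simp only [Finset.coe_filter, Finset.mem_range, Set.mem_ofPred_eq]
    refine ⟨by omega, ?_⟩
    intro c hcF
    have h1 := hgy n
    have h2 := hgy m
    rw [hn'.2] at h1
    rw [hmS.2] at h2
    have h3 : dist (g n) (g m) ≤ η := by
      have := dist_triangle_right (g n) (g m) y0
      rw [Metric.mem_ball] at h1 h2
      linarith
    have h4 : dist (c ^ n) (c ^ m) ≤ η := (dist_le_pi_dist (g n) (g m) ⟨c, hcF⟩).trans h3
    rw [dist_eq_norm] at h4
    have : c ^ n - c ^ m = c ^ m * (c ^ (n - m) - 1) := by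
      rw [mul_sub, ← pow_add, Nat.add_sub_cancel' hmn, mul_one]
    rw [this, norm_mul, norm_pow, hF c hcF, one_pow, one_mul] at h4
    exact h4
  · intro a ha b hb hab
    have h1 : m ≤ a := S.min'_le a ha
    have h2 : m ≤ b := S.min'_le b hb
    simp only at hab
    omega

/-- Cesaro means of powers of a unimodular number different from one. -/
lemma cesaro_ne (c : ℂ) (hc : ‖c‖ = 1) (h1 : c ≠ 1) :
    Tendsto (fun M : ℕ => (∑ n ∈ Finset.range M, c ^ n) / (M : ℂ)) atTop (𝓝 0) := by
  have h : Tendsto (fun M : ℕ => (2 / ‖c - 1‖) / (M : ℝ)) atTop (𝓝 0) :=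
    tendsto_const_div_atTop_nhds_zero_nat _
  refine squeeze_zero_norm (fun M => ?_) h
  rw [norm_div, Complex.norm_natCast, geom_sum_eq h1, norm_div]
  gcongr
  calc ‖c ^ M - 1‖ ≤ ‖c ^ M‖ + ‖(1 : ℂ)‖ := norm_sub_le _ _
    _ = 2 := by rw [norm_pow, hc]; norm_num

lemma cesaro_one :
    Tendsto (fun M : ℕ => (∑ n ∈ Finset.range M, (1 : ℂ) ^ n) / (M : ℂ)) atTop (𝓝 1) := by
  refine tendsto_const_nhds.congr' ?_
  filter_upwards [eventually_gt_atTop 0] with M hM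
  have : (M : ℂ) ≠ 0 := by exact_mod_cast hM.ne'
  simp [this]

/-- Second moment of a trigonometric sum. -/
lemma moment (S : Finset ℕ) (lam : ℕ → ℂ) (hmod : ∀ n, ‖lam n‖ = 1) (hinj : Set.InjOn lam S) :
    Tendsto (fun M : ℕ => (∑ n ∈ Finset.range M, ‖∑ j ∈ S, lam j ^ n‖ ^ 2) / (M : ℝ)) atTop
      (𝓝 (S.card : ℝ)) := by
  have hpt : ∀ j ∈ S, ∀ l ∈ S, Tendsto (fun M : ℕ =>
      (∑ n ∈ Finset.range M, (lam j * (starRingEnd ℂ) (lam l)) ^ n) / (M : ℂ)) atTop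
      (𝓝 (if j = l then 1 else 0)) := by
    intro j hj l hl
    have hone : ∀ l, lam l * (starRingEnd ℂ) (lam l) = 1 := by
      intro l
      rw [Complex.mul_conj, Complex.normSq_eq_norm_sq, hmod]
      simp
    by_cases h : j = l
    · subst h
      rw [hone, if_pos rfl]
      exact cesaro_one
    · rw [if_neg h]
      apply cesaro_ne
      · simp [hmod]
      · intro h'
        apply h
        apply hinj hj hl
        have : lam j * (starRingEnd ℂ) (lam l) * lam l = lam l := by rw [h', one_mul]
        rw [mul_assoc, mul_comm _ (lam l), hone, mul_one] at this
        exact this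
  have hsum : Tendsto (fun M : ℕ => ∑ j ∈ S, ∑ l ∈ S,
      (∑ n ∈ Finset.range M, (lam j * (starRingEnd ℂ) (lam l)) ^ n) / (M : ℂ)) atTop
      (𝓝 (∑ j ∈ S, ∑ l ∈ S, (if j = l then (1 : ℂ) else 0))) :=
    tendsto_finsetSum _ (fun j hj => tendsto_finsetSum _ (fun l hl => hpt j hj l hl))
  have hval : (∑ j ∈ S, ∑ l ∈ S, (if j = l then (1 : ℂ) else 0)) = (S.card : ℂ) := by
    simp
  rw [hval] at hsum
  have hre := (Complex.continuous_re.tendsto _).comp hsum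
  simp only [Complex.natCast_re] at hre
  refine hre.congr (fun M => ?_)
  have : (∑ j ∈ S, ∑ l ∈ S,
      (∑ n ∈ Finset.range M, (lam j * (starRingEnd ℂ) (lam l)) ^ n) / (M : ℂ)) =
      (((∑ n ∈ Finset.range M, ‖∑ j ∈ S, lam j ^ n‖ ^ 2) / (M : ℝ) : ℝ) : ℂ) := by
    push_cast
    simp_rw [← Finset.sum_div]
    congr 1
    simp_rw [Finset.sum_comm (s := S) (t := Finset.range M)]
    refine Finset.sum_congr rfl (fun n _ => ?_)
    have h2 : (((‖∑ j ∈ S, lam j ^ n‖ : ℝ) : ℂ)) ^ 2 =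
        (∑ j ∈ S, lam j ^ n) * (starRingEnd ℂ) (∑ j ∈ S, lam j ^ n) := by
      rw [Complex.mul_conj, Complex.normSq_eq_norm_sq]
      push_cast
      rfl
    rw [h2, map_sum, Finset.sum_mul_sum]
    simp [mul_pow]
  simp only [Function.comp_apply]
  rw [this, Complex.ofReal_re]

section Op

variable {X : Type*} [NormedAddCommGroup X] [NormedSpace ℂ X]

/-- Almost periodic vectors (finite combinations of unimodular eigenvectors). -/
def AP (T : X →L[ℂ] X) (y : X) : Prop :=
  ∃ F : Finset ℂ, (∀ c ∈ F, ‖c‖ = 1) ∧ ∃ C : ℝ, 0 ≤ C ∧ ∀ (n m : ℕ) (δ : ℝ), 0 ≤ δ →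
    (∀ c ∈ F, ‖c ^ n - c ^ m‖ ≤ δ) → ‖(T ^ n) y - (T ^ m) y‖ ≤ C * δ

lemma AP.zero (T : X →L[ℂ] X) : AP T 0 :=
  ⟨∅, by simp, 0, le_rfl, by simp⟩

lemma AP.add {T : X →L[ℂ] X} {y z : X} (hy : AP T y) (hz : AP T z) : AP T (y + z) := by
  classical
  obtain ⟨F, hF, C, hC, h⟩ := hy
  obtain ⟨F', hF', C', hC', h'⟩ := hz
  refine ⟨F ∪ F', ?_, C + C', by positivity, ?_⟩
  · intro c hc
    rcases Finset.mem_union.1 hc with hc | hc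
    · exact hF c hc
    · exact hF' c hc
  · intro n m δ hδ hall
    have h1 := h n m δ hδ (fun c hc => hall c (Finset.mem_union_left _ hc))
    have h2 := h' n m δ hδ (fun c hc => hall c (Finset.mem_union_right _ hc))
    rw [map_add, map_add, add_sub_add_comm, add_mul]
    exact (norm_add_le _ _).trans (add_le_add h1 h2)

lemma AP.map {T : X →L[ℂ] X} {y : X} (hy : AP T y) (s : ℕ) : AP T ((T ^ s) y) := by
  obtain ⟨F, hF, C, hC, h⟩ := hy
  refine ⟨F, hF, ‖T ^ s‖ * C, by positivity, ?_⟩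
  intro n m δ hδ hall
  have h1 := h n m δ hδ hall
  have : (T ^ n) ((T ^ s) y) - (T ^ m) ((T ^ s) y) = (T ^ s) ((T ^ n) y - (T ^ m) y) := by
    rw [map_sub]
    simp only [← mul_apply_eq_comp, ← pow_add, add_comm]
  rw [this, mul_assoc]
  exact ((T ^ s).le_opNorm _).trans (by gcongr)

lemma pow_eig {T : X →L[ℂ] X} {v : X} {c : ℂ} (h : T v = c • v) (n : ℕ) :
    (T ^ n) v = c ^ n • v := by
  induction n with
  | zero => simp
  | succ n ih =>
    rw [pow_succ, mul_apply_eq_comp, h, map_smul, ih, smul_smul, pow_succ, mul_comm]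

lemma AP.eig {T : X →L[ℂ] X} {v : X} {c : ℂ} (h : T v = c • v) (hc : ‖c‖ = 1) (a : ℂ) :
    AP T (a • v) := by
  refine ⟨{c}, by simpa using hc, ‖a‖ * ‖v‖, by positivity, ?_⟩
  intro n m δ hδ hall
  have h1 := hall c (by simp)
  rw [map_smul, map_smul, ← smul_sub, pow_eig h, pow_eig h, ← sub_smul, norm_smul, norm_smul]
  calc ‖a‖ * (‖c ^ n - c ^ m‖ * ‖v‖) ≤ ‖a‖ * (δ * ‖v‖) := by gcongr
    _ = _ := by ring

lemma AP.sum {T : X →L[ℂ] X} (S : Finset ℕ) (f : ℕ → X) (h : ∀ j ∈ S, AP T (f j)) :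
    AP T (∑ j ∈ S, f j) := by
  classical
  induction S using Finset.induction_on with
  | empty => simpa using AP.zero T
  | insert j S hj ih =>
    rw [Finset.sum_insert hj]
    exact (h j (by simp)).add (ih (fun k hk => h k (by simp [hk])))

/-- `w` can be approximated by almost periodic vectors whose orbit is small on average. -/
def Good (T : X →L[ℂ] X) (w : X) : Prop :=
  ∀ ε > 0, ∃ z, AP T z ∧ ‖z - w‖ < ε ∧
    ∀ᶠ M : ℕ in atTop, ∑ n ∈ Finset.range M, ‖(T ^ n) z‖ ≤ ε * M

lemma Good.zero (T : X →L[ℂ] X) : Good T 0 := by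
  intro ε hε
  refine ⟨0, AP.zero T, by simpa using hε, Eventually.of_forall fun M => ?_⟩
  simp
  positivity

lemma Good.add {T : X →L[ℂ] X} {w w' : X} (h : Good T w) (h' : Good T w') :
    Good T (w + w') := by
  intro ε hε
  obtain ⟨z, hz, hzw, hM⟩ := h (ε / 2) (by positivity)
  obtain ⟨z', hz', hzw', hM'⟩ := h' (ε / 2) (by positivity)
  refine ⟨z + z', hz.add hz', ?_, ?_⟩
  · rw [add_sub_add_comm]
    linarith [norm_add_le (z - w) (z' - w')]
  · filter_upwards [hM, hM'] with M h1 h2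
    calc ∑ n ∈ Finset.range M, ‖(T ^ n) (z + z')‖
        ≤ ∑ n ∈ Finset.range M, (‖(T ^ n) z‖ + ‖(T ^ n) z'‖) := by
          refine Finset.sum_le_sum fun n _ => ?_
          rw [map_add]
          exact norm_add_le _ _
      _ ≤ ε * M := by
          rw [Finset.sum_add_distrib]
          linarith

lemma Good.closed {T : X →L[ℂ] X} {w : X} (h : w ∈ closure {w | Good T w}) : Good T w := by
  intro ε hε
  obtain ⟨w', hw', hd⟩ := Metric.mem_closure_iff.1 h (ε / 2) (by positivity)
  obtain ⟨z, hz, hzw, hM⟩ := hw' (ε / 2) (by positivity)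
  refine ⟨z, hz, ?_, ?_⟩
  · rw [dist_comm, dist_eq_norm] at hd
    have := norm_add_le (z - w') (w' - w)
    rw [sub_add_sub_cancel] at this
    linarith
  · filter_upwards [hM] with M h1
    refine h1.trans ?_
    gcongr
    linarith

/-- Eigenvectors that are limits of eigenvectors with many other eigenvalues are good. -/
lemma Good.eig {T : X →L[ℂ] X} (x : ℕ → X) (lam : ℕ → ℂ)
    (heig : ∀ n, T (x n) = lam n • x n) (hmod : ∀ n, ‖lam n‖ = 1) (hnorm : ∀ n, ‖x n‖ = 1)
    (i : ℕ)
    (hS : ∀ δ > 0, ∀ N : ℕ, ∃ S : Finset ℕ, S.card = N ∧ Set.InjOn lam S ∧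
      ∀ k ∈ S, ‖x k - x i‖ < δ) (a : ℂ) : Good T (a • x i) := by
  intro ε hε
  obtain ⟨δ, hδ, hδε⟩ : ∃ δ > 0, (‖a‖ + 1) * δ = ε / 4 :=
    ⟨ε / 4 / (‖a‖ + 1), by positivity, by field_simp⟩
  obtain ⟨N, hN⟩ := exists_nat_gt (1 / (δ * δ))
  have hN0 : (0 : ℝ) < N := lt_trans (by positivity) hN
  obtain ⟨S, hcard, hinj, hclose⟩ := hS δ hδ N
  have hNc : (N : ℂ) ≠ 0 := by
    have : N ≠ 0 := by exact_mod_cast hN0.ne'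
    exact_mod_cast this
  have hpow : ∀ n, (T ^ n) (∑ j ∈ S, (a / N) • x j) = ∑ j ∈ S, (a / N * lam j ^ n) • x j := by
    intro n
    rw [map_sum]
    refine Finset.sum_congr rfl fun j _ => ?_
    rw [map_smul, pow_eig (heig j), smul_smul]
  -- general estimate
  have hest : ∀ n, ‖(T ^ n) (∑ j ∈ S, (a / N) • x j) - (a / N * ∑ j ∈ S, lam j ^ n) • x i‖
      ≤ ‖a‖ * δ := by
    intro n
    rw [hpow, Finset.mul_sum, Finset.sum_smul, ← Finset.sum_sub_distrib]
    calc ‖∑ j ∈ S, ((a / N * lam j ^ n) • x j - (a / N * lam j ^ n) • x i)‖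
        ≤ ∑ j ∈ S, ‖(a / N * lam j ^ n) • x j - (a / N * lam j ^ n) • x i‖ := norm_sum_le _ _
      _ ≤ ∑ j ∈ S, ‖a‖ / N * δ := by
          refine Finset.sum_le_sum fun j hj => ?_
          rw [← smul_sub, norm_smul, norm_mul, norm_pow, hmod, one_pow, mul_one, norm_div,
            Complex.norm_natCast]
          gcongr
          exact (hclose j hj).le
      _ = ‖a‖ * δ := by
          rw [Finset.sum_const, hcard, nsmul_eq_mul]
          field_simp
  refine ⟨∑ j ∈ S, (a / N) • x j, AP.sum S _ (fun j _ => AP.eig (heig j) (hmod j) _), ?_, ?_⟩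
  · have h0 := hest 0
    simp only [pow_zero, Finset.sum_const, hcard, nsmul_eq_mul, mul_one,
      one_apply_eq_self] at h0
    rw [div_mul_cancel₀ _ hNc] at h0
    nlinarith
  · have hm := moment S lam hmod hinj
    rw [hcard] at hm
    have hev := hm.eventually (eventually_lt_nhds (b := (2 * N : ℝ)) (by linarith))
    filter_upwards [hev, eventually_gt_atTop 0] with M hM hM0
    have hMpos : (0 : ℝ) < M := by exact_mod_cast hM0
    rw [div_lt_iff₀ hMpos] at hM
    have hb : ∀ n, ‖(T ^ n) (∑ j ∈ S, (a / N) • x j)‖ ≤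
        ‖a‖ * (2 * δ) + ‖a‖ * (1 / (N * N * δ) * ‖∑ j ∈ S, lam j ^ n‖ ^ 2) := by
      intro n
      have h1 := hest n
      have h2 : ‖(a / N * ∑ j ∈ S, lam j ^ n) • x i‖ = ‖a‖ * (‖∑ j ∈ S, lam j ^ n‖ / N) := by
        rw [norm_smul, hnorm, mul_one, norm_mul, norm_div, Complex.norm_natCast]
        ring
      have h3 : ‖∑ j ∈ S, lam j ^ n‖ / N ≤
          δ + 1 / (N * N * δ) * ‖∑ j ∈ S, lam j ^ n‖ ^ 2 := by
        set g := ‖∑ j ∈ S, lam j ^ n‖ with hg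
        have e : 1 / (N * N * δ) * g ^ 2 = (g / N) ^ 2 / δ := by field_simp
        rw [e]
        set r := g / N
        rw [← sub_nonneg]
        have : δ + r ^ 2 / δ - r = ((r - δ / 2) ^ 2 + 3 / 4 * δ ^ 2) / δ := by
          field_simp
          ring
        rw [this]
        positivity
      have h4 := norm_le_norm_sub_add ((T ^ n) (∑ j ∈ S, (a / N) • x j))
        ((a / N * ∑ j ∈ S, lam j ^ n) • x i)
      have h5 := mul_le_mul_of_nonneg_left h3 (norm_nonneg a)
      linarith
    calc ∑ n ∈ Finset.range M, ‖(T ^ n) (∑ j ∈ S, (a / N) • x j)‖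
        ≤ ∑ n ∈ Finset.range M,
          (‖a‖ * (2 * δ) + ‖a‖ * (1 / (N * N * δ) * ‖∑ j ∈ S, lam j ^ n‖ ^ 2)) :=
          Finset.sum_le_sum fun n _ => hb n
      _ = M * (‖a‖ * (2 * δ)) + ‖a‖ * (1 / (N * N * δ) *
          ∑ n ∈ Finset.range M, ‖∑ j ∈ S, lam j ^ n‖ ^ 2) := by
          rw [Finset.sum_add_distrib, Finset.sum_const, Finset.card_range, nsmul_eq_mul,
            ← Finset.mul_sum, ← Finset.mul_sum]
      _ ≤ M * (‖a‖ * (2 * δ)) + ‖a‖ * (1 / (N * N * δ) * (2 * N * M)) := by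
          gcongr
      _ ≤ M * (‖a‖ * (2 * δ)) + ‖a‖ * (2 * δ * M) := by
          refine add_le_add le_rfl (mul_le_mul_of_nonneg_left ?_ (norm_nonneg a))
          have : 1 / (N * N * δ) * (2 * N * M) = 2 * M * (1 / (N * δ)) := by field_simp
          rw [this]
          have h6 : 1 / (N * δ) ≤ δ := by
            rw [div_lt_iff₀ (by positivity)] at hN
            rw [div_le_iff₀ (by positivity)]
            nlinarith
          nlinarith
      _ ≤ ε * M := by
          have : ‖a‖ * δ ≤ ε / 4 := by nlinarith
          nlinarith

/-- One stage of the construction. -/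
lemma stage {T : X →L[ℂ] X} (hG : ∀ w, Good T w) (v u : X) (hv : AP T v) (ε : ℝ) (hε : 0 < ε) :
    ∃ z, AP T z ∧ (∀ M : ℕ, ∑ n ∈ Finset.range M, ‖(T ^ n) z‖ ≤ ε * M) ∧
      ∃ d : ℝ, 0 < d ∧ ∀ᶠ N : ℕ in atTop, d * N ≤ cnt {n | ‖(T ^ n) (v + z) - u‖ < ε} N := by
  classical
  obtain ⟨F, hF, C, hC, hv'⟩ := id hv
  obtain ⟨η, hη, hηε⟩ : ∃ η > 0, (C + 1) * η = ε / 8 :=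
    ⟨ε / 8 / (C + 1), by positivity, by field_simp⟩
  obtain ⟨d1, hd1, hR1⟩ := returns F hF η hη
  obtain ⟨z0, hz0, hzu, hav⟩ := hG (u - v) (min (ε / 4) (ε * d1 / 2)) (by positivity)
  obtain ⟨s, hs, hs'⟩ := maximal (fun n => ‖(T ^ n) z0‖) (fun n => norm_nonneg _) _ d1 ε _ hε hR1
    (lt_of_le_of_lt (min_le_right _ _) (half_lt_self (by positivity))) hav
  obtain ⟨F', hF', C', hC', hz'⟩ := id hz0
  obtain ⟨η', hη', hηε'⟩ : ∃ η > 0, (C' + 1) * η = ε / 8 :=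
    ⟨ε / 8 / (C' + 1), by positivity, by field_simp⟩
  obtain ⟨d2, hd2, hR2⟩ := returns (F ∪ F') (by
    intro c hc
    rcases Finset.mem_union.1 hc with hc | hc
    · exact hF c hc
    · exact hF' c hc) (min η η') (by positivity)
  refine ⟨(T ^ s) z0, hz0.map s, ?_, d2 / 2, by positivity, ?_⟩
  · intro M
    refine le_trans (le_of_eq ?_) (hs' M)
    refine Finset.sum_congr rfl fun n _ => ?_
    rw [← mul_apply_eq_comp, ← pow_add, add_comm]
  · have hsub : {n | n + s ∈ {n : ℕ | ∀ c ∈ F ∪ F', ‖c ^ n - 1‖ ≤ min η η'}} ⊆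
        {n | ‖(T ^ n) (v + (T ^ s) z0) - u‖ < ε} := by
      intro n hn
      simp only [Set.mem_ofPred_eq] at hn ⊢
      have h1 : ‖(T ^ n) v - (T ^ 0) v‖ ≤ C * (2 * η) := by
        refine hv' n 0 _ (by positivity) fun c hc => ?_
        have e1 := (hn c (Finset.mem_union_left _ hc)).trans (min_le_left _ _)
        have e2 := hs c hc
        have e3 : ‖c ^ n - c ^ 0‖ = ‖c ^ (n + s) - c ^ s‖ := by
          have : c ^ (n + s) - c ^ s = (c ^ n - c ^ 0) * c ^ s := by ring
          rw [this, norm_mul, norm_pow, hF c hc, one_pow, mul_one]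
        rw [e3]
        have e4 := norm_sub_le (c ^ (n + s) - 1) (c ^ s - 1)
        rw [sub_sub_sub_cancel_right] at e4
        linarith
      have h2 : ‖(T ^ (n + s)) z0 - (T ^ 0) z0‖ ≤ C' * η' := by
        refine hz' (n + s) 0 _ hη'.le fun c hc => ?_
        rw [pow_zero]
        exact (hn c (Finset.mem_union_right _ hc)).trans (min_le_right _ _)
      have h3 := lt_of_lt_of_le hzu (min_le_left _ _)
      simp only [pow_zero, one_apply_eq_self] at h1 h2
      have h4 : (T ^ n) (v + (T ^ s) z0) - u =
          ((T ^ n) v - v) + ((T ^ (n + s)) z0 - z0) + (z0 - (u - v)) := by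
        rw [map_add, pow_add, mul_apply_eq_comp]
        abel
      rw [h4]
      have h5 := norm_add₃_le (a := (T ^ n) v - v) (b := (T ^ (n + s)) z0 - z0)
        (c := z0 - (u - v))
      nlinarith
    obtain ⟨N0, hN0⟩ := exists_nat_gt (2 * s / d2)
    filter_upwards [eventually_ge_atTop N0] with N hN
    have h1 := hR2 N
    have h2 : (cnt {n : ℕ | ∀ c ∈ F ∪ F', ‖c ^ n - 1‖ ≤ min η η'} N : ℝ) ≤
        cnt {n | n + s ∈ {n : ℕ | ∀ c ∈ F ∪ F', ‖c ^ n - 1‖ ≤ min η η'}} N + s := by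
      exact_mod_cast cnt_shift _ s N
    have h3 : (cnt {n | n + s ∈ {n : ℕ | ∀ c ∈ F ∪ F', ‖c ^ n - 1‖ ≤ min η η'}} N : ℝ) ≤
        cnt {n | ‖(T ^ n) (v + (T ^ s) z0) - u‖ < ε} N := by
      exact_mod_cast cnt_mono hsub N
    have h4 : 2 * (s : ℝ) < N * d2 := by
      rw [div_lt_iff₀ hd2] at hN0
      have : (N0 : ℝ) ≤ N := by exact_mod_cast hN
      nlinarith
    linarith

/-- The construction of a frequently hypercyclic vector. -/
lemma construct [CompleteSpace X] [TopologicalSpace.SeparableSpace X] {T : X →L[ℂ] X}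
    (hG : ∀ w, Good T w) : FrequentlyHypercyclic T := by
  classical
  let u : ℕ → X := fun b => TopologicalSpace.denseSeq X (Nat.unpair b).1
  have hstep : ∀ (b : ℕ) (p : {p : X × ℝ // AP T p.1 ∧ 0 < p.2}),
      ∃ q : {p : X × ℝ // AP T p.1 ∧ 0 < p.2},
        (∀ M : ℕ, ∑ n ∈ Finset.range M, ‖(T ^ n) (q.1.1 - p.1.1)‖ ≤ p.1.2 * M) ∧
        q.1.2 ≤ p.1.2 / 2 ∧
        ∀ᶠ N : ℕ in atTop, (4 * 2 ^ b * q.1.2) * N ≤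
          cnt {n | ‖(T ^ n) q.1.1 - u b‖ < p.1.2} N := by
    rintro b ⟨⟨v, e⟩, hv, he⟩
    obtain ⟨z, hz, hzM, d, hd, hN⟩ := stage hG v (u b) hv e he
    refine ⟨⟨(v + z, min (e / 2) (d / (4 * 2 ^ b))), hv.add hz, ?_⟩, ?_, min_le_left _ _, ?_⟩
    · simp only at he
      positivity
    · simpa using hzM
    · filter_upwards [hN] with N hN
      refine le_trans ?_ hN
      gcongr
      calc 4 * 2 ^ b * min (e / 2) (d / (4 * 2 ^ b)) ≤ 4 * 2 ^ b * (d / (4 * 2 ^ b)) := by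
            gcongr
            exact min_le_right _ _
        _ = d := by field_simp
  choose step hs1 hs2 hs3 using hstep
  let P : ℕ → {p : X × ℝ // AP T p.1 ∧ 0 < p.2} := fun b =>
    Nat.rec ⟨(0, 1), AP.zero T, one_pos⟩ (fun b p => step b p) b
  let v : ℕ → X := fun b => (P b).1.1
  let e : ℕ → ℝ := fun b => (P b).1.2
  have hepos : ∀ b, 0 < e b := fun b => (P b).2.2
  have h1 : ∀ b M, ∑ n ∈ Finset.range M, ‖(T ^ n) (v (b + 1) - v b)‖ ≤ e b * M :=
    fun b M => hs1 b (P b) M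
  have h2 : ∀ b, e (b + 1) ≤ e b / 2 := fun b => hs2 b (P b)
  have h3 : ∀ b, ∀ᶠ N : ℕ in atTop, (4 * 2 ^ b * e (b + 1)) * N ≤
      cnt {n | ‖(T ^ n) (v (b + 1)) - u b‖ < e b} N := fun b => hs3 b (P b)
  have he1 : ∀ b, e b ≤ (1 / 2) ^ b := by
    intro b
    induction b with
    | zero => exact le_of_eq (by simp [e, P])
    | succ b ih =>
      rw [pow_succ]
      linarith [h2 b]
  -- sums over finitely many further stages
  have hfin : ∀ b k M, ∑ n ∈ Finset.range M, ‖(T ^ n) (v (b + k) - v b)‖ ≤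
      (2 * e b - 2 * e (b + k)) * M := by
    intro b k M
    induction k with
    | zero => simp
    | succ k ih =>
      calc ∑ n ∈ Finset.range M, ‖(T ^ n) (v (b + (k + 1)) - v b)‖
          ≤ ∑ n ∈ Finset.range M, (‖(T ^ n) (v (b + k + 1) - v (b + k))‖ +
            ‖(T ^ n) (v (b + k) - v b)‖) := by
            refine Finset.sum_le_sum fun n _ => ?_
            have : v (b + (k + 1)) - v b = (v (b + k + 1) - v (b + k)) + (v (b + k) - v b) := by
              rw [sub_add_sub_cancel]
              rfl
            rw [this, map_add]
            exact norm_add_le _ _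
        _ ≤ _ := by
            rw [Finset.sum_add_distrib]
            have a1 := h1 (b + k) M
            have a2 := h2 (b + k)
            have a3 : (0 : ℝ) ≤ M := Nat.cast_nonneg M
            have a4 : e (b + (k + 1)) = e (b + k + 1) := rfl
            rw [a4]
            nlinarith
  have hcauchy : CauchySeq v := by
    refine cauchySeq_of_le_geometric (1 / 2) 1 (by norm_num) fun b => ?_
    have := h1 b 1
    simp only [Finset.range_one, Finset.sum_singleton, pow_zero, Nat.cast_one, mul_one,
      one_apply_eq_self] at this
    rw [dist_comm, dist_eq_norm, one_mul]
    exact this.trans (he1 b)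
  obtain ⟨x, hx⟩ := cauchySeq_tendsto_of_complete hcauchy
  have htail : ∀ b M, ∑ n ∈ Finset.range M, ‖(T ^ n) (x - v b)‖ ≤ 2 * e b * M := by
    intro b M
    have hlim : Tendsto (fun k => ∑ n ∈ Finset.range M, ‖(T ^ n) (v (k + b) - v b)‖) atTop
        (𝓝 (∑ n ∈ Finset.range M, ‖(T ^ n) (x - v b)‖)) := by
      refine tendsto_finsetSum _ fun n _ => ?_
      have hk : Tendsto (fun k => v (k + b) - v b) atTop (𝓝 (x - v b)) :=
        ((tendsto_add_atTop_iff_nat b).2 hx).sub_const _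
      exact (((T ^ n).continuous.norm).tendsto _).comp hk
    refine le_of_tendsto' hlim fun k => ?_
    rw [add_comm k b]
    refine (hfin b k M).trans ?_
    have := hepos (b + k)
    gcongr
    linarith
  refine ⟨x, ?_⟩
  intro U hU hUne
  obtain ⟨y, hyU, hyd⟩ := (TopologicalSpace.denseRange_denseSeq X).exists_mem_open hU hUne |>.imp
    (fun k hk => (⟨hk, trivial⟩ : _ ∧ True))
  obtain ⟨r, hr, hball⟩ := Metric.isOpen_iff.1 hU _ hyU
  obtain ⟨j, hj⟩ := exists_pow_lt_of_lt_one (half_pos hr) (by norm_num : (1 / 2 : ℝ) < 1)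
  set b := Nat.pair y j with hb
  have hub : u b = TopologicalSpace.denseSeq X y := by simp [u, hb]
  have hjb : (1 / 2 : ℝ) ^ b < r / 2 :=
    lt_of_le_of_lt (pow_le_pow_of_le_one (by norm_num) (by norm_num) (Nat.right_le_pair y j)) hj
  refine lowerDensity_pos _ (2 * 2 ^ b * e (b + 1)) (by have := hepos (b + 1); positivity) ?_
  filter_upwards [h3 b] with N hN
  have hsub : {n | ‖(T ^ n) (v (b + 1)) - u b‖ < e b} ⊆
      {n | (T ^ n) x ∈ U} ∪ {n | (1 / 2 : ℝ) ^ b ≤ ‖(T ^ n) (x - v (b + 1))‖} := by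
    intro n hn
    simp only [Set.mem_ofPred_eq, Set.mem_union] at hn ⊢
    by_contra! hcon
    apply hcon.1
    apply hball
    rw [Metric.mem_ball, dist_eq_norm, ← hub]
    have e1 : (T ^ n) x - u b = (T ^ n) (x - v (b + 1)) + ((T ^ n) (v (b + 1)) - u b) := by
      rw [map_sub]
      abel
    rw [e1]
    have := norm_add_le ((T ^ n) (x - v (b + 1))) ((T ^ n) (v (b + 1)) - u b)
    linarith [he1 b, hcon.2]
  have c1 : (cnt {n | ‖(T ^ n) (v (b + 1)) - u b‖ < e b} N : ℝ) ≤
      cnt {n | (T ^ n) x ∈ U} N +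
        cnt {n | (1 / 2 : ℝ) ^ b ≤ ‖(T ^ n) (x - v (b + 1))‖} N := by
    exact_mod_cast (cnt_mono hsub N).trans (cnt_union _ _ _)
  have c2 := cnt_markov (fun n => ‖(T ^ n) (x - v (b + 1))‖) (fun n => norm_nonneg _)
    ((1 / 2 : ℝ) ^ b) N
  have c3 := c2.trans (htail (b + 1) N)
  have c4 : (cnt {n | (1 / 2 : ℝ) ^ b ≤ ‖(T ^ n) (x - v (b + 1))‖} N : ℝ) ≤
      2 ^ b * (2 * e (b + 1) * N) := by
    have := mul_le_mul_of_nonneg_left c3 (by positivity : (0 : ℝ) ≤ 2 ^ b)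
    rw [← mul_assoc, ← mul_pow] at this
    norm_num at this
    simpa using this
  linarith

end Op

end FHProof

/-- If `T` is a bounded hypercyclic operator on a complex separable
infinite-dimensional Banach space satisfying assumption (H), then `T` is frequently
hypercyclic. -/
theorem hypercyclic_and_assumptionH_implies_frequentlyHypercyclic
    {X : Type*} [NormedAddCommGroup X] [NormedSpace ℂ X] [CompleteSpace X]
    [TopologicalSpace.SeparableSpace X] (hdim : ¬ FiniteDimensional ℂ X)
    (T : X →L[ℂ] X) (hhc : Hypercyclic T)
    -- assumption (H): a sequence of unit eigenvectors `x n` with unimodular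
    -- eigenvalues `lam n = exp (2 i π (θ n))`, `θ n ∈ (0, 1]`.
    (x : ℕ → X) (lam : ℕ → ℂ) (θ : ℕ → ℝ)
    (heig : ∀ n, T (x n) = lam n • x n)
    (hmod : ∀ n, ‖lam n‖ = 1)
    (hθ : ∀ n, θ n ∈ Set.Ioc (0 : ℝ) 1)
    (hexp : ∀ n, lam n = Complex.exp ((2 * Real.pi * θ n : ℝ) * Complex.I))
    (hnorm : ∀ n, ‖x n‖ = 1)
    -- (1): any finite family of indices carrying distinct eigenvalues yields
    -- ℚ-linearly independent irrational arguments.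
    (h1 : ∀ s : Finset ℕ, Set.InjOn lam ↑s →
      (∀ n ∈ s, Irrational (θ n)) ∧ LinearIndependent ℚ (fun n : s => θ (n : ℕ)))
    -- (2): the eigenvectors span a dense subspace.
    (h2 : Dense (Submodule.span ℂ (Set.range x) : Set X))
    -- (3): for any finite set `F` of unimodular eigenvalues of `T`, the closure of
    -- `{x n : n ≥ 1}` equals the closure of `{x n : lam n ∉ F}`.
    (h3 : ∀ F : Set ℂ, F.Finite →
      F ⊆ {c : ℂ | ‖c‖ = 1 ∧ ∃ v : X, v ≠ 0 ∧ T v = c • v} →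
      closure (Set.range x) = closure (x '' {k : ℕ | lam k ∉ F})) :
    FrequentlyHypercyclic T := by
  apply FHProof.construct
  have hS : ∀ i, ∀ δ > 0, ∀ N : ℕ, ∃ S : Finset ℕ, S.card = N ∧ Set.InjOn lam S ∧
      ∀ k ∈ S, ‖x k - x i‖ < δ := by
    intro i δ hδ N
    induction N with
    | zero => exact ⟨∅, by simp⟩
    | succ N ih =>
      obtain ⟨S, hcard, hinj, hcl⟩ := ih
      have hc := h3 (lam '' S) (S.finite_toSet.image _) (by
        rintro _ ⟨k, -, rfl⟩
        refine ⟨hmod k, x k, ?_, heig k⟩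
        rw [← norm_ne_zero_iff, hnorm]
        exact one_ne_zero)
      have hi : x i ∈ closure (x '' {k : ℕ | lam k ∉ lam '' S}) := by
        rw [← hc]
        exact subset_closure ⟨i, rfl⟩
      obtain ⟨_, ⟨k, hk, rfl⟩, hd⟩ := Metric.mem_closure_iff.1 hi δ hδ
      have hkS : k ∉ S := fun h => hk ⟨k, h, rfl⟩
      refine ⟨insert k S, by rw [Finset.card_insert_of_notMem hkS, hcard], ?_, ?_⟩
      · rw [Finset.coe_insert, Set.injOn_insert (by simpa using hkS)]
        exact ⟨hinj, hk⟩
      · intro l hl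
        rcases Finset.mem_insert.1 hl with rfl | hl
        · rwa [dist_comm, dist_eq_norm] at hd
        · exact hcl l hl
  have hspan : ∀ w ∈ Submodule.span ℂ (Set.range x), FHProof.Good T w := by
    intro w hw
    induction hw using Submodule.closure_induction with
    | zero => exact FHProof.Good.zero T
    | add y z _ _ hy hz => exact hy.add hz
    | smul_mem a y hy =>
      obtain ⟨i, rfl⟩ := hy
      exact FHProof.Good.eig x lam heig hmod hnorm i (hS i) a
  intro w
  exact FHProof.Good.closed (closure_mono hspan (h2 w))
end

section
/- Let X be a complex separable infinite-dimensional Banach space and let T be a bounded linear operator on X. Suppose there exists a sequence (u_i)_{i≥1} of vectors of X such that: (a) for each i ≥ 1, u_i is an eigenvector of T associated to an eigenvalue λ_i with |λ_i| = 1, and the λ_i are pairwise distinct; (b) the linear span of {u_i : i ≥ 1} is dense in X; (c) for every i ≥ 1 and every ε > 0 there exists n ≠ i with ‖u_n − u_i‖ < ε. Then T has a perfectly spanning set of eigenvectors associated to unimodular eigenvalues, and hence T is frequently hypercyclic. -/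
open MeasureTheory Filter Topology

/-- Almost-return times of a finite torus rotation are syndetic. -/
lemma fhc_syndetic (lam : ℕ → ℂ) (h : ∀ i, ‖lam i‖ = 1) (M : ℕ) (η : ℝ) (hη : 0 < η) :
    ∃ L : ℕ, ∀ a, ∃ m, a ≤ m ∧ m ≤ a + L ∧ ∀ i < M, ‖lam i ^ m - 1‖ < η := by
  let f : ℕ → (Fin M → ℂ) := fun n i => lam i ^ n
  have hb : TotallyBounded (Set.range f) := by
    apply (isCompact_closedBall (0 : Fin M → ℂ) 1).totallyBounded.subset
    rintro _ ⟨n, rfl⟩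
    rw [mem_closedBall_zero_iff, pi_norm_le_iff_of_nonneg zero_le_one]
    intro i
    simp [f, h]
  obtain ⟨t, hts, htf, htc⟩ := (Metric.totallyBounded_iff.1 hb) |> fun H =>
    Metric.finite_approx_of_totallyBounded hb η hη
  obtain ⟨s, hs⟩ : ∃ s : Finset ℕ, ∀ y ∈ t, ∃ n ∈ s, f n = y := by
    have : ∀ y ∈ t, ∃ n, f n = y := fun y hy => hts hy
    choose! g hg using this
    refine ⟨htf.toFinset.image g, fun y hy => ⟨g y, ?_, hg y hy⟩⟩
    exact Finset.mem_image_of_mem _ (htf.mem_toFinset.2 hy)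
  refine ⟨s.sup id, fun a => ?_⟩
  have := htc (Set.mem_range_self (a + s.sup id))
  simp only [Set.mem_iUnion] at this
  obtain ⟨y, hy, hay⟩ := this
  obtain ⟨n, hn, rfl⟩ := hs y hy
  have hle : n ≤ s.sup id := Finset.le_sup (f := id) hn
  refine ⟨a + s.sup id - n, by omega, by omega, fun i hi => ?_⟩
  rw [Metric.mem_ball, dist_pi_lt_iff hη] at hay
  have h1 := hay ⟨i, hi⟩
  simp only [f, dist_eq_norm] at h1
  have h2 : lam i ^ (a + s.sup id) = lam i ^ (a + s.sup id - n) * lam i ^ n := by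
    rw [← pow_add]; congr 1; omega
  rw [h2] at h1
  have h3 : lam i ^ (a + s.sup id - n) * lam i ^ n - lam i ^ n
    = (lam i ^ (a + s.sup id - n) - 1) * lam i ^ n := by ring
  rw [h3, norm_mul, norm_pow, h, one_pow, mul_one] at h1
  exact h1

/-- Second moment bound. -/
lemma fhc_moment (lam : ℕ → ℂ) (h : ∀ i, ‖lam i‖ = 1) (hinj : Function.Injective lam)
    (s : Finset ℕ) : ∃ C : ℝ, ∀ N : ℕ,
    ∑ n ∈ Finset.range N, ‖∑ j ∈ s, lam j ^ n‖ ^ 2 ≤ s.card * N + C := by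
  let c : ℕ → ℕ → ℝ := fun j l => if j = l then 0 else 2 / ‖lam j * (starRingEnd ℂ) (lam l) - 1‖
  refine ⟨∑ j ∈ s, ∑ l ∈ s, c j l, fun N => ?_⟩
  have e : ((∑ n ∈ Finset.range N, ‖∑ j ∈ s, lam j ^ n‖ ^ 2 : ℝ) : ℂ)
      = ∑ j ∈ s, ∑ l ∈ s, ∑ n ∈ Finset.range N, (lam j * (starRingEnd ℂ) (lam l)) ^ n := by
    push_cast
    have : ∀ n, (‖∑ j ∈ s, lam j ^ n‖ : ℂ) ^ 2
        = ∑ j ∈ s, ∑ l ∈ s, (lam j * (starRingEnd ℂ) (lam l)) ^ n := by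
      intro n
      rw [← Complex.mul_conj', map_sum, Finset.sum_mul_sum]
      simp [mul_pow]
    simp_rw [this]
    rw [Finset.sum_comm]
    refine Finset.sum_congr rfl fun j _ => ?_
    rw [Finset.sum_comm]
  have hnn : 0 ≤ ∑ n ∈ Finset.range N, ‖∑ j ∈ s, lam j ^ n‖ ^ 2 := by positivity
  have e2 : ∑ n ∈ Finset.range N, ‖∑ j ∈ s, lam j ^ n‖ ^ 2 =
      ‖((∑ n ∈ Finset.range N, ‖∑ j ∈ s, lam j ^ n‖ ^ 2 : ℝ) : ℂ)‖ := by
    rw [Complex.norm_real, Real.norm_of_nonneg hnn]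
  rw [e2, e]
  have hz : ∀ l, lam l * (starRingEnd ℂ) (lam l) = 1 := by
    intro l; rw [Complex.mul_conj', h]; simp
  have key : ∀ j l, ‖∑ n ∈ Finset.range N, (lam j * (starRingEnd ℂ) (lam l)) ^ n‖
      ≤ (if j = l then (N : ℝ) else 0) + c j l := by
    intro j l
    by_cases hjl : j = l
    · subst hjl
      simp [c, hz]
    · have hne : lam j * (starRingEnd ℂ) (lam l) ≠ 1 := by
        intro h1
        apply hjl; apply hinj
        have := congrArg (· * lam l) h1
        simp only [one_mul] at this
        rw [mul_assoc, mul_comm _ (lam l), hz, mul_one] at this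
        exact this
      rw [geom_sum_eq hne, norm_div]
      simp only [hjl, if_false, c, zero_add]
      gcongr
      calc _ ≤ ‖(lam j * (starRingEnd ℂ) (lam l)) ^ N‖ + ‖(1:ℂ)‖ := norm_sub_le _ _
        _ = 2 := by simp [h]; norm_num
  calc _ ≤ ∑ j ∈ s, ∑ l ∈ s, ((if j = l then (N : ℝ) else 0) + c j l) := by
        refine (norm_sum_le _ _).trans (Finset.sum_le_sum fun j _ => ?_)
        exact (norm_sum_le _ _).trans (Finset.sum_le_sum fun l _ => key j l)
    _ = _ := by
        simp only [Finset.sum_add_distrib]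
        congr 1
        simp [Finset.sum_ite_eq]

open Classical in
/-- A covering lemma: a set of small density has a good starting point in each syndetic set. -/
lemma fhc_maximal (B S : Set ℕ) (L : ℕ) (ε α : ℝ) (hα : 0 < α) (hε : ε * (L + 1) < α)
    (hS : ∀ a, ∃ m, a ≤ m ∧ m ≤ a + L ∧ m ∈ S)
    (hB : ∀ᶠ N : ℕ in atTop, (((Finset.range N).filter (· ∈ B)).card : ℝ) ≤ ε * N) :
    ∃ m ∈ S, ∀ N : ℕ, (((Finset.range N).filter (fun n => n + m ∈ B)).card : ℝ) ≤ α * N := by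
  by_contra hcon
  push Not at hcon
  have claim : ∀ k : ℕ, ∃ a, k ≤ a ∧
      α * a ≤ (((Finset.range a).filter (· ∈ B)).card : ℝ) * (L + 1) := by
    intro k
    induction k with
    | zero => exact ⟨0, le_rfl, by simp⟩
    | succ k ih =>
      obtain ⟨a, hka, ha⟩ := ih
      obtain ⟨m, ham, hmL, hmS⟩ := hS a
      obtain ⟨N, hN⟩ := hcon m hmS
      have hN1 : 1 ≤ N := by
        by_contra h0
        have : N = 0 := by omega
        subst this
        simp at hN
      refine ⟨m + N, by omega, ?_⟩
      have hcard : ((Finset.range a).filter (· ∈ B)).card +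
          ((Finset.range N).filter (fun n => n + m ∈ B)).card
          ≤ ((Finset.range (m + N)).filter (· ∈ B)).card := by
        rw [← Finset.card_map (addRightEmbedding m) (s := (Finset.range N).filter _),
          ← Finset.card_union_of_disjoint]
        · apply Finset.card_le_card
          intro n hn
          simp only [Finset.mem_union, Finset.mem_filter, Finset.mem_range, Finset.mem_map,
            addRightEmbedding_apply] at hn ⊢
          rcases hn with ⟨h1, h2⟩ | ⟨x, ⟨h1, h2⟩, rfl⟩
          · exact ⟨by omega, h2⟩
          · exact ⟨by omega, h2⟩
        · rw [Finset.disjoint_left]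
          intro n hn hn'
          simp only [Finset.mem_filter, Finset.mem_range, Finset.mem_map,
            addRightEmbedding_apply] at hn hn'
          obtain ⟨x, _, rfl⟩ := hn'
          omega
      have hcard' : (((Finset.range a).filter (· ∈ B)).card : ℝ) +
          (((Finset.range N).filter (fun n => n + m ∈ B)).card : ℝ)
          ≤ (((Finset.range (m + N)).filter (· ∈ B)).card : ℝ) := by exact_mod_cast hcard
      have h1 : ((m + N : ℕ) : ℝ) ≤ a + (L + 1) * N := by
        have : m + N ≤ a + (L + 1) * N := by nlinarith
        exact_mod_cast this
      calc α * ((m + N : ℕ) : ℝ) ≤ α * (a + (L + 1) * N) := by gcongr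
        _ = α * a + α * N * (L + 1) := by ring
        _ ≤ (((Finset.range a).filter (· ∈ B)).card : ℝ) * (L + 1) +
          (((Finset.range N).filter (fun n => n + m ∈ B)).card : ℝ) * (L + 1) := by gcongr
        _ ≤ _ := by rw [← add_mul]; gcongr
  obtain ⟨K, hK⟩ := eventually_atTop.1 hB
  obtain ⟨a, hKa, ha⟩ := claim (K + 1)
  have h1 := hK a (by omega)
  have ha0 : (0 : ℝ) < a := by exact_mod_cast (by omega : 0 < a)
  have h2 : α * a ≤ ε * a * (L + 1) := ha.trans (by gcongr)
  nlinarith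

open Classical in
/-- Blocks: a vector of the span is approximated by vectors whose orbit is mostly small. -/
def FhcBlock {X : Type*} [NormedAddCommGroup X] [NormedSpace ℂ X] (T : X →L[ℂ] X)
    (V : Submodule ℂ X) (w : X) : Prop :=
  ∀ ε > (0 : ℝ), ∃ b ∈ V, ‖b - w‖ < ε ∧ ∀ᶠ N : ℕ in atTop,
    (((Finset.range N).filter (fun n => ε ≤ ‖(T ^ n) b‖)).card : ℝ) ≤ ε * N

section
variable {X : Type*} [NormedAddCommGroup X] [NormedSpace ℂ X]

lemma fhcBlock_zero (T : X →L[ℂ] X) (V : Submodule ℂ X) : FhcBlock T V 0 := by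
  intro ε hε
  refine ⟨0, V.zero_mem, by simpa using hε, Eventually.of_forall fun N => ?_⟩
  have : (Finset.range N).filter (fun n => ε ≤ ‖(T ^ n) (0 : X)‖) = ∅ := by
    refine Finset.filter_eq_empty_iff.2 fun n _ => ?_
    simpa using hε
  rw [this]; simp; positivity

lemma fhcBlock_add {T : X →L[ℂ] X} {V : Submodule ℂ X} {w w' : X}
    (h : FhcBlock T V w) (h' : FhcBlock T V w') : FhcBlock T V (w + w') := by
  classical
  intro ε hε
  obtain ⟨b, hb, h1, h2⟩ := h (ε / 2) (by positivity)
  obtain ⟨b', hb', h1', h2'⟩ := h' (ε / 2) (by positivity)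
  refine ⟨b + b', V.add_mem hb hb', ?_, ?_⟩
  · have : b + b' - (w + w') = (b - w) + (b' - w') := by abel
    rw [this]
    linarith [norm_add_le (b - w) (b' - w')]
  · filter_upwards [h2, h2'] with N h3 h3'
    have : (Finset.range N).filter (fun n => ε ≤ ‖(T ^ n) (b + b')‖) ⊆
      (Finset.range N).filter (fun n => ε / 2 ≤ ‖(T ^ n) b‖) ∪
      (Finset.range N).filter (fun n => ε / 2 ≤ ‖(T ^ n) b'‖) := by
      intro n hn
      simp only [Finset.mem_union, Finset.mem_filter] at hn ⊢
      by_contra hc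
      push Not at hc
      have e1 := hc.1 hn.1
      have e2 := hc.2 hn.1
      have e3 := hn.2
      rw [map_add] at e3
      linarith [norm_add_le ((T ^ n) b) ((T ^ n) b')]
    have hc := (Finset.card_le_card this).trans (Finset.card_union_le _ _)
    have hc' : (((Finset.range N).filter (fun n => ε ≤ ‖(T ^ n) (b + b')‖)).card : ℝ) ≤
      (((Finset.range N).filter (fun n => ε / 2 ≤ ‖(T ^ n) b‖)).card : ℝ) +
      (((Finset.range N).filter (fun n => ε / 2 ≤ ‖(T ^ n) b'‖)).card : ℝ) := by exact_mod_cast hc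
    refine (le_trans (le_of_eq ?_) hc').trans ?_
    · congr!
    · have := add_le_add h3 h3'
      refine (le_trans (le_of_eq ?_) this).trans (le_of_eq (by ring))
      congr!

lemma fhc_pow_eig (T : X →L[ℂ] X) {v : X} {c : ℂ} (h : T v = c • v) (n : ℕ) :
    (T ^ n) v = c ^ n • v := by
  induction n with
  | zero => simp
  | succ n ih => rw [pow_succ, mul_apply_eq_comp, h, map_smul, ih, smul_smul, pow_succ']

lemma fhc_infinite (T : X →L[ℂ] X) (u : ℕ → X) (lam : ℕ → ℂ)
    (ha1 : ∀ i, u i ≠ 0) (ha2 : ∀ i, T (u i) = lam i • u i)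
    (ha4 : Function.Injective lam)
    (hc : ∀ i, ∀ ε > (0 : ℝ), ∃ n, n ≠ i ∧ ‖u n - u i‖ < ε) (i : ℕ) (δ : ℝ) (hδ : 0 < δ) :
    {n | ‖u n - u i‖ < δ}.Infinite := by
  have hinj : Function.Injective u := by
    intro a b hab
    apply ha4
    have h1 := ha2 a
    rw [hab, ha2 b] at h1
    exact (smul_left_injective ℂ (ha1 b) h1).symm
  intro hfin
  have hf2 : ({n | ‖u n - u i‖ < δ} \ {i}).Finite := hfin.subset Set.sdiff_subset
  obtain ⟨r, hr, hr2⟩ : ∃ r > 0, ∀ n ∈ {n | ‖u n - u i‖ < δ} \ {i}, r ≤ ‖u n - u i‖ := by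
    have : ∀ s : Finset ℕ, (∀ n ∈ s, n ≠ i) → ∃ r > 0, ∀ n ∈ s, r ≤ ‖u n - u i‖ := by
      intro s
      induction s using Finset.induction_on with
      | empty => intro _; exact ⟨1, one_pos, by simp⟩
      | insert a s has ih =>
        intro h
        obtain ⟨r, hr, h2⟩ := ih (fun n hn => h n (Finset.mem_insert_of_mem hn))
        refine ⟨min r ‖u a - u i‖, lt_min hr ?_, ?_⟩
        · rw [norm_pos_iff, sub_ne_zero]
          exact fun e => h a (Finset.mem_insert_self _ _) (hinj e)
        · intro n hn
          rcases Finset.mem_insert.1 hn with rfl | hn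
          · exact min_le_right _ _
          · exact (min_le_left _ _).trans (h2 n hn)
    obtain ⟨r, hr, h⟩ := this hf2.toFinset (by simp)
    exact ⟨r, hr, fun n hn => h n (hf2.mem_toFinset.2 hn)⟩
  obtain ⟨n, hn, hn2⟩ := hc i (min r δ) (lt_min hr hδ)
  have := hr2 n ⟨lt_of_lt_of_le hn2 (min_le_right _ _), hn⟩
  linarith [lt_of_lt_of_le hn2 (min_le_left _ _)]

lemma fhcBlock_eig (T : X →L[ℂ] X) (u : ℕ → X) (lam : ℕ → ℂ)
    (ha1 : ∀ i, u i ≠ 0) (ha2 : ∀ i, T (u i) = lam i • u i)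
    (ha3 : ∀ i, ‖lam i‖ = 1) (ha4 : Function.Injective lam)
    (hc : ∀ i, ∀ ε > (0 : ℝ), ∃ n, n ≠ i ∧ ‖u n - u i‖ < ε) (i : ℕ) (c : ℂ) :
    FhcBlock T (Submodule.span ℂ (Set.range u)) (c • u i) := by
  classical
  intro ε hε
  set K : ℝ := ‖c‖ * ‖u i‖ + 1 with hK
  have hK0 : 0 < K := by positivity
  set δ : ℝ := ε / (2 * (‖c‖ + 1)) with hδ
  have hδ0 : 0 < δ := by positivity
  have hcδ : ‖c‖ * δ < ε / 2 := by
    rw [hδ, ← mul_div_assoc, div_lt_div_iff₀ (by positivity) (by positivity)]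
    nlinarith [norm_nonneg c]
  -- threshold
  set t : ℝ := ε / (2 * K) with ht
  have ht0 : 0 < t := by positivity
  obtain ⟨J, hJ⟩ := exists_nat_gt (2 / (t ^ 2 * ε))
  have hJ0 : (0 : ℝ) < J := lt_trans (by positivity) hJ
  obtain ⟨s, hs, hsJ⟩ := (fhc_infinite T u lam ha1 ha2 ha4 hc i δ hδ0).exists_subset_card_eq J
  obtain ⟨C, hC⟩ := fhc_moment lam ha3 ha4 s
  have hJc : (J : ℂ) ≠ 0 := by
    have : J ≠ 0 := by rintro rfl; simp at hJ0
    exact_mod_cast this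
  set b : X := ∑ j ∈ s, (c / J) • u j with hb
  have hn1 : ‖c / (J : ℂ)‖ = ‖c‖ / J := by simp
  have hsmall : ∀ z : ℕ → ℂ, (∀ j, ‖z j‖ = 1) →
      ‖∑ j ∈ s, (c / J * z j) • u j - (c / J * ∑ j ∈ s, z j) • u i‖ ≤ ‖c‖ * δ := by
    intro z hz
    rw [Finset.mul_sum, Finset.sum_smul, ← Finset.sum_sub_distrib]
    calc _ ≤ ∑ j ∈ s, ‖(c / J * z j) • u j - (c / J * z j) • u i‖ := norm_sum_le _ _
      _ ≤ ∑ j ∈ s, ‖c‖ / J * δ := by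
        refine Finset.sum_le_sum fun j hj => ?_
        rw [← smul_sub, norm_smul, norm_mul, hz, mul_one, hn1]
        have : ‖u j - u i‖ < δ := hs hj
        gcongr
      _ = ‖c‖ * δ := by rw [Finset.sum_const, hsJ, nsmul_eq_mul]; field_simp
  refine ⟨b, ?_, ?_, ?_⟩
  · exact Submodule.sum_mem _ fun j _ => Submodule.smul_mem _ _ (Submodule.subset_span ⟨j, rfl⟩)
  · have := hsmall (fun _ => 1) (by simp)
    simp only [mul_one, Finset.sum_const, hsJ, nsmul_eq_mul] at this
    rw [div_mul_cancel₀ _ hJc] at this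
    linarith
  · have hTn : ∀ n, ε ≤ ‖(T ^ n) b‖ → (t * J) ^ 2 ≤ ‖∑ j ∈ s, lam j ^ n‖ ^ 2 := by
      intro n hn
      have e1 : (T ^ n) b = ∑ j ∈ s, (c / J * lam j ^ n) • u j := by
        rw [hb, map_sum]
        refine Finset.sum_congr rfl fun j _ => ?_
        rw [map_smul, fhc_pow_eig T (ha2 j), smul_smul]
      have e2 := hsmall (fun j => lam j ^ n) (by simp [ha3])
      rw [← e1] at e2
      have e3 : ε / 2 ≤ ‖(c / J * ∑ j ∈ s, lam j ^ n) • u i‖ := by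
        have := norm_le_norm_sub_add ((T ^ n) b) ((c / J * ∑ j ∈ s, lam j ^ n) • u i)
        linarith
      rw [norm_smul, norm_mul, hn1] at e3
      have e4 : ε / 2 ≤ K / J * ‖∑ j ∈ s, lam j ^ n‖ := by
        refine e3.trans ?_
        have : ‖c‖ / J * ‖∑ j ∈ s, lam j ^ n‖ * ‖u i‖
          = (‖c‖ * ‖u i‖) / J * ‖∑ j ∈ s, lam j ^ n‖ := by ring
        rw [this]
        gcongr
        linarith
      have e5 : t * J ≤ ‖∑ j ∈ s, lam j ^ n‖ := by
        rw [ht]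
        rw [div_mul_eq_mul_div, div_le_iff₀ (by positivity)] at e4
        rw [div_mul_eq_mul_div, div_le_iff₀ (by positivity)]
        rw [mul_comm K, div_mul_eq_mul_div, le_div_iff₀ hJ0] at e4
        linarith
      gcongr
    obtain ⟨N0, hN0⟩ := exists_nat_gt (C / J)
    filter_upwards [eventually_ge_atTop N0] with N hN
    have hcheb : (((Finset.range N).filter (fun n => ε ≤ ‖(T ^ n) b‖)).card : ℝ) * (t * J) ^ 2
        ≤ J * N + C := by
      rw [← hsJ]
      refine le_trans ?_ (hC N)
      rw [← nsmul_eq_mul, ← Finset.sum_const]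
      refine le_trans (Finset.sum_le_sum (g := fun n => ‖∑ j ∈ s, lam j ^ n‖ ^ 2) ?_) ?_
      · intro n hn
        rw [hsJ]
        exact hTn n (Finset.mem_filter.1 hn).2
      · exact Finset.sum_le_sum_of_subset_of_nonneg (Finset.filter_subset _ _)
          (fun _ _ _ => by positivity)
    have hCN : C ≤ J * N := by
      have h1 : C / J < N := hN0.trans_le (by exact_mod_cast hN)
      rw [div_lt_iff₀ hJ0] at h1
      linarith
    have hJ2 : 2 < J * (t ^ 2 * ε) := by
      rwa [div_lt_iff₀ (by positivity)] at hJ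
    have hfin : (((Finset.range N).filter (fun n => ε ≤ ‖(T ^ n) b‖)).card : ℝ) * (t * J) ^ 2
        ≤ (ε * N) * (t * J) ^ 2 := by
      have : (ε * N) * (t * J) ^ 2 = (J * (t ^ 2 * ε)) * (J * N) := by ring
      rw [this]
      have : (0 : ℝ) ≤ J * N := by positivity
      nlinarith
    have := le_of_mul_le_mul_right hfin (by positivity)
    convert this

end
section
variable {X : Type*} [NormedAddCommGroup X] [NormedSpace ℂ X]

lemma fhc_almost_periodic (T : X →L[ℂ] X) (u : ℕ → X) (lam : ℕ → ℂ)
    (ha2 : ∀ i, T (u i) = lam i • u i) (h : X) (hh : h ∈ Submodule.span ℂ (Set.range u)) :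
    ∀ ε > (0 : ℝ), ∃ M : ℕ, ∃ η > (0 : ℝ), ∀ n : ℕ, (∀ i < M, ‖lam i ^ n - 1‖ < η) →
      ‖(T ^ n) h - h‖ < ε := by
  induction hh using Submodule.span_induction with
  | mem x hx =>
    obtain ⟨i, rfl⟩ := hx
    intro ε hε
    refine ⟨i + 1, ε / (‖u i‖ + 1), by positivity, fun n hn => ?_⟩
    have h1 := hn i (by omega)
    rw [fhc_pow_eig T (ha2 i)]
    have : lam i ^ n • u i - u i = (lam i ^ n - 1) • u i := by rw [sub_smul, one_smul]
    rw [this, norm_smul]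
    rw [lt_div_iff₀ (by positivity)] at h1
    nlinarith [norm_nonneg (lam i ^ n - 1)]
  | zero => intro ε hε; exact ⟨0, 1, one_pos, fun n _ => by simpa using hε⟩
  | add x y _ _ hx hy =>
    intro ε hε
    obtain ⟨M, η, hη, h1⟩ := hx (ε / 2) (by positivity)
    obtain ⟨M', η', hη', h1'⟩ := hy (ε / 2) (by positivity)
    refine ⟨max M M', min η η', lt_min hη hη', fun n hn => ?_⟩
    have e1 := h1 n fun i hi => (hn i (lt_max_of_lt_left hi)).trans_le (min_le_left _ _)
    have e2 := h1' n fun i hi => (hn i (lt_max_of_lt_right hi)).trans_le (min_le_right _ _)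
    have : (T ^ n) (x + y) - (x + y) = ((T ^ n) x - x) + ((T ^ n) y - y) := by
      rw [map_add]; abel
    rw [this]
    linarith [norm_add_le ((T ^ n) x - x) ((T ^ n) y - y)]
  | smul a x _ hx =>
    intro ε hε
    obtain ⟨M, η, hη, h1⟩ := hx (ε / (‖a‖ + 1)) (by positivity)
    refine ⟨M, η, hη, fun n hn => ?_⟩
    have e1 := h1 n hn
    rw [map_smul, ← smul_sub, norm_smul]
    rw [lt_div_iff₀ (by positivity)] at e1
    nlinarith [norm_nonneg ((T ^ n) x - x)]

open Classical in
lemma fhc_step (T : X →L[ℂ] X) (u : ℕ → X) (lam : ℕ → ℂ)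
    (ha1 : ∀ i, u i ≠ 0) (ha2 : ∀ i, T (u i) = lam i • u i)
    (ha3 : ∀ i, ‖lam i‖ = 1) (ha4 : Function.Injective lam)
    (hb : Dense (Submodule.span ℂ (Set.range u) : Set X))
    (hc : ∀ i, ∀ ε > (0 : ℝ), ∃ n, n ≠ i ∧ ‖u n - u i‖ < ε)
    (h : X) (hh : h ∈ Submodule.span ℂ (Set.range u)) (δ : ℝ) (hδ : 0 < δ)
    (y : X) (ε : ℝ) (hε : 0 < ε) :
    ∃ b ∈ Submodule.span ℂ (Set.range u), ∃ L : ℕ,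
      (∀ N : ℕ, (((Finset.range N).filter (fun n => δ ≤ ‖(T ^ n) b‖)).card : ℝ) ≤ δ * N) ∧
      ∀ a, ∃ n, a ≤ n ∧ n ≤ a + L ∧ ‖(T ^ n) (h + b) - y‖ < ε := by
  obtain ⟨M, η, hη, hM⟩ := fhc_almost_periodic T u lam ha2 h hh (ε / 4) (by positivity)
  obtain ⟨L, hL⟩ := fhc_syndetic lam ha3 M (η / 2) (by positivity)
  obtain ⟨w, hw, hwy⟩ : ∃ w ∈ Submodule.span ℂ (Set.range u), ‖w - (y - h)‖ < ε / 4 := by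
    obtain ⟨w, hw, h1⟩ := hb.exists_dist_lt (y - h) (show 0 < ε / 4 by positivity)
    exact ⟨w, hw, by rwa [dist_comm, dist_eq_norm] at h1⟩
  have hblock : FhcBlock T (Submodule.span ℂ (Set.range u)) w := by
    obtain ⟨f, hf⟩ := (Finsupp.mem_span_range_iff_exists_finsupp).1 hw
    rw [← hf, Finsupp.sum]
    refine Finset.sum_induction _ (FhcBlock T _) (fun _ _ => fhcBlock_add) (fhcBlock_zero _ _) ?_
    intro i _
    exact fhcBlock_eig T u lam ha1 ha2 ha3 ha4 hc i _
  set e : ℝ := min (ε / 4) (min δ (δ / (2 * (L + 1)))) with he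
  have he0 : 0 < e := by positivity
  obtain ⟨b, hbV, hbw, hbN⟩ := hblock e he0
  have heL : e * (L + 1) < δ := by
    have : e ≤ δ / (2 * (L + 1)) := (min_le_right _ _).trans (min_le_right _ _)
    have h2 : e * (L + 1) ≤ δ / (2 * (L + 1)) * (L + 1) := by gcongr
    have h3 : δ / (2 * ((L : ℝ) + 1)) * (L + 1) = δ / 2 := by field_simp
    linarith
  have heδ : e ≤ δ := (min_le_right _ _).trans (min_le_left _ _)
  have heε : e ≤ ε / 4 := min_le_left _ _
  obtain ⟨m, hmS, hm⟩ := fhc_maximal {n | δ ≤ ‖(T ^ n) b‖}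
    {m | ∀ i < M, ‖lam i ^ m - 1‖ < η / 2} L e δ hδ heL hL (by
      filter_upwards [hbN] with N hN
      refine le_trans ?_ hN
      norm_cast
      apply Finset.card_le_card
      intro n hn
      simp only [Finset.mem_filter] at hn ⊢
      exact ⟨hn.1, heδ.trans hn.2⟩)
  obtain ⟨M', η', hη', hM'⟩ := fhc_almost_periodic T u lam ha2 b hbV (ε / 4) (by positivity)
  obtain ⟨L', hL'⟩ := fhc_syndetic lam ha3 (max M M') (min (η / 2) η') (by positivity)
  refine ⟨(T ^ m) b, ?_, L', ?_, ?_⟩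
  · have hinv : ∀ x ∈ Submodule.span ℂ (Set.range u),
        (T ^ m) x ∈ Submodule.span ℂ (Set.range u) := by
      intro x hx
      induction hx using Submodule.span_induction with
      | mem x hx =>
        obtain ⟨i, rfl⟩ := hx
        rw [fhc_pow_eig T (ha2 i)]
        exact Submodule.smul_mem _ _ (Submodule.subset_span ⟨i, rfl⟩)
      | zero => simp
      | add x y _ _ hx hy => rw [map_add]; exact Submodule.add_mem _ hx hy
      | smul a x _ hx => rw [map_smul]; exact Submodule.smul_mem _ _ hx
    exact hinv b hbV
  · intro N
    have := hm N
    simpa only [Set.mem_ofPred_eq, pow_add, mul_apply_eq_comp] using this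
  · intro a
    obtain ⟨p, hp1, hp2, hp3⟩ := hL' (a + m)
    refine ⟨p - m, by omega, by omega, ?_⟩
    have e1 : (T ^ (p - m)) ((T ^ m) b) = (T ^ p) b := by
      rw [← mul_apply_eq_comp, ← pow_add]; congr 2; omega
    rw [map_add, e1]
    have e2 : ‖(T ^ (p - m)) h - h‖ < ε / 4 := by
      apply hM
      intro i hi
      have q1 := hp3 i (lt_max_of_lt_left hi)
      have q2 := hmS i hi
      have q3 : lam i ^ p = lam i ^ (p - m) * lam i ^ m := by
        rw [← pow_add]; congr 1; omega
      have q4 : ‖lam i ^ (p - m) - 1‖ = ‖lam i ^ p - lam i ^ m‖ := by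
        have : lam i ^ p - lam i ^ m = (lam i ^ (p - m) - 1) * lam i ^ m := by rw [q3]; ring
        rw [this, norm_mul, norm_pow, ha3, one_pow, mul_one]
      rw [q4]
      have q5 : lam i ^ p - lam i ^ m = (lam i ^ p - 1) - (lam i ^ m - 1) := by ring
      rw [q5]
      have := norm_sub_le (lam i ^ p - 1) (lam i ^ m - 1)
      have := min_le_left (η / 2) η'
      linarith
    have e3 : ‖(T ^ p) b - b‖ < ε / 4 := by
      apply hM'
      intro i hi
      exact (hp3 i (lt_max_of_lt_right hi)).trans_le (min_le_right _ _)
    have e4 : (T ^ (p - m)) h + (T ^ p) b - y = ((T ^ (p - m)) h - h) + ((T ^ p) b - b)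
      + (b - w) + (w - (y - h)) := by abel
    rw [e4]
    have t1 := norm_add_le (((T ^ (p - m)) h - h) + ((T ^ p) b - b) + (b - w)) (w - (y - h))
    have t2 := norm_add_le (((T ^ (p - m)) h - h) + ((T ^ p) b - b)) (b - w)
    have t3 := norm_add_le ((T ^ (p - m)) h - h) ((T ^ p) b - b)
    linarith

open Classical in
/-- A set meeting every window of length `L + 1` has many points. -/
lemma fhc_count (S : Set ℕ) (L : ℕ) (hS : ∀ a, ∃ n, a ≤ n ∧ n ≤ a + L ∧ n ∈ S) (N : ℕ) :
    (N : ℝ) / (L + 1) - 1 ≤ (((Finset.range N).filter (· ∈ S)).card : ℝ) := by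
  have claim : ∀ k : ℕ, k ≤ ((Finset.range (k * (L + 1))).filter (· ∈ S)).card := by
    intro k
    induction k with
    | zero => simp
    | succ k ih =>
      obtain ⟨n, h1, h2, h3⟩ := hS (k * (L + 1))
      have hsub : insert n ((Finset.range (k * (L + 1))).filter (· ∈ S)) ⊆
          ((Finset.range ((k + 1) * (L + 1))).filter (· ∈ S)) := by
        intro x hx
        simp only [Finset.mem_insert, Finset.mem_filter, Finset.mem_range] at hx ⊢
        rw [add_mul, one_mul]
        rcases hx with rfl | ⟨hx, hx'⟩
        · exact ⟨by omega, h3⟩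
        · exact ⟨by omega, hx'⟩
      have hn : n ∉ ((Finset.range (k * (L + 1))).filter (· ∈ S)) := by
        simp only [Finset.mem_filter, Finset.mem_range]; omega
      have := Finset.card_le_card hsub
      rw [Finset.card_insert_of_notMem hn] at this
      omega
  have h1 := claim (N / (L + 1))
  have h2 : ((Finset.range (N / (L + 1) * (L + 1))).filter (· ∈ S)).card ≤
      ((Finset.range N).filter (· ∈ S)).card := by
    apply Finset.card_le_card
    apply Finset.filter_subset_filter
    exact Finset.range_subset_range.2 (Nat.div_mul_le_self _ _)
  have h3 : ((N / (L + 1) : ℕ) : ℝ) ≤ (((Finset.range N).filter (· ∈ S)).card : ℝ) := by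
    exact_mod_cast h1.trans h2
  have h4 : (N : ℝ) / (L + 1) < ((N / (L + 1) : ℕ) : ℝ) + 1 := by
    rw [div_lt_iff₀ (by positivity)]
    have := Nat.lt_div_mul_add (a := N) (b := L + 1) (by omega)
    have h5 : N < (N / (L + 1) + 1) * (L + 1) := by rw [add_mul, one_mul]; exact this
    exact_mod_cast h5
  linarith

open Classical in
theorem fhc_main [CompleteSpace X]
    [TopologicalSpace.SeparableSpace X]
    (T : X →L[ℂ] X) (u : ℕ → X) (lam : ℕ → ℂ)
    (ha1 : ∀ i, u i ≠ 0) (ha2 : ∀ i, T (u i) = lam i • u i)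
    (ha3 : ∀ i, ‖lam i‖ = 1) (ha4 : Function.Injective lam)
    (hb : Dense (Submodule.span ℂ (Set.range u) : Set X))
    (hc : ∀ i, ∀ ε > (0 : ℝ), ∃ n, n ≠ i ∧ ‖u n - u i‖ < ε) :
    FrequentlyHypercyclic T := by
  let St := {p : X × ℝ // p.1 ∈ Submodule.span ℂ (Set.range u) ∧ 0 < p.2}
  let y : ℕ → X := fun k => TopologicalSpace.denseSeq X (Nat.unpair k).1
  have hstep : ∀ (k : ℕ) (s : St), ∃ b ∈ Submodule.span ℂ (Set.range u), ∃ L : ℕ,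
      (∀ N : ℕ, (((Finset.range N).filter (fun n => s.1.2 ≤ ‖(T ^ n) b‖)).card : ℝ)
        ≤ s.1.2 * N) ∧
      ∀ a, ∃ n, a ≤ n ∧ n ≤ a + L ∧ ‖(T ^ n) (s.1.1 + b) - y k‖ < 1 / ((k : ℝ) + 1) :=
    fun k s => fhc_step T u lam ha1 ha2 ha3 ha4 hb hc s.1.1 s.2.1 s.1.2 s.2.2 (y k)
      (1 / ((k : ℝ) + 1)) (by positivity)
  choose nb hnb nL hN hhit using hstep
  let st : ℕ → St := fun k => Nat.rec (motive := fun _ => St) ⟨(0, 1 / 2), Submodule.zero_mem _, by norm_num⟩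
    (fun k s => ⟨(s.1.1 + nb k s, min (s.1.2 / 2) (1 / (8 * ((nL k s : ℝ) + 1)))),
      Submodule.add_mem _ s.2.1 (hnb k s), by have := s.2.2; positivity⟩) k
  let h : ℕ → X := fun k => (st k).1.1
  let d : ℕ → ℝ := fun k => (st k).1.2
  let b : ℕ → X := fun k => nb k (st k)
  let L : ℕ → ℕ := fun k => nL k (st k)
  have hd0 : ∀ k, 0 < d k := fun k => (st k).2.2
  have hh : ∀ k, h (k + 1) = h k + b k := fun k => rfl
  have hd : ∀ k, d (k + 1) = min (d k / 2) (1 / (8 * ((L k : ℝ) + 1))) := fun k => rfl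
  have hdhalf : ∀ k, d (k + 1) ≤ d k / 2 := fun k => by rw [hd]; exact min_le_left _ _
  have hdL : ∀ k, d (k + 1) ≤ 1 / (8 * ((L k : ℝ) + 1)) := fun k => by
    rw [hd]; exact min_le_right _ _
  have hdgeo : ∀ k l, d (k + l) ≤ d k * (1 / 2) ^ l := by
    intro k l
    induction l with
    | zero => simp
    | succ l ih =>
      rw [← add_assoc, pow_succ]
      linarith [hdhalf (k + l)]
  have hd00 : d 0 = 1 / 2 := rfl
  have hdpow : ∀ k, d k ≤ (1 / 2) ^ (k + 1) := fun k => by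
    have := hdgeo 0 k
    rw [hd00, zero_add] at this
    rw [pow_succ]; linarith
  have hNb : ∀ k (N : ℕ), (((Finset.range N).filter (fun n => d k ≤ ‖(T ^ n) (b k)‖)).card : ℝ)
      ≤ d k * N := fun k N => hN k (st k) N
  have hhitb : ∀ k a, ∃ n, a ≤ n ∧ n ≤ a + L k ∧
      ‖(T ^ n) (h (k + 1)) - y k‖ < 1 / ((k : ℝ) + 1) := fun k => hhit k (st k)
  have hhsum : ∀ k, h k = ∑ l ∈ Finset.range k, b l := by
    intro k
    induction k with
    | zero => rfl
    | succ k ih => rw [hh, ih, Finset.sum_range_succ]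
  have hbsmall : ∀ k, ‖b k‖ ≤ (1 / 2) ^ (k + 1) := by
    intro k
    refine le_trans ?_ (hdpow k)
    by_contra hcon
    push Not at hcon
    have h1 := hNb k 1
    have h2 : (Finset.range 1).filter (fun n => d k ≤ ‖(T ^ n) (b k)‖) = {0} := by
      ext n
      simp only [Finset.mem_filter, Finset.mem_range, Finset.mem_singleton]
      constructor
      · intro hn; omega
      · rintro rfl; exact ⟨by omega, by simpa using hcon.le⟩
    rw [h2] at h1
    simp only [Finset.card_singleton, Nat.cast_one, mul_one] at h1
    have h3 := hdpow k
    have h4 : (1 / 2 : ℝ) ^ (k + 1) < 1 := pow_lt_one₀ (by norm_num) (by norm_num) (by omega)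
    linarith
  have hsum : Summable b := by
    refine Summable.of_norm_bounded (g := fun k => (1 / 2 : ℝ) ^ (k + 1)) ?_ hbsmall
    exact (summable_nat_add_iff 1).2 (summable_geometric_of_lt_one (by norm_num) (by norm_num))
  refine ⟨∑' k, b k, fun U hU hUne => ?_⟩
  obtain ⟨z, hz⟩ := hUne
  obtain ⟨r, hr, hrU⟩ := Metric.isOpen_iff.1 hU z hz
  obtain ⟨j, hj⟩ := (TopologicalSpace.denseRange_denseSeq X).exists_dist_lt z
    (show 0 < r / 2 by positivity)
  obtain ⟨k0, hk0⟩ := exists_nat_gt (4 / r)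
  set k := Nat.pair j k0 with hk
  have hyk : y k = TopologicalSpace.denseSeq X j := by simp [y, hk]
  have hk1 : 1 / ((k : ℝ) + 1) < r / 4 := by
    have : (k0 : ℝ) ≤ k := by exact_mod_cast Nat.right_le_pair j k0
    rw [div_lt_iff₀ (by positivity)]
    rw [div_lt_iff₀ hr] at hk0
    nlinarith
  have hdk : 2 * d (k + 1) < r / 4 := by
    have h1 := hdpow (k + 1)
    have h2 : (1 / 2 : ℝ) ^ (k + 1 + 1) * 2 ≤ 1 / ((k : ℝ) + 1) := by
      rw [pow_succ, mul_assoc]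
      have h20 : (1 / 2 * 2 : ℝ) = 1 := by norm_num
      rw [h20, mul_one, one_div_pow]
      apply one_div_le_one_div_of_le (by positivity)
      exact_mod_cast (Nat.lt_two_pow_self (n := k + 1)).le
    linarith
  -- the bad set
  let bad : ℕ → Prop := fun n => ∃ l, d (k + 1 + l) ≤ ‖(T ^ n) (b (k + 1 + l))‖
  have hgood : ∀ n, ¬ bad n → ‖(T ^ n) (h (k + 1)) - y k‖ < 1 / ((k : ℝ) + 1) →
      (T ^ n) (∑' k, b k) ∈ U := by
    intro n hn hnk
    apply hrU
    have e1 : ∑' k, b k = h (k + 1) + ∑' l, b (l + (k + 1)) := by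
      have e0 := hsum.sum_add_tsum_nat_add (k + 1)
      have e0' : h (k + 1) = ∑ l ∈ Finset.range (k + 1), b l := hhsum (k + 1)
      exact e0.symm.trans (congrArg (· + ∑' l, b (l + (k + 1))) e0'.symm)
    have hs' : Summable fun l => b (l + (k + 1)) := (summable_nat_add_iff (k + 1)).2 hsum
    have e2 : (T ^ n) (∑' l, b (l + (k + 1))) = ∑' l, (T ^ n) (b (l + (k + 1))) :=
      (T ^ n).map_tsum hs'
    have e3 : ‖∑' l, (T ^ n) (b (l + (k + 1)))‖ ≤ d (k + 1) * 2 := by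
      refine tsum_of_norm_bounded (hasSum_geometric_two.mul_left (d (k + 1))) fun l => ?_
      have : ‖(T ^ n) (b (l + (k + 1)))‖ < d (l + (k + 1)) := by
        by_contra hcon
        push Not at hcon
        exact hn ⟨l, by rwa [add_comm (k + 1) l]⟩
      rw [add_comm l] at this ⊢
      exact this.le.trans (hdgeo (k + 1) l)
    rw [Metric.mem_ball, dist_eq_norm, e1, map_add, e2]
    have e4 : ‖y k - z‖ < r / 2 := by rw [hyk, ← dist_eq_norm, dist_comm]; exact hj
    have e5 : (T ^ n) (h (k + 1)) + ∑' l, (T ^ n) (b (l + (k + 1))) - z =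
      ((T ^ n) (h (k + 1)) - y k) + ∑' l, (T ^ n) (b (l + (k + 1))) + (y k - z) := by abel
    rw [e5]
    have t1 := norm_add_le (((T ^ n) (h (k + 1)) - y k) + ∑' l, (T ^ n) (b (l + (k + 1)))) (y k - z)
    have t2 := norm_add_le ((T ^ n) (h (k + 1)) - y k) (∑' l, (T ^ n) (b (l + (k + 1))))
    linarith
  have hbadcount : ∀ N : ℕ, (((Finset.range N).filter bad).card : ℝ) ≤ 2 * d (k + 1) * N := by
    intro N
    have hex : ∀ n, ∃ l, bad n → d (k + 1 + l) ≤ ‖(T ^ n) (b (k + 1 + l))‖ := by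
      intro n
      by_cases hn : bad n
      · obtain ⟨l, hl⟩ := hn; exact ⟨l, fun _ => hl⟩
      · exact ⟨0, fun h => absurd h hn⟩
    choose g hg using hex
    let I := (Finset.range N).image g
    have hsub : (Finset.range N).filter bad ⊆ I.biUnion fun l =>
        (Finset.range N).filter (fun n => d (k + 1 + l) ≤ ‖(T ^ n) (b (k + 1 + l))‖) := by
      intro n hn
      rw [Finset.mem_filter] at hn
      rw [Finset.mem_biUnion]
      exact ⟨g n, Finset.mem_image_of_mem _ hn.1, Finset.mem_filter.2 ⟨hn.1, hg n hn.2⟩⟩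
    have h1 := (Finset.card_le_card hsub).trans Finset.card_biUnion_le
    calc (((Finset.range N).filter bad).card : ℝ) ≤ ∑ l ∈ I, (((Finset.range N).filter
          (fun n => d (k + 1 + l) ≤ ‖(T ^ n) (b (k + 1 + l))‖)).card : ℝ) := by exact_mod_cast h1
      _ ≤ ∑ l ∈ I, d (k + 1) * N * (1 / 2) ^ l := by
        refine Finset.sum_le_sum fun l _ => (hNb _ _).trans ?_
        have := hdgeo (k + 1) l
        calc _ ≤ d (k + 1) * (1 / 2) ^ l * N := by gcongr
          _ = _ := by ring
      _ ≤ d (k + 1) * N * 2 := by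
        refine sum_le_hasSum I (fun l _ => ?_) (hasSum_geometric_two.mul_left _)
        have := (hd0 (k + 1)).le
        positivity
      _ = _ := by ring
  have hmain : ∀ N : ℕ, (N : ℝ) / (L k + 1) - 1 - 2 * d (k + 1) * N ≤
      (((Finset.range N).filter (fun n => n ∈ {n : ℕ | (T ^ n) (∑' k, b k) ∈ U})).card : ℝ) := by
    intro N
    have h1 := fhc_count {n | ‖(T ^ n) (h (k + 1)) - y k‖ < 1 / ((k : ℝ) + 1)} (L k) (hhitb k) N
    have h2 : (Finset.range N).filter
        (· ∈ {n | ‖(T ^ n) (h (k + 1)) - y k‖ < 1 / ((k : ℝ) + 1)}) ⊆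
        (Finset.range N).filter (fun n => n ∈ {n : ℕ | (T ^ n) (∑' k, b k) ∈ U}) ∪
        (Finset.range N).filter bad := by
      intro n hn
      simp only [Finset.mem_union, Finset.mem_filter] at hn ⊢
      by_cases hbn : bad n
      · exact Or.inr ⟨hn.1, hbn⟩
      · exact Or.inl ⟨hn.1, hgood n hbn hn.2⟩
    have h3 := (Finset.card_le_card h2).trans (Finset.card_union_le _ _)
    have h4 := hbadcount N
    have h5 : (((Finset.range N).filter
        (· ∈ {n | ‖(T ^ n) (h (k + 1)) - y k‖ < 1 / ((k : ℝ) + 1)})).card : ℝ) ≤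
        (((Finset.range N).filter (fun n => n ∈ {n : ℕ | (T ^ n) (∑' k, b k) ∈ U})).card : ℝ) +
        (((Finset.range N).filter bad).card : ℝ) := by exact_mod_cast h3
    linarith
  have hlow : (1 : ℝ) / (4 * (L k + 1)) ≤
      lowerDensity {n : ℕ | (T ^ n) (∑' k, b k) ∈ U} := by
    unfold lowerDensity
    refine le_liminf_of_le ?_ ?_
    · refine IsBoundedUnder.isCoboundedUnder_ge ?_
      refine isBoundedUnder_of ⟨1, fun N => ?_⟩
      rcases Nat.eq_zero_or_pos N with rfl | hN0
      · simp
      · rw [div_le_one (by exact_mod_cast hN0)]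
        norm_cast
        exact (Finset.card_filter_le _ _).trans (by simp)
    · filter_upwards [eventually_ge_atTop (2 * (L k + 1))] with N hN
      have hN0 : (0 : ℝ) < N := by exact_mod_cast (by omega : 0 < N)
      have hN' : 2 * ((L k : ℝ) + 1) ≤ N := by exact_mod_cast hN
      rw [le_div_iff₀ hN0]
      refine le_trans ?_ (hmain N)
      have h1 : 2 * d (k + 1) * N ≤ 2 * (1 / (8 * ((L k : ℝ) + 1))) * N := by
        gcongr; exact hdL k
      have h2 : (1 : ℝ) ≤ N / (L k + 1) / 2 := by
        rw [div_div, le_div_iff₀ (by positivity)]; linarith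
      have h3 : 2 * (1 / (8 * ((L k : ℝ) + 1))) * N = N / (L k + 1) / 4 := by
        field_simp; norm_num
      have h4 : 1 / (4 * ((L k : ℝ) + 1)) * N = N / (L k + 1) / 4 := by
        field_simp
      rw [h4]
      linarith
  exact lt_of_lt_of_le (by positivity) hlow

end

section
open CantorScheme

lemma ps_split {Y : Type*} [MetricSpace Y] (g : Y → ℂ) (hgc : Continuous g)
    (hg : ∀ O : Set Y, IsOpen O → O.Nonempty → ∃ x ∈ O, ∃ y ∈ O, g x ≠ g y)
    (C : Set Y) (hC : (interior C).Nonempty) (ε : ENNReal) (hε : 0 < ε) :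
    ∃ C₀ C₁ : Set Y, (IsClosed C₀ ∧ (interior C₀).Nonempty ∧ C₀ ⊆ C ∧ Metric.ediam C₀ ≤ ε) ∧
      (IsClosed C₁ ∧ (interior C₁).Nonempty ∧ C₁ ⊆ C ∧ Metric.ediam C₁ ≤ ε) ∧
      ∀ x ∈ C₀, ∀ y ∈ C₁, g x ≠ g y := by
  obtain ⟨x, hx, y, hy, hxy⟩ := hg _ isOpen_interior hC
  obtain ⟨A, B, hA, hB, hxA, hyB, hAB⟩ := t2_separation hxy
  have key : ∀ (z : Y) (O : Set Y), IsOpen O → z ∈ O → O ⊆ C → ∃ D : Set Y,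
      IsClosed D ∧ (interior D).Nonempty ∧ D ⊆ O ∧ Metric.ediam D ≤ ε := by
    intro z O hO hzO _
    have hz2 : z ∈ O ∩ Metric.eball z (ε / 2) :=
      ⟨hzO, Metric.mem_eball_self (ENNReal.half_pos hε.ne')⟩
    obtain ⟨r, hr, hrs⟩ := Metric.nhds_basis_closedBall.mem_iff.1
      ((hO.inter Metric.isOpen_eball).mem_nhds hz2)
    refine ⟨Metric.closedBall z r, Metric.isClosed_closedBall, ⟨z, ?_⟩, ?_, ?_⟩
    · exact Metric.ball_subset_interior_closedBall (Metric.mem_ball_self hr)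
    · exact fun w hw => (hrs hw).1
    · refine (Metric.ediam_mono (fun w hw => (hrs hw).2)).trans ?_
      refine Metric.ediam_eball_le.trans ?_
      rw [ENNReal.mul_div_cancel (by norm_num) (by norm_num)]
  obtain ⟨D, hD1, hD2, hD3, hD4⟩ := key x (interior C ∩ g ⁻¹' A)
    (isOpen_interior.inter (hA.preimage hgc)) ⟨hx, hxA⟩
    (Set.inter_subset_left.trans interior_subset)
  obtain ⟨E, hE1, hE2, hE3, hE4⟩ := key y (interior C ∩ g ⁻¹' B)
    (isOpen_interior.inter (hB.preimage hgc)) ⟨hy, hyB⟩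
    (Set.inter_subset_left.trans interior_subset)
  refine ⟨D, E, ⟨hD1, hD2, fun w hw => interior_subset (hD3 hw).1, hD4⟩,
    ⟨hE1, hE2, fun w hw => interior_subset (hE3 hw).1, hE4⟩, ?_⟩
  intro a ha b hb hab
  have h1 : g a ∈ A := (hD3 ha).2
  have h2 : g b ∈ B := (hE3 hb).2
  rw [← hab] at h2
  exact Set.disjoint_left.1 hAB h1 h2

lemma ps_cantor {Y : Type*} [MetricSpace Y] [CompleteSpace Y] [Nonempty Y] (g : Y → ℂ)
    (hgc : Continuous g)
    (hg : ∀ O : Set Y, IsOpen O → O.Nonempty → ∃ x ∈ O, ∃ y ∈ O, g x ≠ g y) :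
    ∃ f : (ℕ → Bool) → Y, Continuous f ∧ Function.Injective (g ∘ f) := by
  obtain ⟨u, -, upos', hu⟩ := exists_seq_strictAnti_tendsto' (zero_lt_one' ENNReal)
  have upos := fun n => (upos' n).1
  let P := {E : Set Y // IsClosed E ∧ (interior E).Nonempty}
  choose C0 C1 h0 h1 hdisj using
    fun (C : P) (ε : ENNReal) (hε : 0 < ε) => ps_split g hgc hg C.1 C.2.2 ε hε
  let DP : List Bool → P := fun l => by
    induction l with
    | nil => exact ⟨Set.univ, isClosed_univ, by simp⟩
    | cons a l ih =>
      cases a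
      · exact ⟨C0 ih _ (upos (l.length + 1)), (h0 _ _ _).1, (h0 _ _ _).2.1⟩
      · exact ⟨C1 ih _ (upos (l.length + 1)), (h1 _ _ _).1, (h1 _ _ _).2.1⟩
  let D : List Bool → Set Y := fun l => (DP l).val
  have hanti : ClosureAntitone D := by
    refine Antitone.closureAntitone ?_ fun l => (DP l).property.1
    intro l a
    cases a
    · exact (h0 _ _ _).2.2.1
    exact (h1 _ _ _).2.2.1
  have hdiam : VanishingDiam D := by
    intro x
    apply tendsto_of_tendsto_of_tendsto_of_le_of_le' tendsto_const_nhds hu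
    · simp
    rw [eventually_atTop]
    refine ⟨1, fun m (hm : 1 ≤ m) => ?_⟩
    rw [Nat.one_le_iff_ne_zero] at hm
    rcases Nat.exists_eq_succ_of_ne_zero hm with ⟨n, rfl⟩
    dsimp
    cases x n
    · convert! (h0 _ _ _).2.2.2
      rw [PiNat.res_length]
    convert! (h1 _ _ _).2.2.2
    rw [PiNat.res_length]
  have hdisj' : ∀ l, ∀ x ∈ D (false :: l), ∀ y ∈ D (true :: l), g x ≠ g y := by
    intro l
    exact hdisj _ _ _
  have hdom : ∀ {x : ℕ → Bool}, x ∈ (inducedMap D).1 := fun {x} => by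
    rw [hanti.map_of_vanishingDiam hdiam fun l => (DP l).property.2.mono interior_subset]
    apply Set.mem_univ
  refine ⟨fun x => (inducedMap D).2 ⟨x, hdom⟩, ?_, ?_⟩
  · apply hdiam.map_continuous.comp
    fun_prop
  intro x y hxy
  by_contra hne
  have hm : ∀ z : ℕ → Bool, ∀ n, (inducedMap D).2 ⟨z, hdom⟩ ∈ D (PiNat.res z n) :=
    fun z n => map_mem ⟨z, hdom⟩ n
  set n := PiNat.firstDiff x y with hn
  have hxn := hm x (n + 1)
  have hyn := hm y (n + 1)
  have hres : PiNat.res x n = PiNat.res y n := by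
    rw [PiNat.res_eq_res]
    intro m hmn
    exact PiNat.apply_eq_of_lt_firstDiff hmn
  have hdiff : x n ≠ y n := PiNat.apply_firstDiff_ne hne
  rw [PiNat.res_succ] at hxn hyn
  rw [hres] at hxn
  simp only [Function.comp] at hxy
  cases hx : x n <;> cases hy : y n
  · rw [hx, hy] at hdiff; exact hdiff rfl
  · rw [hx] at hxn; rw [hy] at hyn; exact hdisj' _ _ hxn _ hyn hxy
  · rw [hx] at hxn; rw [hy] at hyn; exact hdisj' _ _ hyn _ hxn hxy.symm
  · rw [hx, hy] at hdiff; exact hdiff rfl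

lemma ps_local {X : Type*} [NormedAddCommGroup X] [NormedSpace ℂ X] [CompleteSpace X]
    (T : X →L[ℂ] X) (u : ℕ → X) (lam : ℕ → ℂ)
    (ha1 : ∀ i, u i ≠ 0) (ha2 : ∀ i, T (u i) = lam i • u i)
    (ha3 : ∀ i, ‖lam i‖ = 1) (ha4 : Function.Injective lam)
    (hc : ∀ i, ∀ ε > (0 : ℝ), ∃ n, n ≠ i ∧ ‖u n - u i‖ < ε) (i : ℕ) (r0 : ℝ) (hr0 : 0 < r0) :
    ∃ σ : Measure ℂ, IsProbabilityMeasure σ ∧ (∀ c : ℂ, σ {c} = 0) ∧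
      σ {c : ℂ | ‖c‖ = 1}ᶜ = 0 ∧
      ∀ A : Set ℂ, MeasurableSet A → σ Aᶜ = 0 → ∃ c ∈ A, ∃ x, T x = c • x ∧ ‖x - u i‖ ≤ r0 := by
  have hui : 0 < ‖u i‖ := norm_pos_iff.2 (ha1 i)
  set r : ℝ := min r0 (‖u i‖ / 2) with hr
  have hr1 : 0 < r := by positivity
  obtain ⟨φ, hφ1, hφ2⟩ := exists_dual_vector ℂ (u i) hui.ne'
  set S : Set X := {x | ∃ n, u n = x ∧ ‖u n - u i‖ < r} with hS
  have hball : ∀ x ∈ closure S, ‖x - u i‖ ≤ r := by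
    intro x hx
    have hcl : IsClosed {x : X | ‖x - u i‖ ≤ r} := isClosed_le (by fun_prop) (by fun_prop)
    refine closure_minimal ?_ hcl hx
    rintro _ ⟨n, rfl, hn⟩
    exact hn.le
  have hφne : ∀ x ∈ closure S, φ x ≠ 0 := by
    intro x hx h0
    have h1 := hball x hx
    have h2 : ‖φ (x - u i)‖ ≤ ‖x - u i‖ := by
      have := φ.le_opNorm (x - u i)
      rwa [hφ1, one_mul] at this
    rw [map_sub, h0, hφ2, zero_sub, norm_neg] at h2
    simp only [Complex.coe_algebraMap, Complex.norm_real, norm_norm] at h2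
    have := min_le_right r0 (‖u i‖ / 2)
    linarith
  have heig : ∀ x ∈ closure S, φ x • T x = φ (T x) • x := by
    intro x hx
    have hcl : IsClosed {x : X | φ x • T x = φ (T x) • x} := isClosed_eq (by fun_prop) (by fun_prop)
    refine closure_minimal ?_ hcl hx
    rintro _ ⟨n, rfl, hn⟩
    simp only [Set.mem_ofPred_eq, ha2, map_smul, smul_smul, smul_eq_mul, mul_comm]
  have hmod : ∀ x ∈ closure S, ‖φ (T x)‖ = ‖φ x‖ := by
    intro x hx
    have hcl : IsClosed {x : X | ‖φ (T x)‖ = ‖φ x‖} := isClosed_eq (by fun_prop) (by fun_prop)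
    refine closure_minimal ?_ hcl hx
    rintro _ ⟨n, rfl, hn⟩
    simp [ha2, ha3]
  let Y := closure S
  have : CompleteSpace Y := isClosed_closure.completeSpace_coe
  have hiS : u i ∈ S := ⟨i, rfl, by simpa using hr1⟩
  have : Nonempty Y := ⟨⟨u i, subset_closure hiS⟩⟩
  let g : Y → ℂ := fun x => φ (T x) / φ x
  have hgc : Continuous g := Continuous.div (by fun_prop) (by fun_prop) fun x => hφne x x.2
  have hgu : ∀ n (h : u n ∈ closure S), g ⟨u n, h⟩ = lam n := by
    intro n h
    have := hφne _ h
    simp [g, ha2, this]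
  have hg : ∀ O : Set Y, IsOpen O → O.Nonempty → ∃ x ∈ O, ∃ y ∈ O, g x ≠ g y := by
    rintro O hO ⟨x, hx⟩
    obtain ⟨W, hW, rfl⟩ := isOpen_induced_iff.1 hO
    obtain ⟨_, hnW, n, rfl, hn⟩ := mem_closure_iff.1 x.2 W hW hx
    have hopen : IsOpen (W ∩ {x | ‖x - u i‖ < r}) :=
      hW.inter (isOpen_lt (by fun_prop) (by fun_prop))
    obtain ⟨ε, hε, hεs⟩ := Metric.isOpen_iff.1 hopen (u n) ⟨hnW, hn⟩
    obtain ⟨m, hmn, hm⟩ := hc n ε hε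
    have hmW := hεs (by rwa [Metric.mem_ball, dist_eq_norm] : u m ∈ Metric.ball (u n) ε)
    have hmS : u m ∈ closure S := subset_closure ⟨m, rfl, hmW.2⟩
    have hnS : u n ∈ closure S := subset_closure ⟨n, rfl, hn⟩
    refine ⟨⟨u m, hmS⟩, hmW.1, ⟨u n, hnS⟩, hnW, ?_⟩
    rw [hgu, hgu]
    exact fun h => hmn (ha4 h)
  obtain ⟨f, hf, hinj⟩ := ps_cantor g hgc hg
  let e : ℝ ≃ᵐ (ℕ → Bool) := PolishSpace.measurableEquivNatBoolOfNotCountable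
    (not_countable_iff.2 inferInstance)
  let ψ : ℝ → ℂ := fun t => g (f (e t))
  have hψm : Measurable ψ := (hgc.comp hf).measurable.comp e.measurable
  have hψi : Function.Injective ψ := hinj.comp e.injective
  let ν : Measure ℝ := volume.restrict (Set.Icc 0 1)
  have hν : IsProbabilityMeasure ν := ⟨by simp [ν]⟩
  refine ⟨ν.map ψ, Measure.isProbabilityMeasure_map hψm.aemeasurable, ?_, ?_, ?_⟩
  · intro c
    rw [Measure.map_apply hψm (measurableSet_singleton c)]
    refine Set.Subsingleton.measure_zero ?_ _
    intro a ha b hb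
    exact hψi (ha.trans hb.symm)
  · have hms : MeasurableSet {c : ℂ | ‖c‖ = 1} := measurableSet_eq_fun (by fun_prop) (by fun_prop)
    rw [Measure.map_apply hψm hms.compl]
    have : ψ ⁻¹' {c : ℂ | ‖c‖ = 1}ᶜ = ∅ := by
      rw [Set.preimage_compl, Set.compl_empty_iff, Set.eq_univ_iff_forall]
      intro t
      have h1 := hmod _ (f (e t)).2
      have h2 := hφne _ (f (e t)).2
      simp only [Set.mem_preimage, Set.mem_ofPred_eq, ψ, g, norm_div, h1]
      exact div_self (norm_ne_zero_iff.2 h2)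
    rw [this, measure_empty]
  · intro A hA h0
    rw [Measure.map_apply hψm hA.compl] at h0
    have hne : (ψ ⁻¹' A).Nonempty := by
      by_contra hcon
      rw [Set.not_nonempty_iff_eq_empty] at hcon
      rw [Set.preimage_compl, hcon, Set.compl_empty, measure_univ] at h0
      exact one_ne_zero h0
    obtain ⟨t, ht⟩ := hne
    refine ⟨ψ t, ht, f (e t), ?_, (hball _ (f (e t)).2).trans (min_le_left _ _)⟩
    have h1 := heig _ (f (e t)).2
    have h2 := hφne _ (f (e t)).2
    simp only [ψ, g]
    rw [div_eq_inv_mul, mul_smul, ← h1, inv_smul_smul₀ h2]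

theorem ps_main {X : Type*} [NormedAddCommGroup X] [NormedSpace ℂ X] [CompleteSpace X]
    (T : X →L[ℂ] X) (u : ℕ → X) (lam : ℕ → ℂ)
    (ha1 : ∀ i, u i ≠ 0) (ha2 : ∀ i, T (u i) = lam i • u i)
    (ha3 : ∀ i, ‖lam i‖ = 1) (ha4 : Function.Injective lam)
    (hb : Dense (Submodule.span ℂ (Set.range u) : Set X))
    (hc : ∀ i, ∀ ε > (0 : ℝ), ∃ n, n ≠ i ∧ ‖u n - u i‖ < ε) :
    PerfectlySpanning T := by
  choose s hs1 hs2 hs3 hs4 using fun k : ℕ => ps_local T u lam ha1 ha2 ha3 ha4 hc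
    (Nat.unpair k).1 (1 / (((Nat.unpair k).2 : ℝ) + 1)) (by positivity)
  let w : ℕ → ENNReal := fun k => (2 : ENNReal)⁻¹ ^ (k + 1)
  have hw0 : ∀ k, w k ≠ 0 := fun k => by simp [w]
  let σ : Measure ℂ := Measure.sum fun k => w k • s k
  have hσ : ∀ A, MeasurableSet A → σ A = ∑' k, w k * s k A := fun A hA => by
    simp [σ, Measure.sum_apply _ hA]
  have hP : IsProbabilityMeasure σ := ⟨by
    rw [hσ _ MeasurableSet.univ]
    simp only [measure_univ, mul_one, w]
    exact ENNReal.tsum_geometric_add_one _ |>.trans (by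
      rw [ENNReal.one_sub_inv_two, inv_inv]
      exact ENNReal.inv_mul_cancel (by norm_num) (by norm_num))⟩
  have hms : MeasurableSet {c : ℂ | ‖c‖ = 1} := measurableSet_eq_fun (by fun_prop) (by fun_prop)
  refine ⟨σ, hP, ?_, ?_, ?_⟩
  · intro c
    rw [hσ _ (measurableSet_singleton c)]
    simp [hs2]
  · rw [← prob_compl_eq_zero_iff hms, hσ _ hms.compl]
    simp [hs3]
  · intro A hA1 hA hσA
    rw [← prob_compl_eq_zero_iff hA, hσ _ hA.compl, ENNReal.tsum_eq_zero] at hσA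
    have hz : ∀ k, s k Aᶜ = 0 := fun k => (mul_eq_zero.1 (hσA k)).resolve_left (hw0 k)
    set W := Submodule.span ℂ (⋃ c ∈ A, {x : X | T x = c • x}) with hW
    have hmem : ∀ i, u i ∈ closure (W : Set X) := by
      intro i
      rw [Metric.mem_closure_iff]
      intro ε hε
      obtain ⟨j, hj⟩ := exists_nat_one_div_lt hε
      obtain ⟨c, hcA, x, hx, hxn⟩ := hs4 (Nat.pair i j) A hA (hz _)
      simp only [Nat.unpair_pair] at hxn
      refine ⟨x, Submodule.subset_span ?_, ?_⟩
      · simp only [Set.mem_iUnion]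
        exact ⟨c, hcA, hx⟩
      · rw [dist_comm, dist_eq_norm]
        exact lt_of_le_of_lt hxn hj
    have hle : Submodule.span ℂ (Set.range u) ≤ W.topologicalClosure := by
      rw [Submodule.span_le]
      rintro _ ⟨i, rfl⟩
      exact hmem i
    have hd : Dense (W.topologicalClosure : Set X) := hb.mono hle
    rw [Submodule.topologicalClosure_coe] at hd
    exact dense_closure.1 hd

end

/-- Suppose `(u i)` is a sequence of unimodular eigenvectors of `T` with pairwise
distinct eigenvalues, spanning a dense subspace, and such that every `u i` can be
approximated arbitrarily well by other terms of the sequence. Then `T` has a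
perfectly spanning set of unimodular eigenvectors, and hence `T` is frequently
hypercyclic. -/
theorem approximable_eigenvector_sequence_implies_perfectlySpanning
    {X : Type*} [NormedAddCommGroup X] [NormedSpace ℂ X] [CompleteSpace X]
    [TopologicalSpace.SeparableSpace X] (hdim : ¬ FiniteDimensional ℂ X)
    (T : X →L[ℂ] X) (u : ℕ → X) (lam : ℕ → ℂ)
    (ha1 : ∀ i, u i ≠ 0) (ha2 : ∀ i, T (u i) = lam i • u i)
    (ha3 : ∀ i, ‖lam i‖ = 1) (ha4 : Function.Injective lam)
    (hb : Dense (Submodule.span ℂ (Set.range u) : Set X))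
    (hc : ∀ i, ∀ ε > (0 : ℝ), ∃ n, n ≠ i ∧ ‖u n - u i‖ < ε) :
    PerfectlySpanning T ∧ FrequentlyHypercyclic T := by
  exact ⟨ps_main T u lam ha1 ha2 ha3 ha4 hb hc, fhc_main T u lam ha1 ha2 ha3 ha4 hb hc⟩
end

section
/- Let X be a complex separable infinite-dimensional Banach space and let T be a bounded linear operator on X satisfying assumption (H'): there exists a sequence (x_n)_{n≥1} of eigenvectors of T with T x_n = λ_n x_n, |λ_n| = 1, ‖x_n‖ = 1, such that (i) the linear span of {x_n : n ≥ 1} is dense in X, and (ii) for any finite subset F of σ_p(T)∩𝕋, the closure of {x_n : n ≥ 1} equals the closure of {x_n : n ∈ A_F}, where A_F = {n ≥ 1 : λ_n ∉ F}. Then T is frequently hypercyclic. -/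
open MeasureTheory Filter Topology

noncomputable def bohrF : Filter ℕ :=
  Filter.comap (fun k : ℕ => (fun s : Circle => s ^ k : Circle → Circle)) (𝓝 1)

lemma bohr_tendsto (s : ℂ) (hs : ‖s‖ = 1) :
    Tendsto (fun k : ℕ => s ^ k) bohrF (𝓝 1) := by
  have h1 : Tendsto (fun k : ℕ => (fun s : Circle => s ^ k : Circle → Circle)) bohrF (𝓝 1) :=
    tendsto_comap
  have hm : s ∈ Submonoid.unitSphere ℂ := mem_sphere_zero_iff_norm.2 hs
  let c : Circle := ⟨s, hm⟩
  have h2 : Continuous (fun g : Circle → Circle => ((g c : Circle) : ℂ)) := by fun_prop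
  have h3 := (h2.tendsto 1).comp h1
  have e : (((1 : Circle → Circle) c : Circle) : ℂ) = 1 := by simp
  rw [e] at h3
  exact h3.congr fun k => Circle.coe_pow c k

lemma compact_group_synd {G : Type*} [Group G] [TopologicalSpace G] [IsTopologicalGroup G]
    [CompactSpace G] (g : G) (V : Set G) (hV : V ∈ 𝓝 (1 : G)) :
    ∃ L : ℕ, ∀ n : ℕ, ∃ k, n ≤ k ∧ k ≤ n + L ∧ g ^ k ∈ V := by
  have hK : IsCompact (closure (Set.range fun k : ℕ => g ^ k)) := isClosed_closure.isCompact
  obtain ⟨t, ht⟩ := hK.elim_finite_subcover (fun k : ℕ => {h : G | (g ^ k)⁻¹ * h ∈ interior V})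
    (fun k => isOpen_interior.preimage (by fun_prop)) (by
      intro h hh
      have ho : IsOpen {y : G | y⁻¹ * h ∈ interior V} := isOpen_interior.preimage (by fun_prop)
      have hm : h ∈ {y : G | y⁻¹ * h ∈ interior V} := by
        simpa using mem_interior_iff_mem_nhds.2 hV
      obtain ⟨y, hy, k, rfl⟩ := mem_closure_iff.1 hh _ ho hm
      exact Set.mem_iUnion.2 ⟨k, hy⟩)
  refine ⟨t.sup id, fun n => ?_⟩
  have := ht (subset_closure ⟨n + t.sup id, rfl⟩)
  simp only [Set.mem_iUnion] at this
  obtain ⟨k, hk, hk2⟩ := this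
  have hkL : k ≤ t.sup id := Finset.le_sup (f := id) hk
  refine ⟨n + t.sup id - k, by omega, by omega, ?_⟩
  have e : g ^ (n + t.sup id) = g ^ k * g ^ (n + t.sup id - k) := by
    rw [← pow_add]; congr 1; omega
  have h2 : (g ^ k)⁻¹ * g ^ (n + t.sup id) ∈ interior V := hk2
  rw [e, inv_mul_cancel_left] at h2
  exact interior_subset h2

lemma bohr_synd {A : Set ℕ} (hA : A ∈ bohrF) :
    ∃ L : ℕ, ∀ n : ℕ, ∃ k, n ≤ k ∧ k ≤ n + L ∧ k ∈ A := by
  obtain ⟨V, hV, hVA⟩ := hA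
  obtain ⟨L, hL⟩ := compact_group_synd (fun s : Circle => s : Circle → Circle) V hV
  refine ⟨L, fun n => ?_⟩
  obtain ⟨k, h1, h2, h3⟩ := hL n
  exact ⟨k, h1, h2, hVA h3⟩

/-- powers of a unimodular number close to 1 come close to -1 -/
lemma exists_pow_near_neg_one (z : ℂ) (hz : ‖z‖ = 1) (h1 : z ≠ 1) :
    ∃ m : ℕ, ‖z ^ m + 1‖ ≤ 2 * ‖z - 1‖ := by
  set t := z.arg with ht
  have hexp : Complex.exp (t * Complex.I) = z := by
    have := Complex.norm_mul_exp_arg_mul_I z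
    rw [hz] at this; simpa using this
  have ht0 : t ≠ 0 := by
    intro h; rw [h] at hexp; simp at hexp; exact h1 hexp.symm
  have hpos : 0 < |t| := abs_pos.2 ht0
  have htle : |t| ≤ Real.pi := Complex.abs_arg_le_pi z
  have hlow : |t| ≤ 2 * ‖z - 1‖ := by
    have h := Real.mul_abs_le_abs_sin (x := t / 2) (by rw [abs_div]; simp; linarith)
    have h2 : ‖z - 1‖ = ‖2 * Real.sin (t / 2)‖ := by
      rw [← hexp, mul_comm, Complex.norm_exp_I_mul_ofReal_sub_one]
    rw [h2, norm_mul, Real.norm_eq_abs, Real.norm_eq_abs]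
    rw [abs_div, abs_two] at h
    rw [abs_two]
    have hpi : 2 / Real.pi ≥ 1/2 := by
      rw [ge_iff_le, div_le_div_iff₀ (by norm_num) Real.pi_pos]; linarith [Real.pi_le_four]
    nlinarith
  refine ⟨⌊Real.pi / |t|⌋₊, ?_⟩
  set m := ⌊Real.pi / |t|⌋₊
  have hm1 : (m : ℝ) * |t| ≤ Real.pi := by
    have := Nat.floor_le (a := Real.pi / |t|) (by positivity)
    rwa [le_div_iff₀ hpos] at this
  have hm2 : Real.pi ≤ (m + 1 : ℝ) * |t| := by
    have := (Nat.lt_floor_add_one (Real.pi / |t|)).le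
    rwa [div_le_iff₀ hpos] at this
  obtain ⟨s, hs, hts⟩ : ∃ s : ℝ, (Complex.exp ((s * Real.pi : ℝ) * Complex.I) = -1) ∧ |m * t - s * Real.pi| ≤ |t| := by
    rcases abs_cases t with ⟨h, _⟩ | ⟨h, _⟩
    · refine ⟨1, by simp, ?_⟩
      rw [h] at hm1 hm2 ⊢
      rw [abs_le]; constructor <;> linarith
    · refine ⟨-1, by simp [Complex.exp_neg], ?_⟩
      rw [h] at hm1 hm2 ⊢
      rw [abs_le]; constructor <;> linarith
  have e : z ^ m + 1 = Complex.exp ((s * Real.pi : ℝ) * Complex.I) *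
      (Complex.exp (Complex.I * ((m * t - s * Real.pi : ℝ))) - 1) := by
    rw [mul_sub, ← Complex.exp_add, hs]
    rw [← hexp, ← Complex.exp_nat_mul]
    rw [show (m : ℂ) * (t * Complex.I) = ((s * Real.pi : ℝ) * Complex.I) + Complex.I * ((m * t - s * Real.pi : ℝ)) by push_cast; ring]
    ring
  rw [e, norm_mul, Complex.norm_exp_ofReal_mul_I, one_mul]
  refine (Real.norm_exp_I_mul_ofReal_sub_one_le).trans ?_
  rw [Real.norm_eq_abs]; linarith

lemma norm_pow_sub_pow_le_mul (a b : ℂ) (ha : ‖a‖ = 1) (hb : ‖b‖ = 1) (n : ℕ) :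
    ‖a ^ n - b ^ n‖ ≤ n * ‖a - b‖ := by
  induction n with
  | zero => simp
  | succ n ih =>
    have e : a ^ (n+1) - b ^ (n+1) = a ^ n * (a - b) + (a ^ n - b ^ n) * b := by ring
    rw [e]
    refine (norm_add_le _ _).trans ?_
    rw [norm_mul, norm_mul, norm_pow, ha, hb]
    push_cast; simp; linarith

lemma synd_near_neg (A : Set ℕ) (hA : A ∈ bohrF) (mu : ℂ) (hmu : ‖mu‖ = 1) (d : ℝ) (hd : 0 < d) :
    ∃ r > 0, ∀ nu : ℂ, ‖nu‖ = 1 → nu ≠ mu → ‖nu - mu‖ < r →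
      ∃ k ∈ A, ‖nu ^ k + mu ^ k‖ ≤ d := by
  obtain ⟨L, hL⟩ := bohr_synd hA
  refine ⟨d / (L + 2), by positivity, fun nu hnu hne hr => ?_⟩
  have hmu0 : mu ≠ 0 := by intro h; simp [h] at hmu
  have hz : ‖nu / mu‖ = 1 := by rw [norm_div, hnu, hmu, div_one]
  have hz1 : ‖nu / mu - 1‖ = ‖nu - mu‖ := by
    rw [div_sub_one hmu0, norm_div, hmu, div_one]
  obtain ⟨m, hm⟩ := exists_pow_near_neg_one (nu / mu) hz
    (by rw [Ne, div_eq_one_iff_eq hmu0]; exact hne)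
  obtain ⟨k, hk1, hk2, hkA⟩ := hL m
  refine ⟨k, hkA, ?_⟩
  have e : nu ^ k + mu ^ k = mu ^ k * ((nu / mu) ^ m * ((nu / mu) ^ (k - m) - 1 ^ (k-m)) + ((nu / mu) ^ m + 1)) := by
    rw [one_pow, mul_sub, ← pow_add, show m + (k - m) = k by omega]
    rw [div_pow, div_pow]
    field_simp
    ring
  rw [e, norm_mul, norm_pow, hmu, one_pow, one_mul]
  refine (norm_add_le _ _).trans ?_
  rw [norm_mul, norm_pow, hz, one_pow, one_mul]
  have h3 := norm_pow_sub_pow_le_mul (nu / mu) 1 hz (by simp) (k - m)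
  rw [hz1] at h3 hm
  have h4 : ((k - m : ℕ) : ℝ) ≤ L := by exact_mod_cast (by omega : k - m ≤ L)
  rw [lt_div_iff₀ (by positivity)] at hr
  have := norm_nonneg (nu - mu)
  nlinarith [mul_le_mul_of_nonneg_right h4 this]

def QProp (mu : ℂ) (f : ℕ → ℂ) : Prop :=
  ∃ C : ℝ, ∀ᶠ nu in 𝓝 mu, ‖nu‖ = 1 →
    ∀ N : ℕ, ‖∑ k ∈ Finset.range N, f k * (starRingEnd ℂ nu) ^ k‖ ≤ C

lemma QProp.zero (mu : ℂ) : QProp mu (fun _ => 0) := ⟨0, by simp⟩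

lemma QProp.add {mu : ℂ} {f g : ℕ → ℂ} (hf : QProp mu f) (hg : QProp mu g) :
    QProp mu (fun k => f k + g k) := by
  obtain ⟨C, hC⟩ := hf
  obtain ⟨D, hD⟩ := hg
  refine ⟨C + D, ?_⟩
  filter_upwards [hC, hD] with nu h1 h2 hn N
  simp only [add_mul, Finset.sum_add_distrib]
  exact (norm_add_le _ _).trans (add_le_add (h1 hn N) (h2 hn N))

lemma QProp.pow {mu : ℂ} (a nu0 : ℂ) (h0 : ‖nu0‖ = 1) (hne : nu0 ≠ mu) :
    QProp mu (fun k => a * nu0 ^ k) := by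
  have hpos : 0 < ‖nu0 - mu‖ := norm_pos_iff.2 (sub_ne_zero.2 hne)
  refine ⟨‖a‖ * (2 / (‖nu0 - mu‖ / 2)), ?_⟩
  filter_upwards [Metric.ball_mem_nhds mu (half_pos hpos)] with nu hnu hn N
  rw [Metric.mem_ball, dist_eq_norm] at hnu
  have hge : ‖nu0 - mu‖ / 2 ≤ ‖nu0 - nu‖ := by
    have := norm_sub_le_norm_sub_add_norm_sub nu0 nu mu
    linarith
  have hnn : nu * starRingEnd ℂ nu = 1 := by
    rw [Complex.mul_conj, Complex.normSq_eq_norm_sq, hn]; simp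
  set q := nu0 * starRingEnd ℂ nu with hq
  have hq1 : ‖q - 1‖ = ‖nu0 - nu‖ := by
    have : (q - 1) * nu = nu0 - nu := by rw [hq]; linear_combination nu0 * hnn
    rw [← this, norm_mul, hn, mul_one]
  have hqn : ‖q‖ = 1 := by rw [hq, norm_mul, h0]; simp [hn]
  have hqne : q ≠ 1 := by
    intro h; rw [h] at hq1; simp at hq1; linarith
  have e : ∑ k ∈ Finset.range N, a * nu0 ^ k * (starRingEnd ℂ nu) ^ k = a * ((q ^ N - 1) / (q - 1)) := by
    rw [← geom_sum_eq hqne, Finset.mul_sum]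
    refine Finset.sum_congr rfl fun k _ => ?_
    rw [hq, mul_pow, mul_assoc]
  rw [e, norm_mul, norm_div]
  gcongr
  · refine (norm_sub_le _ _).trans ?_
    rw [norm_pow, hqn]; norm_num
  · rw [hq1]; exact hge

/-- the second moment increment -/
lemma second_moment_step (mu : ℂ) (f : ℕ → ℂ) (hf : QProp mu f) (K : ℝ) (hK : 0 < K) :
    ∃ r > 0, ∀ nu nu' c : ℂ, ‖nu‖ = 1 → ‖nu'‖ = 1 → ‖c‖ ≤ K → ‖nu - mu‖ < r → ‖nu' - mu‖ < r →
      ∀ N : ℕ, ∑ k ∈ Finset.range N, ‖f k + c * (nu ^ k - nu' ^ k)‖ ^ 2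
        ≤ ∑ k ∈ Finset.range N, ‖f k‖ ^ 2 + 6 * K ^ 2 * N := by
  obtain ⟨C, hC⟩ := hf
  obtain ⟨N0, hN0⟩ := exists_nat_ge (2 * C / K)
  have h2 : ∀ᶠ nu in 𝓝 mu, ∀ k ∈ Finset.range N0, ‖f k‖ * ‖nu ^ k - mu ^ k‖ ≤ K / 2 := by
    rw [Filter.eventually_all_finset]
    intro k _
    have hc : Tendsto (fun nu : ℂ => ‖f k‖ * ‖nu ^ k - mu ^ k‖) (𝓝 mu) (𝓝 (‖f k‖ * ‖mu ^ k - mu ^ k‖)) := by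
      apply Continuous.tendsto; fun_prop
    rw [sub_self, norm_zero, mul_zero] at hc
    exact (hc.eventually (gt_mem_nhds (half_pos hK))).mono fun _ h => h.le
  obtain ⟨r, hr, hball⟩ := Metric.eventually_nhds_iff.1 (hC.and h2)
  refine ⟨r, hr, fun nu nu' c hnu hnu' hc h1 h1' N => ?_⟩
  obtain ⟨ha, hb⟩ := hball (y := nu) (by rwa [dist_eq_norm])
  obtain ⟨ha', hb'⟩ := hball (y := nu') (by rwa [dist_eq_norm])
  have hcross : ‖∑ k ∈ Finset.range N, f k * starRingEnd ℂ (c * (nu ^ k - nu' ^ k))‖ ≤ K ^ 2 * N := by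
    rcases le_total N N0 with hN | hN
    · refine (norm_sum_le _ _).trans ?_
      have : ∀ k ∈ Finset.range N, ‖f k * starRingEnd ℂ (c * (nu ^ k - nu' ^ k))‖ ≤ K ^ 2 := by
        intro k hk
        have hk' : k ∈ Finset.range N0 := by simp at hk ⊢; omega
        rw [norm_mul, RCLike.norm_conj, norm_mul]
        have t : ‖nu ^ k - nu' ^ k‖ ≤ ‖nu ^ k - mu ^ k‖ + ‖nu' ^ k - mu ^ k‖ := by
          have := norm_sub_le (nu ^ k - mu ^ k) (nu' ^ k - mu ^ k)
          simpa using this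
        calc ‖f k‖ * (‖c‖ * ‖nu ^ k - nu' ^ k‖)
            = ‖c‖ * (‖f k‖ * ‖nu ^ k - nu' ^ k‖) := by ring
          _ ≤ K * (‖f k‖ * (‖nu ^ k - mu ^ k‖ + ‖nu' ^ k - mu ^ k‖)) := by gcongr
          _ ≤ K * K := by
            gcongr
            rw [mul_add]; linarith [hb k hk', hb' k hk']
          _ = K ^ 2 := by ring
      refine (Finset.sum_le_sum this).trans ?_
      simp [mul_comm]
    · have e : ∑ k ∈ Finset.range N, f k * starRingEnd ℂ (c * (nu ^ k - nu' ^ k)) =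
          starRingEnd ℂ c * (∑ k ∈ Finset.range N, f k * (starRingEnd ℂ nu) ^ k
            - ∑ k ∈ Finset.range N, f k * (starRingEnd ℂ nu') ^ k) := by
        rw [← Finset.sum_sub_distrib, Finset.mul_sum]
        refine Finset.sum_congr rfl fun k _ => ?_
        simp only [map_mul, map_sub, map_pow]; ring
      rw [e, norm_mul, RCLike.norm_conj]
      have h3 : 2 * C ≤ N * K := by
        rw [div_le_iff₀ hK] at hN0
        have : (N0 : ℝ) ≤ N := by exact_mod_cast hN
        nlinarith
      calc _ ≤ K * (C + C) := by
            gcongr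
            exact (norm_sub_le _ _).trans (add_le_add (ha hnu N) (ha' hnu' N))
        _ ≤ K * (N * K) := by gcongr; linarith
        _ = _ := by ring
  have hexp : ∀ k, ‖f k + c * (nu ^ k - nu' ^ k)‖ ^ 2 ≤ ‖f k‖ ^ 2 +
      2 * (f k * starRingEnd ℂ (c * (nu ^ k - nu' ^ k))).re + 4 * K ^ 2 := by
    intro k
    have h4 : ‖c * (nu ^ k - nu' ^ k)‖ ≤ 2 * K := by
      rw [norm_mul]
      have : ‖nu ^ k - nu' ^ k‖ ≤ 2 := by
        refine (norm_sub_le _ _).trans ?_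
        rw [norm_pow, norm_pow, hnu, hnu']; norm_num
      nlinarith [norm_nonneg c, norm_nonneg (nu ^ k - nu' ^ k)]
    rw [← Complex.normSq_eq_norm_sq, Complex.normSq_add, Complex.normSq_eq_norm_sq, Complex.normSq_eq_norm_sq]
    nlinarith [norm_nonneg (c * (nu ^ k - nu' ^ k))]
  refine (Finset.sum_le_sum fun k _ => hexp k).trans ?_
  rw [Finset.sum_add_distrib, Finset.sum_add_distrib, ← Finset.mul_sum, ← Complex.re_sum]
  have := (Complex.re_le_norm _).trans hcross
  simp only [Finset.sum_const, Finset.card_range, nsmul_eq_mul]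
  nlinarith

section
variable {X : Type*} [NormedAddCommGroup X] [NormedSpace ℂ X]

lemma pow_eig (T : X →L[ℂ] X) {v : X} {m : ℂ} (h : T v = m • v) (k : ℕ) :
    (T ^ k) v = m ^ k • v := by
  induction k with
  | zero => simp
  | succ k ih => rw [pow_succ', mul_apply_eq_comp, ih, map_smul, h, smul_smul, pow_succ]

lemma span_ap (T : X →L[ℂ] X) (x : ℕ → X) (lam : ℕ → ℂ)
    (heig : ∀ n, T (x n) = lam n • x n) (hmod : ∀ n, ‖lam n‖ = 1) {z : X}
    (hz : z ∈ Submodule.span ℂ (Set.range x)) :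
    Tendsto (fun k : ℕ => (T ^ k) z) bohrF (𝓝 z) := by
  induction hz using Submodule.span_induction with
  | mem y hy =>
    obtain ⟨n, rfl⟩ := hy
    have := (bohr_tendsto (lam n) (hmod n)).smul_const (x n)
    rw [one_smul] at this
    exact this.congr fun k => (pow_eig T (heig n) k).symm
  | zero => simpa using tendsto_const_nhds
  | add a b _ _ ha hb => simpa using ha.add hb
  | smul a b _ hb => simpa using hb.const_smul a

/-- approximation of an eigenvector by others, with a different eigenvalue -/
lemma approx_eig (T : X →L[ℂ] X) (x : ℕ → X) (lam : ℕ → ℂ)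
    (heig : ∀ n, T (x n) = lam n • x n) (hmod : ∀ n, ‖lam n‖ = 1) (hnorm : ∀ n, ‖x n‖ = 1)
    (h3 : ∀ F : Set ℂ, F.Finite →
      F ⊆ {c : ℂ | ‖c‖ = 1 ∧ ∃ v : X, v ≠ 0 ∧ T v = c • v} →
      closure (Set.range x) = closure (x '' {n : ℕ | lam n ∉ F})) (n : ℕ) (r : ℝ) (hr : 0 < r) :
    ∃ m, lam m ≠ lam n ∧ ‖x m - x n‖ < r ∧ ‖lam m - lam n‖ < r := by
  have h := h3 {lam n} (Set.finite_singleton _) (by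
    rintro c rfl
    refine ⟨hmod n, x n, ?_, heig n⟩
    intro h0; have := hnorm n; simp [h0] at this)
  have hm : x n ∈ closure (x '' {m : ℕ | lam m ∉ ({lam n} : Set ℂ)}) := by
    rw [← h]; exact subset_closure ⟨n, rfl⟩
  obtain ⟨_, ⟨m, hm1, rfl⟩, hm2⟩ := Metric.mem_closure_iff.1 hm (r / (‖T‖ + 1)) (by positivity)
  rw [dist_comm, dist_eq_norm, lt_div_iff₀ (by positivity)] at hm2
  have hT := norm_nonneg T
  have hx := norm_nonneg (x m - x n)
  refine ⟨m, hm1, by nlinarith, ?_⟩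
  have e : (lam m - lam n) • x m = T (x m - x n) - lam n • (x m - x n) := by
    rw [map_sub, heig, heig, smul_sub, sub_smul]; abel
  have h5 : ‖lam m - lam n‖ = ‖(lam m - lam n) • x m‖ := by rw [norm_smul, hnorm, mul_one]
  rw [h5, e]
  refine (norm_sub_le _ _).trans_lt ?_
  rw [norm_smul, hmod, one_mul]
  have := T.le_opNorm (x m - x n)
  nlinarith

lemma core (T : X →L[ℂ] X) (x : ℕ → X) (lam : ℕ → ℂ)
    (heig : ∀ n, T (x n) = lam n • x n) (hmod : ∀ n, ‖lam n‖ = 1) (hnorm : ∀ n, ‖x n‖ = 1)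
    (h3 : ∀ F : Set ℂ, F.Finite →
      F ⊆ {c : ℂ | ‖c‖ = 1 ∧ ∃ v : X, v ≠ 0 ∧ T v = c • v} →
      closure (Set.range x) = closure (x '' {n : ℕ | lam n ∉ F})) (n : ℕ)
    (z : X) (hz : z ∈ Submodule.span ℂ (Set.range x)) (c : ℂ) (K : ℝ) (hK : 0 < K) (hc : ‖c‖ ≤ K)
    (j : ℕ) : ∀ ε : ℝ, 0 < ε →
    ∃ p ∈ Submodule.span ℂ (Set.range x), ∃ f : ℕ → ℂ, QProp (lam n) f ∧
      (∀ k, ‖(T ^ k) p - f k • x n‖ ≤ ε) ∧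
      (∀ N : ℕ, ∑ k ∈ Finset.range N, ‖f k‖ ^ 2 ≤ 6 * j * K ^ 2 * N) ∧
      ∃ k, ‖(T ^ k) (z + p) - (z + (2 * j * c) • x n)‖ < ε := by
  induction j with
  | zero =>
    intro ε hε
    exact ⟨0, zero_mem _, fun _ => 0, QProp.zero _, by simp [hε.le], by simp, 0, by simpa using hε⟩
  | succ j ih =>
    intro ε hε
    obtain ⟨p, hp, f, hQ, hpf, hsm, k1, hk1⟩ := ih (ε / 2) (half_pos hε)
    set mu := lam n with hmu
    have hmu1 : ‖mu‖ = 1 := hmod n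
    have hmu0 : mu ≠ 0 := by intro h; simp [h] at hmu1
    set c' := c * (mu ^ k1)⁻¹ with hc'
    have hc'K : ‖c'‖ ≤ K := by rw [hc', norm_mul, norm_inv, norm_pow, hmu1]; simpa using hc
    have hc'1 : mu ^ k1 * c' = c := by rw [hc']; field_simp
    obtain ⟨r, hr, hstep⟩ := second_moment_step mu f hQ K hK
    set M := (‖T ^ k1‖ + 1) * (1 + 4 * K) with hM
    have hT1 := norm_nonneg (T ^ k1)
    have hMpos : 0 < M := by positivity
    set d := ε / (4 * M) with hd
    have hdpos : 0 < d := by positivity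
    have hdM : d * M = ε / 4 := by rw [hd]; field_simp
    have hM2 : 2 * K ≤ M := by rw [hM]; nlinarith
    obtain ⟨m1, hne1, hx1, hl1⟩ := approx_eig T x lam heig hmod hnorm h3 n (min r d) (lt_min hr hdpos)
    set v := z + p + c' • x m1 with hv
    have hvs : v ∈ Submodule.span ℂ (Set.range x) :=
      add_mem (add_mem hz hp) (Submodule.smul_mem _ _ (Submodule.subset_span ⟨m1, rfl⟩))
    have hA : {k : ℕ | ‖(T ^ k) v - v‖ < d ∧ ‖mu ^ k - 1‖ < d} ∈ bohrF := by
      have e1 := (Metric.tendsto_nhds.1 (span_ap T x lam heig hmod hvs)) d hdpos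
      have e2 := (Metric.tendsto_nhds.1 (bohr_tendsto mu hmu1)) d hdpos
      filter_upwards [e1, e2] with k g1 g2
      rw [dist_eq_norm] at g1 g2
      exact ⟨g1, g2⟩
    obtain ⟨r2, hr2, hneg⟩ := synd_near_neg _ hA mu hmu1 d hdpos
    obtain ⟨m2, hne2, hx2, hl2⟩ := approx_eig T x lam heig hmod hnorm h3 n (min r2 (min r d))
      (lt_min hr2 (lt_min hr hdpos))
    simp only [lt_min_iff] at hx1 hl1 hx2 hl2
    obtain ⟨k, ⟨hkA1, hkA2⟩, hk⟩ := hneg (lam m2) (hmod m2) hne2 hl2.1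
    refine ⟨p + c' • (x m1 - x m2), ?_, fun k => f k + c' * (lam m1 ^ k - lam m2 ^ k), ?_, ?_, ?_, k1 + k, ?_⟩
    · exact add_mem hp (Submodule.smul_mem _ _ (sub_mem (Submodule.subset_span ⟨m1, rfl⟩)
        (Submodule.subset_span ⟨m2, rfl⟩)))
    · have := hQ.add ((QProp.pow c' (lam m1) (hmod m1) hne1).add (QProp.pow (-c') (lam m2) (hmod m2) hne2))
      convert this using 2
      ring
    · intro k
      have e : (T ^ k) (p + c' • (x m1 - x m2)) - (f k + c' * (lam m1 ^ k - lam m2 ^ k)) • x n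
          = ((T ^ k) p - f k • x n) + c' • (lam m1 ^ k • (x m1 - x n) - lam m2 ^ k • (x m2 - x n)) := by
        rw [map_add, map_smul, map_sub, pow_eig T (heig m1), pow_eig T (heig m2)]
        module
      rw [e]
      have e2 : ‖lam m1 ^ k • (x m1 - x n) - lam m2 ^ k • (x m2 - x n)‖ ≤ d + d := by
        refine (norm_sub_le _ _).trans ?_
        rw [norm_smul, norm_smul, norm_pow, norm_pow, hmod, hmod, one_pow, one_mul, one_mul]
        linarith [hx1.2, hx2.2.2]
      refine (norm_add_le _ _).trans ?_
      rw [norm_smul]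
      have : ‖c'‖ * ‖lam m1 ^ k • (x m1 - x n) - lam m2 ^ k • (x m2 - x n)‖ ≤ K * (d + d) := by
        gcongr
      have := hpf k
      nlinarith
    · intro N
      refine (hstep (lam m1) (lam m2) c' (hmod m1) (hmod m2) hc'K hl1.1 hl2.2.1 N).trans ?_
      have := hsm N
      push_cast
      linarith
    · set s := (T ^ k) v - v + c' • (x m1 - x n) - c' • (lam m2 ^ k • (x m2 - x n)
        + (lam m2 ^ k + mu ^ k) • x n - (mu ^ k - 1) • x n) with hs
      have e : (T ^ (k1 + k)) (z + (p + c' • (x m1 - x m2))) - (z + (2 * ((j + 1 : ℕ) : ℂ) * c) • x n)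
          = ((T ^ k1) (z + p) - (z + (2 * j * c) • x n)) + (T ^ k1) s := by
        have e1 : (T ^ k) (z + (p + c' • (x m1 - x m2))) = (z + p) + (2 * c') • x n + s := by
          rw [hs, hv]
          simp only [map_add, map_smul, map_sub]
          rw [pow_eig T (heig m2)]
          module
        rw [pow_add, mul_apply_eq_comp, e1, map_add, map_add, map_smul, pow_eig T (heig n),
          smul_smul, show 2 * c' * lam n ^ k1 = 2 * c by rw [← hc'1]; ring]
        push_cast
        module
      rw [e]
      have hsn : ‖s‖ ≤ d * (1 + 4 * K) := by
        have t1 : ‖lam m2 ^ k • (x m2 - x n) + (lam m2 ^ k + mu ^ k) • x n - (mu ^ k - 1) • x n‖ ≤ d + d + d := by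
          refine (norm_sub_le _ _).trans (add_le_add ((norm_add_le _ _).trans (add_le_add ?_ ?_)) ?_)
          · rw [norm_smul, norm_pow, hmod, one_pow, one_mul]; exact hx2.2.2.le
          · rw [norm_smul, hnorm, mul_one]; exact hk
          · rw [norm_smul, hnorm, mul_one]; exact hkA2.le
        have t2 : ‖c' • (x m1 - x n)‖ ≤ K * d := by
          rw [norm_smul]; gcongr; exact hx1.2.le
        have t3 : ‖c' • (lam m2 ^ k • (x m2 - x n)
        + (lam m2 ^ k + mu ^ k) • x n - (mu ^ k - 1) • x n)‖ ≤ K * (d + d + d) := by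
          rw [norm_smul]; gcongr
        rw [hs]
        refine (norm_sub_le _ _).trans ?_
        have := norm_add_le ((T ^ k) v - v) (c' • (x m1 - x n))
        linarith
      have hTs : ‖(T ^ k1) s‖ ≤ ε / 4 := by
        refine ((T ^ k1).le_opNorm s).trans ?_
        rw [← hdM, hM]
        calc _ ≤ ‖T ^ k1‖ * (d * (1 + 4 * K)) := by gcongr
          _ ≤ (‖T ^ k1‖ + 1) * (d * (1 + 4 * K)) := by gcongr; linarith
          _ = _ := by ring
      have := norm_add_le ((T ^ k1) (z + p) - (z + (2 * j * c) • x n)) ((T ^ k1) s)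
      linarith
end

open scoped Classical in
noncomputable def cnt (A : Set ℕ) (N : ℕ) : ℕ :=
  ((Finset.range N).filter (fun n => n ∈ A)).card

lemma cnt_mono {A B : Set ℕ} (h : A ⊆ B) (N : ℕ) : cnt A N ≤ cnt B N := by
  classical
  unfold cnt
  exact Finset.card_le_card (Finset.monotone_filter_right _ fun n _ hn => h hn)

lemma cnt_union (A B : Set ℕ) (N : ℕ) : cnt (A ∪ B) N ≤ cnt A N + cnt B N := by
  classical
  unfold cnt
  refine le_trans (Finset.card_le_card ?_) (Finset.card_union_le _ _)
  intro k hk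
  simp only [Finset.mem_filter, Finset.mem_union, Set.mem_union] at hk ⊢
  tauto

/-- Markov inequality -/
lemma cnt_markov (f : ℕ → ℂ) (N : ℕ) (t S : ℝ) (ht : 0 < t)
    (h : ∑ k ∈ Finset.range N, ‖f k‖ ^ 2 ≤ S) :
    (cnt {k | t < ‖f k‖} N : ℝ) * t ^ 2 ≤ S := by
  classical
  refine le_trans ?_ h
  unfold cnt
  calc _ = ∑ k ∈ (Finset.range N).filter (fun n => n ∈ {k | t < ‖f k‖}), t ^ 2 := by simp
    _ ≤ ∑ k ∈ (Finset.range N).filter (fun n => n ∈ {k | t < ‖f k‖}), ‖f k‖ ^ 2 := by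
      refine Finset.sum_le_sum fun k hk => ?_
      have : t < ‖f k‖ := by simpa using (Finset.mem_filter.1 hk).2
      gcongr
    _ ≤ _ := Finset.sum_le_sum_of_subset_of_nonneg (Finset.filter_subset _ _) (fun _ _ _ => by positivity)

lemma cnt_synd (A : Set ℕ) (L : ℕ) (hL : ∀ n : ℕ, ∃ k, n ≤ k ∧ k ≤ n + L ∧ k ∈ A) (N : ℕ) :
    (N : ℝ) / (L + 1) - 1 ≤ cnt A N := by
  classical
  have h : ∀ q : ℕ, q ≤ cnt A (q * (L + 1)) := by
    intro q
    induction q with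
    | zero => simp
    | succ q ih =>
      obtain ⟨k, h1, h2, h3⟩ := hL (q * (L + 1))
      have hk : k ∉ (Finset.range (q * (L + 1))).filter (fun n => n ∈ A) := by
        simp; omega
      have : insert k ((Finset.range (q * (L + 1))).filter (fun n => n ∈ A)) ⊆
          (Finset.range ((q + 1) * (L + 1))).filter (fun n => n ∈ A) := by
        intro i hi
        rw [Finset.mem_insert, Finset.mem_filter, Finset.mem_range] at hi
        rw [Finset.mem_filter, Finset.mem_range, Nat.succ_mul]
        rcases hi with rfl | ⟨hi, hi2⟩
        · exact ⟨by omega, h3⟩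
        · exact ⟨by omega, hi2⟩
      have h4 := Finset.card_le_card this
      rw [Finset.card_insert_of_notMem hk] at h4
      unfold cnt at ih ⊢
      omega
  have h1 := h (N / (L + 1))
  have h2 : cnt A (N / (L + 1) * (L + 1)) ≤ cnt A N := by
    unfold cnt
    exact Finset.card_le_card (Finset.filter_subset_filter _ (Finset.range_mono (Nat.div_mul_le_self _ _)))
  have h3 : N < (N / (L + 1) + 1) * (L + 1) := by
    have := Nat.lt_div_mul_add (a := N) (b := L + 1) (by omega)
    rw [Nat.succ_mul]; omega
  have h4 : (N : ℝ) ≤ ((N / (L + 1) : ℕ) + 1) * (L + 1) := by exact_mod_cast h3.le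
  have h5 : ((N / (L + 1) : ℕ) : ℝ) ≤ cnt A N := by exact_mod_cast h1.trans h2
  have h6 : (N : ℝ) / (L + 1) ≤ ((N / (L + 1) : ℕ) : ℝ) + 1 := by
    rw [div_le_iff₀ (by positivity)]; exact h4
  linarith

lemma cnt_iUnion (B : ℕ → Set ℕ) (q : ℕ → ℝ) (m : ℕ) (hq0 : ∀ l, 0 ≤ q l)
    (hq : ∀ l, q (l + 1) ≤ q l / 2)
    (hB : ∀ l N, (cnt (B l) N : ℝ) ≤ q l * N) (N : ℕ) :
    (cnt {k | ∃ l, m ≤ l ∧ k ∈ B l} N : ℝ) ≤ 2 * q m * N := by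
  classical
  have hfin : ∀ j : ℕ, (cnt {k | ∃ l, m ≤ l ∧ l < m + j ∧ k ∈ B l} N : ℝ) ≤ (2 * q m - 2 * q (m + j)) * N := by
    intro j
    induction j with
    | zero =>
      have : {k | ∃ l, m ≤ l ∧ l < m + 0 ∧ k ∈ B l} = ∅ := by
        ext k; simp; intros; omega
      rw [this]; simp [cnt]
    | succ j ih =>
      have h1 : {k | ∃ l, m ≤ l ∧ l < m + (j + 1) ∧ k ∈ B l} ⊆
          {k | ∃ l, m ≤ l ∧ l < m + j ∧ k ∈ B l} ∪ B (m + j) := by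
        rintro k ⟨l, h1, h2, h3⟩
        rcases Nat.lt_or_ge l (m + j) with h | h
        · exact Or.inl ⟨l, h1, h, h3⟩
        · right; rwa [show m + j = l by omega]
      have h2 := (cnt_mono h1 N).trans (cnt_union _ _ N)
      have h2' : (cnt {k | ∃ l, m ≤ l ∧ l < m + (j + 1) ∧ k ∈ B l} N : ℝ) ≤
        cnt {k | ∃ l, m ≤ l ∧ l < m + j ∧ k ∈ B l} N + cnt (B (m + j)) N := by exact_mod_cast h2
      have h3 := hB (m + j) N
      have h4 := hq (m + j)
      have hN : (0 : ℝ) ≤ N := by positivity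
      have h5 : q (m + j + 1) * N ≤ q (m + j) / 2 * N := by gcongr
      rw [show m + (j + 1) = m + j + 1 by ring] at h2' ⊢
      linarith
  have hgeo : ∀ j, q (m + j) ≤ q m * (1 / 2) ^ j := by
    intro j
    induction j with
    | zero => simp
    | succ j ih => have := hq (m + j); rw [pow_succ, ← add_assoc]; linarith
  obtain ⟨j, hj⟩ : ∃ j : ℕ, q m * N * (1 / 2) ^ j < 1 := by
    have : Tendsto (fun j : ℕ => q m * N * (1 / 2 : ℝ) ^ j) atTop (𝓝 (q m * N * 0)) :=
      (tendsto_pow_atTop_nhds_zero_of_lt_one (by norm_num) (by norm_num)).const_mul _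
    rw [mul_zero] at this
    exact (this.eventually (gt_mem_nhds one_pos)).exists
  have hempty : ∀ l, m + j ≤ l → cnt (B l) N = 0 := by
    intro l hl
    obtain ⟨i, rfl⟩ := Nat.exists_eq_add_of_le hl
    have h1 := hB (m + j + i) N
    have h2 := hgeo (j + i)
    have h3 : ((1 : ℝ) / 2) ^ (j + i) ≤ (1 / 2) ^ j := pow_le_pow_of_le_one (by norm_num) (by norm_num) (by omega)
    have h4 : (cnt (B (m + j + i)) N : ℝ) < 1 := by
      refine lt_of_le_of_lt (h1.trans ?_) hj
      rw [mul_assoc, mul_comm (N : ℝ), ← mul_assoc]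
      gcongr
      rw [add_assoc]
      exact h2.trans (mul_le_mul_of_nonneg_left h3 (hq0 m))
    have : cnt (B (m + j + i)) N < 1 := by exact_mod_cast h4
    omega
  have hle : cnt {k | ∃ l, m ≤ l ∧ k ∈ B l} N ≤ cnt {k | ∃ l, m ≤ l ∧ l < m + j ∧ k ∈ B l} N := by
    unfold cnt
    refine Finset.card_le_card fun k hk => ?_
    rw [Finset.mem_filter] at hk ⊢
    obtain ⟨hk1, l, hl, hkl⟩ := hk
    refine ⟨hk1, l, hl, ?_, hkl⟩
    by_contra hcon
    have h0 := hempty l (by omega)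
    unfold cnt at h0
    rw [Finset.card_eq_zero] at h0
    have : k ∈ (Finset.range N).filter (fun n => n ∈ B l) := Finset.mem_filter.2 ⟨hk1, hkl⟩
    rw [h0] at this
    simp at this
  have hle' : (cnt {k | ∃ l, m ≤ l ∧ k ∈ B l} N : ℝ) ≤ cnt {k | ∃ l, m ≤ l ∧ l < m + j ∧ k ∈ B l} N := by
    exact_mod_cast hle
  refine (hle'.trans (hfin j)).trans ?_
  have := hq0 (m + j)
  gcongr; linarith

lemma lowerDensity_pos (A S B : Set ℕ) (L : ℕ) (hL : ∀ n : ℕ, ∃ k, n ≤ k ∧ k ≤ n + L ∧ k ∈ S)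
    (hB : ∀ N, (cnt B N : ℝ) ≤ 1 / (4 * (L + 1)) * N) (hA : ∀ k ∈ S, k ∉ B → k ∈ A) :
    0 < lowerDensity A := by
  classical
  have hpos : (0 : ℝ) < 1 / (2 * (L + 1)) := by positivity
  refine lt_of_lt_of_le hpos ?_
  unfold lowerDensity
  refine le_liminf_of_le ?_ ?_
  · refine IsBoundedUnder.isCoboundedUnder_ge ?_
    refine isBoundedUnder_of ⟨1, fun N => ?_⟩
    show (_ : ℝ) / N ≤ 1
    refine div_le_one_of_le₀ ?_ (by positivity)
    exact_mod_cast (Finset.card_filter_le _ _).trans (by simp)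
  · filter_upwards [eventually_ge_atTop (4 * (L + 1))] with N hN
    have hNpos : (0 : ℝ) < N := by exact_mod_cast (by omega : 0 < N)
    have hN' : (4 * (L + 1) : ℝ) ≤ N := by exact_mod_cast hN
    rw [le_div_iff₀ hNpos]
    change _ ≤ (cnt A N : ℝ)
    have h1 := cnt_synd S L hL N
    have h2 : cnt S N ≤ cnt A N + cnt B N :=
      (cnt_mono (fun k hk => by
        by_cases h : k ∈ B
        · exact Or.inr h
        · exact Or.inl (hA k hk h)) N).trans (cnt_union A B N)
    have h2' : (cnt S N : ℝ) ≤ cnt A N + cnt B N := by exact_mod_cast h2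
    have h3 := hB N
    have e1 : (1 : ℝ) / (2 * (L + 1)) * N = 2 * (N / (4 * (L + 1))) := by field_simp; ring
    have e2 : (1 : ℝ) / (4 * (L + 1)) * N = N / (4 * (L + 1)) := by field_simp
    have e3 : (N : ℝ) / (L + 1) = 4 * (N / (4 * (L + 1))) := by field_simp
    have e4 : 1 ≤ (N : ℝ) / (4 * (L + 1)) := by rw [le_div_iff₀ (by positivity)]; linarith
    rw [e1]; rw [e2] at h3; rw [e3] at h1
    linarith

section
variable {X : Type*} [NormedAddCommGroup X] [NormedSpace ℂ X]

lemma core2 (T : X →L[ℂ] X) (x : ℕ → X) (lam : ℕ → ℂ)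
    (heig : ∀ n, T (x n) = lam n • x n) (hmod : ∀ n, ‖lam n‖ = 1) (hnorm : ∀ n, ‖x n‖ = 1)
    (h3 : ∀ F : Set ℂ, F.Finite →
      F ⊆ {c : ℂ | ‖c‖ = 1 ∧ ∃ v : X, v ≠ 0 ∧ T v = c • v} →
      closure (Set.range x) = closure (x '' {n : ℕ | lam n ∉ F})) (n : ℕ)
    (z : X) (hz : z ∈ Submodule.span ℂ (Set.range x)) (a : ℂ) (ε η : ℝ) (hε : 0 < ε) (hη : 0 < η) :
    ∃ p ∈ Submodule.span ℂ (Set.range x),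
      (∃ k, ‖(T ^ k) (z + p) - (z + a • x n)‖ < ε) ∧
      ∀ N : ℕ, (cnt {k | ε < ‖(T ^ k) p‖} N : ℝ) ≤ η * N := by
  obtain ⟨M0, hM0⟩ := exists_nat_ge (6 * (‖a‖ + 1) ^ 2 / (η * ε ^ 2))
  set M := M0 + 1 with hM
  have hMp : (0 : ℝ) < M := by positivity
  have hMc : (M : ℂ) ≠ 0 := by exact_mod_cast (by omega : M ≠ 0)
  have hM1 : 6 * (‖a‖ + 1) ^ 2 ≤ M * (η * ε ^ 2) := by
    have : (M0 : ℝ) ≤ M := by rw [hM]; push_cast; linarith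
    exact (div_le_iff₀ (by positivity)).1 (hM0.trans this)
  have ha := norm_nonneg a
  obtain ⟨p, hp, f, -, hpf, hsm, k, hk⟩ := core T x lam heig hmod hnorm h3 n z hz (a / (2 * M))
    ((‖a‖ + 1) / (2 * M)) (by positivity) (by
      rw [norm_div, norm_mul, Complex.norm_natCast]
      have : ‖(2 : ℂ)‖ = 2 := by simp
      rw [this]; gcongr; linarith) M (ε / 2) (half_pos hε)
  refine ⟨p, hp, ⟨k, ?_⟩, fun N => ?_⟩
  · rw [show 2 * (M : ℂ) * (a / (2 * M)) = a by field_simp] at hk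
    linarith
  · have h1 : {k | ε < ‖(T ^ k) p‖} ⊆ {k | ε / 2 < ‖f k‖} := by
      intro k hk
      have h2 := hpf k
      have h3 : ‖(T ^ k) p‖ ≤ ‖(T ^ k) p - f k • x n‖ + ‖f k • x n‖ := by
        simpa using norm_add_le ((T ^ k) p - f k • x n) (f k • x n)
      rw [norm_smul, hnorm, mul_one] at h3
      have hk' : ε < ‖(T ^ k) p‖ := hk
      show ε / 2 < ‖f k‖
      linarith
    have h2 := cnt_markov f N (ε / 2) _ (half_pos hε) (hsm N)
    have h3 : (cnt {k | ε < ‖(T ^ k) p‖} N : ℝ) ≤ cnt {k | ε / 2 < ‖f k‖} N := by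
      exact_mod_cast cnt_mono h1 N
    refine h3.trans ?_
    have e : 6 * (M : ℝ) * ((‖a‖ + 1) / (2 * M)) ^ 2 * N = 6 * (‖a‖ + 1) ^ 2 / (4 * M) * N := by
      field_simp; ring
    rw [e] at h2
    have h4 : 6 * (‖a‖ + 1) ^ 2 / (4 * M) ≤ η * (ε / 2) ^ 2 := by
      rw [div_le_iff₀ (by positivity)]; linarith
    have h5 : (cnt {k | ε / 2 < ‖f k‖} N : ℝ) * (ε / 2) ^ 2 ≤ (η * N) * (ε / 2) ^ 2 := by
      refine h2.trans ?_
      calc _ ≤ η * (ε / 2) ^ 2 * N := by gcongr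
        _ = _ := by ring
    exact le_of_mul_le_mul_right h5 (by positivity)

lemma core3 (T : X →L[ℂ] X) (x : ℕ → X) (lam : ℕ → ℂ)
    (heig : ∀ n, T (x n) = lam n • x n) (hmod : ∀ n, ‖lam n‖ = 1) (hnorm : ∀ n, ‖x n‖ = 1)
    (h3 : ∀ F : Set ℂ, F.Finite →
      F ⊆ {c : ℂ | ‖c‖ = 1 ∧ ∃ v : X, v ≠ 0 ∧ T v = c • v} →
      closure (Set.range x) = closure (x '' {n : ℕ | lam n ∉ F}))
    (z : X) (hz : z ∈ Submodule.span ℂ (Set.range x)) (s : Finset ℕ) (a : ℕ → ℂ) :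
    ∀ (ε η : ℝ), 0 < ε → 0 < η →
    ∃ p ∈ Submodule.span ℂ (Set.range x),
      (∃ k, ‖(T ^ k) (z + p) - (z + ∑ i ∈ s, a i • x i)‖ < ε) ∧
      ∀ N : ℕ, (cnt {k | ε < ‖(T ^ k) p‖} N : ℝ) ≤ η * N := by
  classical
  induction s using Finset.induction_on with
  | empty =>
    intro ε η hε hη
    refine ⟨0, zero_mem _, ⟨0, by simpa using hε⟩, fun N => ?_⟩
    have : {k : ℕ | ε < ‖(T ^ k) (0 : X)‖} = ∅ := by ext k; simp [hε.le]
    rw [this]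
    simp [cnt]; positivity
  | insert n s hn ih =>
    intro ε η hε hη
    obtain ⟨p, hp, ⟨k1, hk1⟩, hcp⟩ := ih (ε / 2) (η / 2) (half_pos hε) (half_pos hη)
    have hmu0 : lam n ^ k1 ≠ 0 := by
      apply pow_ne_zero; intro h; have := hmod n; simp [h] at this
    set d := ε / (2 * (‖T ^ k1‖ + 1)) with hd
    have hT := norm_nonneg (T ^ k1)
    have hdp : 0 < d := by positivity
    have hd1 : (‖T ^ k1‖ + 1) * d = ε / 2 := by rw [hd]; field_simp
    have hd2 : d ≤ ε / 2 := by nlinarith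
    obtain ⟨p2, hp2, ⟨k2, hk2⟩, hcp2⟩ := core2 T x lam heig hmod hnorm h3 n (z + p) (add_mem hz hp)
      (a n * (lam n ^ k1)⁻¹) d (η / 2) hdp (half_pos hη)
    refine ⟨p + p2, add_mem hp hp2, ⟨k1 + k2, ?_⟩, fun N => ?_⟩
    · rw [Finset.sum_insert hn]
      set w := (T ^ k2) (z + p + p2) - (z + p + (a n * (lam n ^ k1)⁻¹) • x n) with hw
      have e : (T ^ (k1 + k2)) (z + (p + p2)) - (z + (a n • x n + ∑ i ∈ s, a i • x i)) =
          ((T ^ k1) (z + p) - (z + ∑ i ∈ s, a i • x i)) + (T ^ k1) w := by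
        have e1 : (T ^ k2) (z + (p + p2)) = (z + p) + (a n * (lam n ^ k1)⁻¹) • x n + w := by
          rw [hw, ← add_assoc]; abel
        rw [pow_add, mul_apply_eq_comp, e1, map_add, map_add, map_smul, pow_eig T (heig n),
          smul_smul, mul_assoc, inv_mul_cancel₀ hmu0, mul_one]
        abel
      rw [e]
      have h5 : ‖(T ^ k1) w‖ ≤ ε / 2 := by
        refine ((T ^ k1).le_opNorm w).trans ?_
        rw [← hd1]
        gcongr; linarith
      have := norm_add_le ((T ^ k1) (z + p) - (z + ∑ i ∈ s, a i • x i)) ((T ^ k1) w)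
      linarith
    · have h1 : {k | ε < ‖(T ^ k) (p + p2)‖} ⊆ {k | ε / 2 < ‖(T ^ k) p‖} ∪ {k | d < ‖(T ^ k) p2‖} := by
        intro k hk
        by_contra hcon
        simp only [Set.mem_union, Set.mem_ofPred_eq, not_or, not_lt, map_add] at hcon hk
        have := norm_add_le ((T ^ k) p) ((T ^ k) p2)
        linarith [hcon.1, hcon.2]
      have h2 : (cnt {k | ε < ‖(T ^ k) (p + p2)‖} N : ℝ) ≤
          cnt {k | ε / 2 < ‖(T ^ k) p‖} N + cnt {k | d < ‖(T ^ k) p2‖} N := by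
        exact_mod_cast (cnt_mono h1 N).trans (cnt_union _ _ N)
      linarith [hcp N, hcp2 N]

lemma core4 (T : X →L[ℂ] X) (x : ℕ → X) (lam : ℕ → ℂ)
    (heig : ∀ n, T (x n) = lam n • x n) (hmod : ∀ n, ‖lam n‖ = 1) (hnorm : ∀ n, ‖x n‖ = 1)
    (h3 : ∀ F : Set ℂ, F.Finite →
      F ⊆ {c : ℂ | ‖c‖ = 1 ∧ ∃ v : X, v ≠ 0 ∧ T v = c • v} →
      closure (Set.range x) = closure (x '' {n : ℕ | lam n ∉ F}))
    (z : X) (hz : z ∈ Submodule.span ℂ (Set.range x)) (u : X)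
    (hu : u ∈ Submodule.span ℂ (Set.range x)) (ε η : ℝ) (hε : 0 < ε) (hη : 0 < η) :
    ∃ p ∈ Submodule.span ℂ (Set.range x), ∃ L : ℕ,
      (∀ n : ℕ, ∃ k, n ≤ k ∧ k ≤ n + L ∧ k ∈ {k : ℕ | ‖(T ^ k) (z + p) - u‖ < ε}) ∧
      ∀ N : ℕ, (cnt {k | ε < ‖(T ^ k) p‖} N : ℝ) ≤ η * N := by
  obtain ⟨a, ha⟩ := (Finsupp.mem_span_range_iff_exists_finsupp).1 (sub_mem hu hz)
  obtain ⟨p, hp, ⟨k, hk⟩, hc⟩ := core3 T x lam heig hmod hnorm h3 z hz a.support a ε η hε hη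
  have e : z + ∑ i ∈ a.support, a i • x i = u := by
    have : ∑ i ∈ a.support, a i • x i = u - z := ha
    rw [this]; abel
  rw [e] at hk
  have h1 : Tendsto (fun q : ℕ => ‖(T ^ k) ((T ^ q) (z + p)) - u‖) bohrF
      (𝓝 ‖(T ^ k) (z + p) - u‖) :=
    ((((T ^ k).continuous.tendsto _).comp (span_ap T x lam heig hmod (add_mem hz hp))).sub_const u).norm
  obtain ⟨L, hL⟩ := bohr_synd (h1.eventually (gt_mem_nhds hk))
  refine ⟨p, hp, L + k, fun n => ?_, hc⟩
  obtain ⟨q, hq1, hq2, hq3⟩ := hL n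
  refine ⟨k + q, by omega, by omega, ?_⟩
  have hq4 : ‖(T ^ k) ((T ^ q) (z + p)) - u‖ < ε := hq3
  show ‖(T ^ (k + q)) (z + p) - u‖ < ε
  rwa [pow_add, mul_apply_eq_comp]
end

/-- If `T` satisfies assumption (H'): there is a sequence `(x n)` of unit
eigenvectors of `T` with unimodular eigenvalues `lam n`, whose span is dense, and
such that for any finite set `F` of unimodular eigenvalues of `T` the closure of
`{x n : n ≥ 1}` equals the closure of `{x n : lam n ∉ F}`, then `T` is frequently
hypercyclic. -/
theorem assumptionH'_implies_frequentlyHypercyclic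
    {X : Type*} [NormedAddCommGroup X] [NormedSpace ℂ X] [CompleteSpace X]
    [TopologicalSpace.SeparableSpace X] (hdim : ¬ FiniteDimensional ℂ X)
    (T : X →L[ℂ] X) (x : ℕ → X) (lam : ℕ → ℂ)
    (heig : ∀ n, T (x n) = lam n • x n)
    (hmod : ∀ n, ‖lam n‖ = 1) (hnorm : ∀ n, ‖x n‖ = 1)
    (h2 : Dense (Submodule.span ℂ (Set.range x) : Set X))
    (h3 : ∀ F : Set ℂ, F.Finite →
      F ⊆ {c : ℂ | ‖c‖ = 1 ∧ ∃ v : X, v ≠ 0 ∧ T v = c • v} →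
      closure (Set.range x) = closure (x '' {n : ℕ | lam n ∉ F})) :
    FrequentlyHypercyclic T := by

  obtain ⟨d, hd⟩ := TopologicalSpace.exists_dense_seq X
  set P := Submodule.span ℂ (Set.range x) with hP
  have hu : ∀ m : ℕ, ∃ u ∈ P, ‖u - d (Nat.unpair m).1‖ < (1 / 2 : ℝ) ^ m := by
    intro m
    obtain ⟨u, hu1, hu2⟩ := Metric.dense_iff.1 h2 (d (Nat.unpair m).1) ((1 / 2 : ℝ) ^ m) (by positivity)
    exact ⟨u, hu2, by rwa [Metric.mem_ball, dist_eq_norm] at hu1⟩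
  choose u huP hud using hu
  have hstep : ∀ (m : ℕ) (s : P × Set.Ioo (0 : ℝ) 1), ∃ p : P, ∃ L : ℕ,
      (∀ n : ℕ, ∃ k, n ≤ k ∧ k ≤ n + L ∧
        k ∈ {k : ℕ | ‖(T ^ k) ((s.1 : X) + p) - u m‖ < (1 / 2 : ℝ) ^ m}) ∧
      ∀ N : ℕ, (cnt {k | (1 / 2 : ℝ) ^ m < ‖(T ^ k) (p : X)‖} N : ℝ) ≤ s.2 * N := by
    intro m s
    obtain ⟨p, hp, L, h⟩ := core4 T x lam heig hmod hnorm h3 s.1 s.1.2 (u m) (huP m)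
      ((1 / 2 : ℝ) ^ m) s.2 (by positivity) s.2.2.1
    exact ⟨⟨p, hp⟩, L, h⟩
  choose p L hL hcnt using hstep
  have hqn : ∀ (m : ℕ) (s : P × Set.Ioo (0 : ℝ) 1),
      min ((s.2 : ℝ) / 2) (1 / (8 * ((L m s : ℝ) + 1))) ∈ Set.Ioo (0 : ℝ) 1 := by
    intro m s
    refine ⟨lt_min (half_pos s.2.2.1) (by positivity), (min_le_left _ _).trans_lt ?_⟩
    have := s.2.2.2; have := s.2.2.1; linarith
  let st : ℕ → P × Set.Ioo (0 : ℝ) 1 := fun m =>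
    Nat.rec (0, ⟨1 / 2, by norm_num, by norm_num⟩) (fun m s => (s.1 + p m s, ⟨_, hqn m s⟩)) m
  have hst : ∀ m, st (m + 1) = ((st m).1 + p m (st m), ⟨_, hqn m (st m)⟩) := fun m => rfl
  let φ : ℕ → X := fun m => ((st m).1 : X)
  let ψ : ℕ → X := fun m => (p m (st m) : X)
  let q : ℕ → ℝ := fun m => ((st m).2 : ℝ)
  let B : ℕ → Set ℕ := fun m => {k | (1 / 2 : ℝ) ^ m < ‖(T ^ k) (ψ m)‖}
  have hφ : ∀ m, φ (m + 1) = φ m + ψ m := fun m => by simp only [φ, ψ, hst]; rfl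
  have hq0 : ∀ m, 0 < q m := fun m => (st m).2.2.1
  have hq1 : ∀ m, q m < 1 := fun m => (st m).2.2.2
  have hqh : ∀ m, q (m + 1) ≤ q m / 2 := fun m => by
    simp only [q, hst]; exact min_le_left _ _
  have hqL : ∀ m, q (m + 1) ≤ 1 / (8 * ((L m (st m) : ℝ) + 1)) := fun m => by
    simp only [q, hst]; exact min_le_right _ _
  have hB : ∀ l N, (cnt (B l) N : ℝ) ≤ q l * N := fun l N => hcnt l (st l) N
  have hψ : ∀ m, ‖ψ m‖ ≤ (1 / 2 : ℝ) ^ m := by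
    intro m
    by_contra hcon
    have h1 : (cnt (B m) 1 : ℝ) < 1 := by
      have := hB m 1
      have := hq1 m
      push_cast at *; linarith
    have h1' : cnt (B m) 1 < 1 := by exact_mod_cast h1
    have h0 : (0 : ℕ) ∈ B m := by
      show (1 / 2 : ℝ) ^ m < ‖(T ^ 0) (ψ m)‖
      simpa using hcon
    classical
    have : cnt (B m) 1 = 1 := by simp [cnt, Finset.filter_singleton, h0]
    omega
  have hcau : CauchySeq φ := by
    refine cauchySeq_of_le_geometric (1 / 2) 1 (by norm_num) fun m => ?_
    rw [hφ, dist_eq_norm, one_mul]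
    simpa using hψ m
  obtain ⟨v, hv⟩ := cauchySeq_tendsto_of_complete hcau
  refine ⟨v, fun U hU hne => ?_⟩
  obtain ⟨y, hy⟩ := hne
  obtain ⟨r, hr, hrU⟩ := Metric.isOpen_iff.1 hU y hy
  obtain ⟨_, ⟨i, rfl⟩, hi⟩ := Metric.mem_closure_iff.1 (hd y) (r / 2) (half_pos hr)
  obtain ⟨j, hj⟩ : ∃ j : ℕ, (1 / 2 : ℝ) ^ j < r / 6 :=
    exists_pow_lt_of_lt_one (by positivity) (by norm_num)
  set m := Nat.pair i j with hm
  have hmj : ((1 : ℝ) / 2) ^ m ≤ (1 / 2) ^ j :=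
    pow_le_pow_of_le_one (by norm_num) (by norm_num) (Nat.right_le_pair i j)
  have hudm : ‖u m - d i‖ < (1 / 2 : ℝ) ^ m := by
    have := hud m
    rwa [hm, Nat.unpair_pair] at this
  refine lowerDensity_pos _ {k : ℕ | ‖(T ^ k) (φ (m + 1)) - u m‖ < (1 / 2 : ℝ) ^ m}
    {k | ∃ l, m + 1 ≤ l ∧ k ∈ B l} (L m (st m)) ?_ ?_ ?_
  · intro n
    rw [hφ]
    exact hL m (st m) n
  · intro N
    refine (cnt_iUnion B q (m + 1) (fun l => (hq0 l).le) hqh hB N).trans ?_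
    gcongr
    have := hqL m
    have e : (1 : ℝ) / (4 * ((L m (st m) : ℝ) + 1)) = 2 * (1 / (8 * ((L m (st m) : ℝ) + 1))) := by
      field_simp; norm_num
    rw [e]; linarith
  · intro k hk hkB
    have hk' : ‖(T ^ k) (φ (m + 1)) - u m‖ < (1 / 2 : ℝ) ^ m := hk
    have hsm : ∀ l, m + 1 ≤ l → ‖(T ^ k) (ψ l)‖ ≤ (1 / 2 : ℝ) ^ l := by
      intro l hl
      by_contra hcon
      exact hkB ⟨l, hl, not_le.1 hcon⟩
    have htail : ∀ l : ℕ, ‖(T ^ k) (φ (m + 1 + l)) - (T ^ k) (φ (m + 1))‖ ≤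
        (1 / 2 : ℝ) ^ m - (1 / 2) ^ (m + l) := by
      intro l
      induction l with
      | zero => simp
      | succ l ih =>
        rw [← add_assoc, hφ, map_add]
        have h1 := hsm (m + 1 + l) (by omega)
        have h2 := norm_add_le ((T ^ k) (φ (m + 1 + l)) - (T ^ k) (φ (m + 1))) ((T ^ k) (ψ (m + 1 + l)))
        have e : (T ^ k) (φ (m + 1 + l)) + (T ^ k) (ψ (m + 1 + l)) - (T ^ k) (φ (m + 1)) =
          (T ^ k) (φ (m + 1 + l)) - (T ^ k) (φ (m + 1)) + (T ^ k) (ψ (m + 1 + l)) := by abel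
        rw [e]
        have e1 : ((1 : ℝ) / 2) ^ (m + 1 + l) = (1 / 2) ^ (m + l) / 2 := by ring
        have e2 : ((1 : ℝ) / 2) ^ (m + (l + 1)) = (1 / 2) ^ (m + l) / 2 := by ring
        rw [e1] at h1; rw [e2]; linarith
    have hlim : ‖(T ^ k) v - (T ^ k) (φ (m + 1))‖ ≤ (1 / 2 : ℝ) ^ m := by
      have h1 : Tendsto (fun l : ℕ => ‖(T ^ k) (φ (m + 1 + l)) - (T ^ k) (φ (m + 1))‖) atTop
          (𝓝 ‖(T ^ k) v - (T ^ k) (φ (m + 1))‖) := by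
        have h2 : Tendsto (fun l : ℕ => φ (m + 1 + l)) atTop (𝓝 v) := by
          have := (tendsto_add_atTop_iff_nat (m + 1)).2 hv
          exact this.congr fun l => by rw [add_comm]
        exact ((((T ^ k).continuous.tendsto _).comp h2).sub_const _).norm
      refine le_of_tendsto h1 (Eventually.of_forall fun l => (htail l).trans ?_)
      have : (0 : ℝ) ≤ (1 / 2) ^ (m + l) := by positivity
      linarith
    apply hrU
    rw [Metric.mem_ball]
    have t1 := dist_triangle4 ((T ^ k) v) ((T ^ k) (φ (m + 1))) (u m) (d i)
    have t2 := dist_triangle ((T ^ k) v) (d i) y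
    rw [dist_comm] at hi
    rw [dist_eq_norm _ ((T ^ k) (φ (m + 1))), dist_eq_norm _ (u m), dist_eq_norm (u m)] at t1
    linarith
end
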